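/- Asymptotically almost surely, the permanent of the random symmetric Rademacher matrix M_n satisfies |per M_n| = n^{n/2+o(n)}; precisely, for every ε > 0, the probability that n^{n/2-εn} ≤ |per M_n| ≤ n^{n/2+εn} tends to 1 as n → ∞. -/

import Mathlib

/-!
The upper bound comes from the second moment. By induction on the size, the permanent of the
submatrix with rows `I` and columns `J` has second moment at most `(2 * n) ^ #I`, up to a factor `n`
if `I = J` (`moment`), so that Markov's inequality gives `|per M_n| ≤ n ^ (n / 2 + ε * n)`.

For the lower bound, the entries are exposed in successive steps, and each step extends a submatrix
with a large permanent.

* Rectangular growth (`stage`, `growth`). Given a large permanent with rows `I` and columns `J`, a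
  batch `D` of new columns is exposed, and rows not used so far are added one by one. Each added row
  multiplies the sum over `K ⊆ D` of the squares of the permanents with columns `J ∪ K` by a factor
  `γ` with probability bounded below, by a Paley-Zygmund argument, where `2 * γ` is the number of
  columns of `D` left over at the end. As `γ` is a constant proportion of `n`, this gives, for any
  `ε`, a submatrix with permanent at least `n ^ (n / 2 - ε * n)` that misses at most `ε * n` rows.
* Few missing indices (`few_missing`). Second differences in the entries of a new row (`second_diff`)
  show that a suitable choice of two of its entries preserves the size of the permanent. They are
  used to make the row and column sets equal (`cancel`), and then to absorb missing indices
  (`shrink`, `clear`), up to a bounded number `2 * r` of missing indices in a prescribed bounded set.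
* All indices (`boost`, `boost_iter`). As the prescribed set can be chosen at random, a positive
  proportion of the principal submatrices that miss `2 * r` indices of a large set have a large
  permanent. When a new index `w` is added, the permanent is a quadratic form in the entries of row
  `w`, whose coefficients are permanents that miss one row and another column. Those in turn are
  linear forms with coefficients that are minors with one more row and column deleted. By the
  Littlewood-Offord inequality (`lo_form`) and its decoupled version for quadratic forms (`quad`), a
  positive density of large principal minors with `m + 3` missing indices becomes, with the new
  index, a positive density of those with `m` missing indices. After boundedly many steps no index is
  missing, and the size has changed by a constant factor only.
-/

open Finset

/-- The real number (`1` or `-1`) associated to a Boolean: a Rademacher value. -/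
noncomputable def rad (b : Bool) : ℝ := if b then 1 else -1

/-- The permanent of a square real matrix. -/
noncomputable def perm {n : ℕ} (M : Matrix (Fin n) (Fin n) ℝ) : ℝ :=
  ∑ σ : Equiv.Perm (Fin n), ∏ i, M i (σ i)

/-- The symmetric `n × n` sign matrix determined by Boolean data `ω` (the entries on and
above the diagonal are `rad (ω i j)` for `i ≤ j`; below-diagonal entries are given by
symmetry). As `ω` ranges uniformly over all Boolean data, this is exactly the random
symmetric matrix `M_n` with i.i.d. Rademacher entries on and above the diagonal. -/
noncomputable def symMat (n : ℕ) (ω : Fin n → Fin n → Bool) : Matrix (Fin n) (Fin n) ℝ :=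
  fun i j => if i ≤ j then rad (ω i j) else rad (ω j i)

open Classical in
/-- The probability of the event `P` for the random symmetric Rademacher matrix `M_n`. -/
noncomputable def prob (n : ℕ) (P : Matrix (Fin n) (Fin n) ℝ → Prop) : ℝ :=
  ((univ.filter fun ω : Fin n → Fin n → Bool => P (symMat n ω)).card : ℝ) / 2 ^ (n * n)

/-! ### Averages over finite types -/

/-- The average of a real function over a finite type, i.e. its expectation under the uniform
distribution. -/
noncomputable def av {α : Type*} [Fintype α] (f : α → ℝ) : ℝ :=
  (∑ a, f a) / (Fintype.card α : ℝ)

open Classical in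
/-- The indicator of a proposition, so that `av fun a => ind (p a)` is the probability of `p`. -/
noncomputable def ind (p : Prop) : ℝ := if p then 1 else 0

lemma ind_nonneg (p : Prop) : 0 ≤ ind p := by unfold ind; split_ifs <;> norm_num
lemma ind_le_one (p : Prop) : ind p ≤ 1 := by unfold ind; split_ifs <;> norm_num
lemma ind_true {p : Prop} (h : p) : ind p = 1 := by simp [ind, h]
lemma ind_false {p : Prop} (h : ¬ p) : ind p = 0 := by simp [ind, h]
lemma ind_mono {p q : Prop} (h : p → q) : ind p ≤ ind q := by
  by_cases hp : p
  · rw [ind_true hp, ind_true (h hp)]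
  · rw [ind_false hp]; exact ind_nonneg q
lemma ind_not (p : Prop) : ind (¬ p) = 1 - ind p := by
  by_cases hp : p <;> simp [ind, hp]
lemma ind_or_le (p q : Prop) : ind (p ∨ q) ≤ ind p + ind q := by
  by_cases hp : p <;> by_cases hq : q <;> simp [ind, hp, hq]
lemma ind_and (p q : Prop) : ind (p ∧ q) = ind p * ind q := by
  by_cases hp : p <;> by_cases hq : q <;> simp [ind, hp, hq]

section Average

variable {α β : Type*} [Fintype α] [Fintype β]

lemma av_mono {f g : α → ℝ} (h : ∀ a, f a ≤ g a) : av f ≤ av g := by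
  unfold av
  gcongr
  exact h _

lemma av_nonneg {f : α → ℝ} (h : ∀ a, 0 ≤ f a) : 0 ≤ av f := by
  unfold av
  exact div_nonneg (Finset.sum_nonneg fun a _ => h a) (by positivity)

lemma av_add (f g : α → ℝ) : av (fun a => f a + g a) = av f + av g := by
  unfold av; rw [Finset.sum_add_distrib, add_div]

lemma av_sub (f g : α → ℝ) : av (fun a => f a - g a) = av f - av g := by
  unfold av; rw [Finset.sum_sub_distrib, sub_div]

lemma av_mul_left (c : ℝ) (f : α → ℝ) : av (fun a => c * f a) = c * av f := by
  unfold av; rw [← Finset.mul_sum, mul_div_assoc]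

lemma av_mul_right (c : ℝ) (f : α → ℝ) : av (fun a => f a * c) = av f * c := by
  unfold av; rw [← Finset.sum_mul, div_mul_eq_mul_div]

lemma av_const [Nonempty α] (c : ℝ) : av (fun _ : α => c) = c := by
  unfold av
  rw [Finset.sum_const, Finset.card_univ, nsmul_eq_mul]
  field_simp

lemma av_le_of_le [Nonempty α] {f : α → ℝ} {c : ℝ} (h : ∀ a, f a ≤ c) : av f ≤ c :=
  (av_mono h).trans_eq (av_const c)

lemma le_av_of_le [Nonempty α] {f : α → ℝ} {c : ℝ} (h : ∀ a, c ≤ f a) : c ≤ av f :=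
  (av_const c).symm.trans_le (av_mono h)

lemma av_sum {γ : Type*} (s : Finset γ) (f : γ → α → ℝ) :
    av (fun a => ∑ c ∈ s, f c a) = ∑ c ∈ s, av (f c) := by
  unfold av; rw [Finset.sum_comm, Finset.sum_div]

lemma av_comm (f : α → β → ℝ) :
    av (fun a => av (fun b => f a b)) = av (fun b => av (fun a => f a b)) := by
  unfold av
  simp_rw [← Finset.sum_div]
  rw [Finset.sum_comm, div_right_comm]

lemma av_equiv (e : α ≃ β) (f : β → ℝ) : av (fun a => f (e a)) = av f := by
  unfold av
  rw [Equiv.sum_comp e f, Fintype.card_congr e]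

lemma av_prod (f : α × β → ℝ) : av f = av (fun a => av (fun b => f (a, b))) := by
  unfold av
  simp_rw [← Finset.sum_div]
  rw [Fintype.sum_prod_type, Fintype.card_prod, Nat.cast_mul, div_div, mul_comm]

lemma av_ind_le_one [Nonempty α] (p : α → Prop) : av (fun a => ind (p a)) ≤ 1 :=
  av_le_of_le fun _ => ind_le_one _

lemma av_not [Nonempty α] (p : α → Prop) :
    av (fun a => ind (¬ p a)) = 1 - av (fun a => ind (p a)) := by
  simp_rw [ind_not]
  rw [av_sub, av_const]

/-- Markov's inequality. -/
lemma av_markov {f : α → ℝ} (hf : ∀ a, 0 ≤ f a) {c : ℝ} (hc : 0 < c) :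
    av (fun a => ind (c ≤ f a)) ≤ av f / c := by
  rw [le_div_iff₀ hc, ← av_mul_right]
  refine av_mono fun a => ?_
  by_cases h : c ≤ f a
  · rw [ind_true h, one_mul]; exact h
  · rw [ind_false h, zero_mul]; exact hf a

/-- The Cauchy-Schwarz inequality for averages, against the constant function `1`. -/
lemma av_sq_le (f : α → ℝ) : av f ^ 2 ≤ av (fun a => f a ^ 2) := by
  rcases isEmpty_or_nonempty α with h | h
  · simp [av]
  · have h0 : 0 ≤ av (fun a => (f a - av f) ^ 2) := av_nonneg fun a => sq_nonneg _
    have h1 : av (fun a => (f a - av f) ^ 2) = av (fun a => f a ^ 2) - av f ^ 2 := by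
      have : ∀ a, (f a - av f) ^ 2 = (f a ^ 2 - (2 * av f) * f a) + av f ^ 2 := by
        intro a; ring
      simp_rw [this]
      rw [av_add, av_sub, av_mul_left, av_const]; ring
    linarith

end Average

/-! ### Resampling some of the coordinates -/

section Resampling

variable {E β : Type*}

open Classical in
/-- Keep the coordinates of `ω` in `S` and take all the others from `ω'`. Averaging over `ω'` is
conditioning on the coordinates in `S`. -/
noncomputable def mix (S : Set E) (ω ω' : E → β) : E → β := fun e => if e ∈ S then ω e else ω' e

lemma mix_of_mem {S : Set E} {e : E} (h : e ∈ S) (ω ω' : E → β) : mix S ω ω' e = ω e := by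
  simp [mix, h]

lemma mix_of_notMem {S : Set E} {e : E} (h : e ∉ S) (ω ω' : E → β) : mix S ω ω' e = ω' e := by
  simp [mix, h]

lemma mix_mix {S S' : Set E} (h : S ⊆ S') (ω ω' ω'' : E → β) :
    mix S' (mix S ω ω') ω'' = mix S ω (mix S' ω' ω'') := by
  ext e
  by_cases h1 : e ∈ S
  · simp [mix, h1, h h1]
  · by_cases h2 : e ∈ S' <;> simp [mix, h1, h2]

variable [Fintype E] [DecidableEq E] [Fintype β]

/-- Resampling the coordinates outside `S` preserves the uniform distribution. -/
lemma av_mix [Nonempty β] (S : Set E) (f : (E → β) → ℝ) :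
    av (fun ω => av (fun ω' => f (mix S ω ω'))) = av f := by
  let e : ((E → β) × (E → β)) ≃ ((E → β) × (E → β)) :=
    { toFun := fun p => (mix S p.1 p.2, mix S p.2 p.1)
      invFun := fun p => (mix S p.1 p.2, mix S p.2 p.1)
      left_inv := by
        rintro ⟨a, b⟩
        ext x <;> by_cases hx : x ∈ S <;> simp [mix, hx]
      right_inv := by
        rintro ⟨a, b⟩
        ext x <;> by_cases hx : x ∈ S <;> simp [mix, hx] }
  have h := av_equiv e (fun p => f p.1)
  rw [av_prod, av_prod] at h
  simp only [e, Equiv.coe_fn_mk] at h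
  rw [h]
  simp_rw [av_const]

/-- The tower property of conditional expectations. -/
lemma av_tower [Nonempty β] {S S' : Set E} (h : S ⊆ S') (ω : E → β) (f : (E → β) → ℝ) :
    av (fun ω' => av (fun ω'' => f (mix S' (mix S ω ω') ω''))) = av (fun ω' => f (mix S ω ω')) := by
  simp_rw [mix_mix h]
  exact av_mix S' (fun η => f (mix S ω η))

/-- If `G` fails with probability at most `p` given the coordinates in `S`, and `H` fails with
probability at most `q` given the larger set of coordinates `S'` whenever `G` holds, then `H` fails
with probability at most `p + q` given the coordinates in `S`. -/
lemma av_chain [Nonempty β] {S S' : Set E} (h : S ⊆ S') (ω : E → β) {G H : (E → β) → Prop}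
    {p q : ℝ} (hq : 0 ≤ q) (hG : av (fun ω' => ind (¬ G (mix S ω ω'))) ≤ p)
    (hH : ∀ η, (∀ e ∈ S, η e = ω e) → G η → av (fun ω'' => ind (¬ H (mix S' η ω''))) ≤ q) :
    av (fun ω' => ind (¬ H (mix S ω ω'))) ≤ p + q := by
  rw [← av_tower h ω (fun η => ind (¬ H η))]
  calc _ ≤ av (fun ω' => ind (¬ G (mix S ω ω')) + q) := by
        refine av_mono fun ω' => ?_
        by_cases hg : G (mix S ω ω')
        · have := hH _ (fun e he => mix_of_mem he ω ω') hg
          linarith [ind_nonneg (¬ G (mix S ω ω'))]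
        · rw [ind_true hg]
          have := av_ind_le_one (fun ω'' => ¬ H (mix S' (mix S ω ω') ω''))
          linarith
    _ ≤ p + q := by rw [av_add, av_const]; linarith

lemma av_restrict [Nonempty β] {κ : Type*} [Fintype κ] [DecidableEq κ] (e : κ → E)
    (he : Function.Injective e) (h : (κ → β) → ℝ) : av (fun φ : E → β => h (φ ∘ e)) = av h := by
  classical
  let e1 : κ ≃ {x // x ∈ Set.range e} := Equiv.ofInjective e he
  let F : (E → β) ≃ (κ → β) × ({x // ¬ x ∈ Set.range e} → β) :=
    (Equiv.piEquivPiSubtypeProd (fun x => x ∈ Set.range e) (fun _ => β)).trans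
      (Equiv.prodCongr (Equiv.arrowCongr e1.symm (Equiv.refl β)) (Equiv.refl _))
  have h1 := av_equiv F (fun p => h p.1)
  rw [av_prod] at h1
  simp_rw [av_const] at h1
  rw [← h1]
  rfl

lemma av_extend [Nonempty β] {κ : Type*} [Fintype κ] [DecidableEq κ] (e : κ → E)
    (he : Function.Injective e) (g : (E → β) → ℝ) :
    av g = av (fun ω => av (fun x : κ → β => g (Function.extend e x ω))) := by
  rw [← av_mix (Set.range e)ᶜ g]
  congr 1
  ext ω
  rw [← av_restrict e he]
  congr 1
  ext ω'
  congr 1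
  ext a
  by_cases ha : a ∈ Set.range e
  · obtain ⟨b, rfl⟩ := ha
    rw [he.extend_apply, mix_of_notMem (by simp)]
    rfl
  · rw [mix_of_mem ha, Function.extend_apply' _ _ _ (by simpa using ha)]

end Resampling

/-! ### Random signs -/

lemma rad_true : rad true = 1 := by simp [rad]
lemma rad_false : rad false = -1 := by simp [rad]
lemma rad_sq (b : Bool) : rad b * rad b = 1 := by cases b <;> simp [rad]
lemma abs_rad (b : Bool) : |rad b| = 1 := by cases b <;> simp [rad]

section Signs

variable {E : Type*} [Fintype E] [DecidableEq E]

/-- Averaging over one coordinate first. -/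
lemma av_update (e : E) (f : (E → Bool) → ℝ) :
    av f = av (fun ω => (f (Function.update ω e true) + f (Function.update ω e false)) / 2) := by
  have hinv : Function.Involutive (fun ω : E → Bool => Function.update ω e (!(ω e))) := by
    intro ω; simp
  have h := av_equiv (Function.Involutive.toPerm _ hinv) f
  have h2 : av f = av (fun ω => (f ω + f (Function.update ω e (!(ω e)))) / 2) := by
    simp_rw [div_eq_mul_inv]
    rw [av_mul_right, av_add]
    change av f = (av f + av (fun a => f (Function.Involutive.toPerm _ hinv a))) * 2⁻¹
    rw [h]; ring
  rw [h2]
  congr 1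
  ext ω
  cases hb : ω e
  · have : Function.update ω e false = ω := by rw [← hb]; simp
    rw [this]; simp; ring
  · have : Function.update ω e true = ω := by rw [← hb]; simp
    rw [this]; simp

/-- If two given coordinates can always be set so that `G` holds, then `G` has probability at
least `1 / 4`. -/
lemma quarter {G : (E → Bool) → Prop} (e₁ e₂ : E)
    (h : ∀ ω, ∃ s t, G (Function.update (Function.update ω e₁ s) e₂ t)) :
    1 / 4 ≤ av (fun ω => ind (G ω)) := by
  rw [av_update e₂, av_update e₁]
  refine le_av_of_le fun ω => ?_
  obtain ⟨s, t, hst⟩ := h ω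
  have h1 := ind_nonneg (G (Function.update (Function.update ω e₁ true) e₂ true))
  have h2 := ind_nonneg (G (Function.update (Function.update ω e₁ true) e₂ false))
  have h3 := ind_nonneg (G (Function.update (Function.update ω e₁ false) e₂ true))
  have h4 := ind_nonneg (G (Function.update (Function.update ω e₁ false) e₂ false))
  have h5 := ind_true hst
  cases s <;> cases t <;> linarith

end Signs

/-! ### Permanents of submatrices -/

section Permanent

variable {ι : Type*} [Fintype ι] [DecidableEq ι]

open Classical in
/-- The bijections from `I` to `J`, encoded as self-maps of `ι` fixing every point off `I`. -/
noncomputable def bij (I J : Finset ι) : Finset (ι → ι) :=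
  univ.filter fun g => Set.BijOn g (I : Set ι) (J : Set ι) ∧ ∀ i, i ∉ I → g i = i

/-- The permanent of the submatrix of `M` with rows `I` and columns `J` (zero unless `I` and `J`
have the same size). -/
noncomputable def pm (M : ι → ι → ℝ) (I J : Finset ι) : ℝ :=
  ∑ g ∈ bij I J, ∏ i ∈ I, M i (g i)

lemma mem_bij {I J : Finset ι} {g : ι → ι} :
    g ∈ bij I J ↔ Set.BijOn g (I : Set ι) (J : Set ι) ∧ ∀ i, i ∉ I → g i = i := by
  simp [bij]

lemma pm_empty (M : ι → ι → ℝ) : pm M ∅ ∅ = 1 := by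
  have : bij (∅ : Finset ι) ∅ = {id} := by
    ext g
    rw [mem_bij]
    simp [Set.bijOn_empty_iff_left, funext_iff]
  simp [pm, this]

/-- Laplace expansion along the row `w`. -/
lemma pm_row (M : ι → ι → ℝ) {w : ι} {I : Finset ι} (hw : w ∉ I) (J : Finset ι) :
    pm M (insert w I) J = ∑ j ∈ J, M w j * pm M I (J.erase j) := by
  unfold pm
  simp_rw [Finset.mul_sum]
  rw [Finset.sum_sigma']
  have hne : ∀ i ∈ I, i ≠ w := fun i hi h => hw (h ▸ hi)
  refine Finset.sum_bij' (fun g _ => ⟨g w, Function.update g w w⟩)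
    (fun p _ => Function.update p.2 w p.1) ?_ ?_ ?_ ?_ ?_
  · intro g hg
    rw [mem_bij] at hg
    obtain ⟨⟨h1, h2, h3⟩, h4⟩ := hg
    rw [Finset.mem_sigma, mem_bij]
    refine ⟨by simpa using h1 (by simp : w ∈ ((insert w I : Finset ι) : Set ι)), ⟨?_, ?_, ?_⟩, ?_⟩
    · intro i hi
      have hi' : i ∈ I := by simpa using hi
      have h5 : g i ∈ (J : Set ι) := h1 (by simp [hi'])
      have h6 : g i ≠ g w := fun h => hne i hi' (h2 (by simp [hi']) (by simp) h)
      simpa [Function.update_of_ne (hne i hi'), h6] using h5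
    · intro i hi k hk hik
      have hi' : i ∈ I := by simpa using hi
      have hk' : k ∈ I := by simpa using hk
      simp only [Function.update_of_ne (hne i hi'), Function.update_of_ne (hne k hk')] at hik
      exact h2 (by simp [hi']) (by simp [hk']) hik
    · intro j hj
      have hj' : j ≠ g w ∧ j ∈ J := by simpa [and_comm] using hj
      obtain ⟨i, hi, hij⟩ := h3 (by simpa using hj'.2 : j ∈ (J : Set ι))
      have hi' : i = w ∨ i ∈ I := by simpa using hi
      rcases hi' with rfl | hi'
      · exact absurd hij.symm hj'.1
      · exact ⟨i, by simpa using hi', by simpa [Function.update_of_ne (hne i hi')] using hij⟩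
    · intro i hi
      by_cases h : i = w
      · subst h; simp
      · simp only [Function.update_of_ne h]; exact h4 i (by simp [h, hi])
  · rintro ⟨j, g⟩ hg
    rw [Finset.mem_sigma, mem_bij] at hg
    obtain ⟨hj, ⟨h1, h2, h3⟩, h4⟩ := hg
    simp only at hj h1 h2 h3 h4
    rw [mem_bij]
    refine ⟨⟨?_, ?_, ?_⟩, ?_⟩
    · intro i hi
      have hi' : i = w ∨ i ∈ I := by simpa using hi
      rcases hi' with rfl | hi'
      · simpa using hj
      · have : g i ∈ ((J.erase j : Finset ι) : Set ι) := h1 (by simpa using hi')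
        simp only [Function.update_of_ne (hne i hi')]
        exact Finset.mem_of_mem_erase (by exact_mod_cast this)
    · intro i hi k hk hik
      have hi' : i = w ∨ i ∈ I := by simpa using hi
      have hk' : k = w ∨ k ∈ I := by simpa using hk
      have key : ∀ x ∈ I, g x ≠ j := by
        intro x hx
        have : g x ∈ ((J.erase j : Finset ι) : Set ι) := h1 (by simpa using hx)
        exact Finset.ne_of_mem_erase (by exact_mod_cast this)
      rcases hi' with rfl | hi' <;> rcases hk' with rfl | hk'
      · rfl
      · simp only [Function.update_self, Function.update_of_ne (hne k hk')] at hik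
        exact absurd hik.symm (key k hk')
      · simp only [Function.update_self, Function.update_of_ne (hne i hi')] at hik
        exact absurd hik (key i hi')
      · simp only [Function.update_of_ne (hne i hi'), Function.update_of_ne (hne k hk')] at hik
        exact h2 (by simpa using hi') (by simpa using hk') hik
    · intro k hk
      by_cases h : k = j
      · exact ⟨w, by simp, by simp [h]⟩
      · obtain ⟨i, hi, hik⟩ := h3 (by simpa [h] using hk : k ∈ ((J.erase j : Finset ι) : Set ι))
        have hi' : i ∈ I := by simpa using hi
        exact ⟨i, by simp [hi'], by simpa [Function.update_of_ne (hne i hi')] using hik⟩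
    · intro i hi
      have hi' : i ≠ w ∧ i ∉ I := by simpa using hi
      simp only [Function.update_of_ne hi'.1]; exact h4 i hi'.2
  · intro g hg
    simp
  · rintro ⟨j, g⟩ hg
    rw [Finset.mem_sigma, mem_bij] at hg
    have : g w = w := hg.2.2 w hw
    have h2 : Function.update g w w = g := by
      conv_rhs => rw [← Function.update_eq_self w g, this]
    simp [h2]
  · intro g hg
    rw [Finset.prod_insert hw]
    congr 1
    refine Finset.prod_congr rfl fun i hi => ?_
    simp only [Function.update_of_ne (hne i hi)]

lemma pm_card_ne (M : ι → ι → ℝ) {I J : Finset ι} (h : I.card ≠ J.card) : pm M I J = 0 := by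
  have : bij I J = ∅ := by
    rw [Finset.eq_empty_iff_forall_notMem]
    intro g hg
    rw [mem_bij] at hg
    apply h
    have h1 := hg.1.image_eq
    rw [← Finset.card_image_of_injOn hg.1.injOn]
    congr 1
    exact_mod_cast h1
  simp [pm, this]

lemma pm_congr {M N : ι → ι → ℝ} {I J : Finset ι} (h : ∀ i ∈ I, ∀ j ∈ J, M i j = N i j) :
    pm M I J = pm N I J := by
  unfold pm
  refine Finset.sum_congr rfl fun g hg => Finset.prod_congr rfl fun i hi => h i hi _ ?_
  rw [mem_bij] at hg
  exact_mod_cast hg.1.mapsTo (by exact_mod_cast hi)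

/-- Laplace expansion along the column `c`. -/
lemma pm_col (M : ι → ι → ℝ) {c : ι} (I : Finset ι) : ∀ {J : Finset ι}, c ∈ J →
    pm M I J = ∑ i ∈ I, M i c * pm M (I.erase i) (J.erase c) := by
  induction I using Finset.induction_on with
  | empty =>
    intro J hc
    rw [Finset.sum_empty]
    refine pm_card_ne M ?_
    rw [Finset.card_empty]
    exact (Finset.card_pos.2 ⟨c, hc⟩).ne
  | insert w I hw ih =>
    intro J hc
    rw [pm_row M hw, Finset.sum_insert hw, Finset.erase_insert hw, ← Finset.add_sum_erase _ _ hc]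
    congr 1
    have h1 : ∀ i ∈ I, M i c * pm M ((insert w I).erase i) (J.erase c) =
        ∑ j ∈ J.erase c, M w j * (M i c * pm M (I.erase i) ((J.erase j).erase c)) := by
      intro i hi
      have hiw : w ≠ i := fun h => hw (h ▸ hi)
      rw [Finset.erase_insert_of_ne hiw, pm_row M (fun h => hw (Finset.mem_of_mem_erase h)),
        Finset.mul_sum]
      refine Finset.sum_congr rfl fun j _ => ?_
      rw [Finset.erase_right_comm]; ring
    rw [Finset.sum_congr rfl h1, Finset.sum_comm]
    refine Finset.sum_congr rfl fun j hj => ?_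
    have hj' := Finset.mem_erase.1 hj
    rw [ih (Finset.mem_erase.2 ⟨hj'.1.symm, hc⟩), Finset.mul_sum]

lemma pm_symm {M : ι → ι → ℝ} (hM : ∀ i j, M i j = M j i) (I : Finset ι) :
    ∀ J, pm M I J = pm M J I := by
  induction I using Finset.induction_on with
  | empty =>
    intro J
    by_cases hJ : J = ∅
    · rw [hJ]
    · have := Finset.card_pos.2 (Finset.nonempty_iff_ne_empty.2 hJ)
      rw [pm_card_ne M (by rw [Finset.card_empty]; omega),
        pm_card_ne M (by rw [Finset.card_empty]; omega)]
  | insert w I hw ih =>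
    intro J
    rw [pm_row M hw, pm_col M J (Finset.mem_insert_self w I)]
    refine Finset.sum_congr rfl fun j _ => ?_
    rw [Finset.erase_insert hw, ih, hM]

/-- Simultaneous expansion along a row and a column with the same index. -/
lemma pm_double (M : ι → ι → ℝ) {w : ι} {I J : Finset ι} (hI : w ∉ I) (hJ : w ∉ J) :
    pm M (insert w I) (insert w J) = M w w * pm M I J +
      ∑ q ∈ J, ∑ p ∈ I, M w q * M p w * pm M (I.erase p) (J.erase q) := by
  rw [pm_row M hI, Finset.sum_insert hJ, Finset.erase_insert hJ]
  congr 1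
  refine Finset.sum_congr rfl fun q hq => ?_
  have hqw : w ≠ q := fun h => hJ (h ▸ hq)
  rw [Finset.erase_insert_of_ne hqw, pm_col M I (Finset.mem_insert_self w _), Finset.mul_sum,
    Finset.erase_insert (fun h => hJ (Finset.mem_of_mem_erase h))]
  refine Finset.sum_congr rfl fun p _ => ?_
  ring

end Permanent

lemma perm_eq_pm {n : ℕ} (M : Matrix (Fin n) (Fin n) ℝ) : perm M = pm M univ univ := by
  unfold perm pm
  refine Finset.sum_bij (fun σ _ => (σ : Fin n → Fin n)) ?_ ?_ ?_ ?_
  · intro σ _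
    rw [mem_bij]
    simp [Set.bijOn_univ]
  · intro σ _ τ _ h
    exact DFunLike.coe_injective h
  · intro g hg
    rw [mem_bij] at hg
    have : Function.Bijective g := by simpa [Set.bijOn_univ] using hg.1
    exact ⟨Equiv.ofBijective g this, Finset.mem_univ _, rfl⟩
  · intro σ _; rfl

/-! ### The random symmetric sign matrix -/

section Matrix

variable {ι : Type*}

/-- The entries of the symmetric sign matrix given by a Boolean for every unordered pair. -/
noncomputable def ent (ω : Sym2 ι → Bool) (i j : ι) : ℝ := rad (ω s(i, j))

/-- The pairs with both members in `T`. Conditioning on the coordinates in `ins T` is conditioning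
on the principal submatrix with index set `T`. -/
def ins (T : Finset ι) : Set (Sym2 ι) := {e | ∀ x ∈ e, x ∈ T}

lemma mem_ins {T : Finset ι} {i j : ι} : s(i, j) ∈ ins T ↔ i ∈ T ∧ j ∈ T := by
  simp [ins]

lemma ins_mono {T T' : Finset ι} (h : T ⊆ T') : ins T ⊆ ins T' := fun _ he x hx => h (he x hx)

lemma ent_symm (ω : Sym2 ι → Bool) (i j : ι) : ent ω i j = ent ω j i := by
  unfold ent; rw [Sym2.eq_swap]

variable [Fintype ι] [DecidableEq ι]

/-- The permanent of the submatrix with rows `I` and columns `J` of the sign matrix of `ω`. -/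
noncomputable def per (ω : Sym2 ι → Bool) (I J : Finset ι) : ℝ := pm (ent ω) I J

lemma per_symm (ω : Sym2 ι → Bool) (I J : Finset ι) : per ω I J = per ω J I :=
  pm_symm (ent_symm ω) I J

lemma per_congr {ω ω' : Sym2 ι → Bool} {I J : Finset ι}
    (h : ∀ i ∈ I, ∀ j ∈ J, ω s(i, j) = ω' s(i, j)) : per ω I J = per ω' I J :=
  pm_congr fun i hi j hj => by unfold ent; rw [h i hi j hj]

lemma per_congr_ins {ω ω' : Sym2 ι → Bool} {T I J : Finset ι} (h : ∀ e ∈ ins T, ω e = ω' e)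
    (hI : I ⊆ T) (hJ : J ⊆ T) : per ω I J = per ω' I J :=
  per_congr fun _ hi _ hj => h _ (mem_ins.2 ⟨hI hi, hJ hj⟩)

lemma per_update {ω : Sym2 ι → Bool} {I J : Finset ι} {a b : ι} {s : Bool}
    (h : ∀ i ∈ I, ∀ j ∈ J, s(i, j) ≠ s(a, b)) :
    per (Function.update ω s(a, b) s) I J = per ω I J :=
  per_congr fun i hi j hj => Function.update_of_ne (h i hi j hj) _ _

lemma mix_update {E β : Type*} [DecidableEq E] {S : Set E} {e : E} (he : e ∉ S) (ω ω' : E → β)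
    (b : β) : mix S ω (Function.update ω' e b) = Function.update (mix S ω ω') e b := by
  ext x
  by_cases hx : x = e
  · subst hx; simp [mix, he]
  · by_cases hS : x ∈ S <;> simp [mix, hx, hS]

/-! ### Second differences -/

/-- Flipping the two entries `(w, i)` and `(w, j)`, the second difference of the permanent of the
submatrix with rows `I ∪ {w}` and columns `J ∪ {w}` is four times the quantity on the left, so some
setting of these two entries makes the permanent at least that large. -/
lemma second_diff (ω : Sym2 ι → Bool) {w i j : ι} {I J : Finset ι} (hI : w ∉ I) (hJ : w ∉ J)
    (hij : i ≠ j) (hi : i ≠ w) (hj : j ≠ w) : ∃ s t,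
    |(if i ∈ I ∧ j ∈ J then per ω (I.erase i) (J.erase j) else 0) +
      (if j ∈ I ∧ i ∈ J then per ω (I.erase j) (J.erase i) else 0)| ≤
    |per (Function.update (Function.update ω s(w, i) s) s(w, j) t) (insert w I) (insert w J)| := by
  set F : Bool → Bool → ℝ := fun s t =>
    per (Function.update (Function.update ω s(w, i) s) s(w, j) t) (insert w I) (insert w J) with hF
  set x : Bool → Bool → ι → ℝ := fun s t k =>
    if k = j then rad t else if k = i then rad s else rad (ω s(w, k)) with hx
  have hval : ∀ s t, F s t = ent ω w w * per ω I J +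
      ∑ q ∈ J, ∑ p ∈ I, x s t q * x s t p * per ω (I.erase p) (J.erase q) := by
    intro s t
    have hent : ∀ k, k ≠ w →
        ent (Function.update (Function.update ω s(w, i) s) s(w, j) t) w k = x s t k := by
      intro k hk
      simp only [ent, hx]
      by_cases h1 : k = j
      · subst h1; simp
      · rw [Function.update_of_ne (by simp [h1, hk])]
        by_cases h2 : k = i
        · subst h2; simp [h1]
        · rw [Function.update_of_ne (by simp [h2, hk])]
          simp [h1, h2]
    have hper : ∀ I' ⊆ I, ∀ J' ⊆ J,
        pm (ent (Function.update (Function.update ω s(w, i) s) s(w, j) t)) I' J' = per ω I' J' := by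
      intro I' hI' J' hJ'
      have : ∀ a, ∀ p ∈ I', ∀ q ∈ J', s(p, q) ≠ s(w, a) := by
        intro a p hp q hq h
        rcases Sym2.eq_iff.1 h with h | h
        · exact hI (h.1 ▸ hI' hp)
        · exact hJ (h.2 ▸ hJ' hq)
      change per _ I' J' = _
      rw [per_update (this j), per_update (this i)]
    simp only [hF]
    unfold per
    rw [pm_double _ hI hJ, hper I subset_rfl J subset_rfl]
    congr 1
    · congr 1
      unfold ent
      rw [Function.update_of_ne (by simp [hj.symm]), Function.update_of_ne (by simp [hi.symm])]
    · refine Finset.sum_congr rfl fun q hq => Finset.sum_congr rfl fun p hp => ?_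
      rw [hper _ (Finset.erase_subset _ _) _ (Finset.erase_subset _ _), hent q (fun h => hJ (h ▸ hq)),
        ent_symm, hent p (fun h => hI (h ▸ hp))]
      rfl
  have hterm : ∀ q p, (x true true q * x true true p - x true false q * x true false p
      - x false true q * x false true p + x false false q * x false false p) =
      (if q = j then (if p = i then 4 else 0) else 0) +
        (if q = i then (if p = j then 4 else 0) else 0) := by
    intro q p
    simp only [hx, rad_true, rad_false]
    by_cases h1 : q = j <;> by_cases h2 : p = j <;> by_cases h3 : q = i <;> by_cases h4 : p = i <;>
      first
      | (exfalso; apply hij; rw [← h3, h1])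
      | (exfalso; apply hij; rw [← h4, h2])
      | (simp [h1, h2, h3, h4, hij, hij.symm]; try norm_num)
  have hdiff : F true true - F true false - F false true + F false false =
      4 * ((if i ∈ I ∧ j ∈ J then per ω (I.erase i) (J.erase j) else 0) +
      (if j ∈ I ∧ i ∈ J then per ω (I.erase j) (J.erase i) else 0)) := by
    have : F true true - F true false - F false true + F false false =
        ∑ q ∈ J, ∑ p ∈ I, ((if q = j then (if p = i then 4 else 0) else 0) +
        (if q = i then (if p = j then 4 else 0) else 0)) * per ω (I.erase p) (J.erase q) := by
      simp only [hval, ← hterm]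
      rw [show ∀ a b c d e : ℝ, (e + a) - (e + b) - (e + c) + (e + d) = a - b - c + d by
        intros; ring]
      simp only [← Finset.sum_sub_distrib, ← Finset.sum_add_distrib]
      refine Finset.sum_congr rfl fun q _ => Finset.sum_congr rfl fun p _ => ?_
      ring
    rw [this]
    simp only [add_mul, Finset.sum_add_distrib, ite_mul, zero_mul]
    have e1 : ∀ k l : ι, (∑ q ∈ J, ∑ p ∈ I, if q = k then
        (if p = l then 4 * per ω (I.erase p) (J.erase q) else 0) else 0) =
        4 * (if l ∈ I ∧ k ∈ J then per ω (I.erase l) (J.erase k) else 0) := by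
      intro k l
      rw [Finset.sum_comm]
      simp only [Finset.sum_ite_eq']
      by_cases h1 : l ∈ I <;> by_cases h2 : k ∈ J <;> simp [h1, h2]
    rw [e1, e1, mul_add]
  by_contra hcon
  push Not at hcon
  have h1 := abs_lt.1 (hcon true true)
  have h2 := abs_lt.1 (hcon true false)
  have h3 := abs_lt.1 (hcon false true)
  have h4 := abs_lt.1 (hcon false false)
  change _ < F true true ∧ F true true < _ at h1
  change _ < F true false ∧ F true false < _ at h2
  change _ < F false true ∧ F false true < _ at h3
  change _ < F false false ∧ F false false < _ at h4
  set c := (if i ∈ I ∧ j ∈ J then per ω (I.erase i) (J.erase j) else 0) +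
      (if j ∈ I ∧ i ∈ J then per ω (I.erase j) (J.erase i) else 0)
  rcases abs_cases c with h | h <;> linarith [h1.1, h1.2, h2.1, h2.2, h3.1, h3.2, h4.1, h4.2]

end Matrix

/-! ### Making the two index sets equal -/

section Steps

/-- One step of a chain of trials: if the trial succeeds, with probability at least `c`, then the
final event fails with probability at most `a`, otherwise it fails with probability at most `b`. -/
lemma av_idle {E β : Type*} [Fintype E] [DecidableEq E] [Fintype β] [Nonempty β] {S S' : Set E}
    (h : S ⊆ S') (ω : E → β) {G H : (E → β) → Prop} {a b c : ℝ} (hab : a ≤ b)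
    (hG : c ≤ av (fun ω' => ind (G (mix S ω ω'))))
    (hH : ∀ η, (∀ e ∈ S, η e = ω e) → G η → av (fun ω'' => ind (¬ H (mix S' η ω''))) ≤ a)
    (hH' : ∀ η, (∀ e ∈ S, η e = ω e) → av (fun ω'' => ind (¬ H (mix S' η ω''))) ≤ b) :
    av (fun ω' => ind (¬ H (mix S ω ω'))) ≤ b - c * (b - a) := by
  rw [← av_tower h ω (fun η => ind (¬ H η))]
  calc _ ≤ av (fun ω' => b - ind (G (mix S ω ω')) * (b - a)) := by
        refine av_mono fun ω' => ?_
        have hη : ∀ e ∈ S, mix S ω ω' e = ω e := fun e he => mix_of_mem he ω ω'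
        by_cases hg : G (mix S ω ω')
        · have := hH _ hη hg
          rw [ind_true hg]; linarith
        · have := hH' _ hη
          rw [ind_false hg]; linarith
    _ ≤ b - c * (b - a) := by
        rw [av_sub, av_const, av_mul_right]
        have := mul_le_mul_of_nonneg_right hG (sub_nonneg.2 hab)
        linarith

variable {ι : Type*} [Fintype ι] [DecidableEq ι]

/-- Among the pairs of index sets obtained from `(I, J)` by exchanging elements of the symmetric
difference there is one for which the second difference of the next step does not cancel: with
`g₁`, `g₂`, `g₃` the permanents for three such pairs that are neighbours of each other, one of
`g₁ + g₂`, `g₁ + g₃`, `g₂ + g₃` is at least `2 / 3 * |g₁|` in absolute value. -/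
lemma triangle (ω : Sym2 ι → Bool) {I J : Finset ι} (hc : #I = #J) (hR : 0 < #(I \ J)) :
    ∃ I₁ J₁ : Finset ι, ∃ a b : ι, I₁ ∪ J₁ = I ∪ J ∧ #I₁ = #I ∧ #J₁ = #I ∧ #(I₁ \ J₁) = #(I \ J) ∧
      a ∈ J₁ ∧ a ∉ I₁ ∧ b ∈ I₁ ∧ b ∉ J₁ ∧ 2 / 3 * |per ω I J| ≤
        |per ω I₁ J₁ + per ω ((insert a I₁).erase b) ((insert b J₁).erase a)| := by
  have hR' : #(J \ I) = #(I \ J) := (Finset.card_sdiff_comm hc.symm)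
  obtain ⟨a, ha⟩ := Finset.card_pos.1 (hR'.symm ▸ hR)
  obtain ⟨b, hb⟩ := Finset.card_pos.1 hR
  have ha1 := (Finset.mem_sdiff.1 ha).1
  have ha2 := (Finset.mem_sdiff.1 ha).2
  have hb1 := (Finset.mem_sdiff.1 hb).1
  have hb2 := (Finset.mem_sdiff.1 hb).2
  have hab : a ≠ b := fun h => ha2 (h ▸ hb1)
  by_cases h1 : #(I \ J) = 1
  · refine ⟨I, J, a, b, rfl, rfl, hc.symm, rfl, ha1, ha2, hb1, hb2, ?_⟩
    obtain ⟨b', hb'⟩ := Finset.card_eq_one.1 h1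
    obtain ⟨a', ha'⟩ := Finset.card_eq_one.1 (hR'.trans h1)
    rw [hb', Finset.mem_singleton] at hb
    rw [ha', Finset.mem_singleton] at ha
    subst hb ha
    have e1 : (insert a I).erase b = J := by
      ext x
      have h2 : x ∈ I \ J ↔ x = b := by rw [hb']; simp
      have h3 : x ∈ J \ I ↔ x = a := by rw [ha']; simp
      simp only [Finset.mem_sdiff] at h2 h3
      simp only [Finset.mem_erase, Finset.mem_insert]
      by_cases x = a <;> by_cases x = b <;> by_cases x ∈ I <;> by_cases x ∈ J <;> simp_all
    have e2 : (insert b J).erase a = I := by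
      ext x
      have h2 : x ∈ I \ J ↔ x = b := by rw [hb']; simp
      have h3 : x ∈ J \ I ↔ x = a := by rw [ha']; simp
      simp only [Finset.mem_sdiff] at h2 h3
      simp only [Finset.mem_erase, Finset.mem_insert]
      by_cases x = a <;> by_cases x = b <;> by_cases x ∈ I <;> by_cases x ∈ J <;> simp_all
    rw [e1, e2, per_symm ω J I, ← two_mul, abs_mul, abs_two]
    have := abs_nonneg (per ω I J)
    linarith
  · obtain ⟨b', hb', hbb⟩ := Finset.exists_mem_ne (by omega : 1 < #(I \ J)) b
    have hb1' := (Finset.mem_sdiff.1 hb').1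
    have hb2' := (Finset.mem_sdiff.1 hb').2
    have hab' : a ≠ b' := fun h => ha2 (h ▸ hb1')
    set g₁ := per ω I J
    set g₂ := per ω ((insert a I).erase b) ((insert b J).erase a) with hg₂
    set g₃ := per ω ((insert a I).erase b') ((insert b' J).erase a) with hg₃
    have key : 2 / 3 * |g₁| ≤ |g₁ + g₂| ∨ 2 / 3 * |g₁| ≤ |g₁ + g₃| ∨ 2 / 3 * |g₁| ≤ |g₂ + g₃| := by
      by_contra hcon
      push Not at hcon
      obtain ⟨k1, k2, k3⟩ := hcon
      rw [abs_lt] at k1 k2 k3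
      rcases abs_cases g₁ with h | h <;> linarith [k1.1, k1.2, k2.1, k2.2, k3.1, k3.2]
    rcases key with h | h | h
    · exact ⟨I, J, a, b, rfl, rfl, hc.symm, rfl, ha1, ha2, hb1, hb2, h⟩
    · exact ⟨I, J, a, b', rfl, rfl, hc.symm, rfl, ha1, ha2, hb1', hb2', h⟩
    · refine ⟨(insert a I).erase b, (insert b J).erase a, b, b', ?_, ?_, ?_, ?_, ?_, ?_, ?_, ?_, ?_⟩
      · ext x
        simp only [Finset.mem_union, Finset.mem_erase, Finset.mem_insert]
        by_cases x = a <;> by_cases x = b <;> simp_all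
      · rw [Finset.card_erase_of_mem (by simp [hb1]), Finset.card_insert_of_notMem ha2]; rfl
      · rw [Finset.card_erase_of_mem (by simp [ha1]), Finset.card_insert_of_notMem hb2, hc]; rfl
      · have : (insert a I).erase b \ (insert b J).erase a = insert a ((I \ J).erase b) := by
          ext x
          simp only [Finset.mem_sdiff, Finset.mem_erase, Finset.mem_insert]
          by_cases x = a <;> by_cases x = b <;> simp_all
        rw [this, Finset.card_insert_of_notMem (by simp [ha2]), Finset.card_erase_of_mem hb]
        omega
      · simp [hab.symm]
      · simp
      · simp [hbb, hb1']
      · simp [hbb, hb2']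
      · have e1 : (insert b ((insert a I).erase b)).erase b' = (insert a I).erase b' := by
          rw [Finset.insert_erase (by simp [hb1])]
        have e2 : (insert b' ((insert b J).erase a)).erase b = (insert b' J).erase a := by
          ext x
          simp only [Finset.mem_erase, Finset.mem_insert]
          by_cases x = a <;> by_cases x = b <;> by_cases x = b' <;> simp_all
        rw [e1, e2]
        exact h

/-- Making the two index sets equal: each new index lets one element of the symmetric difference be
cancelled with probability at least `1 / 4`, and an index for which this fails is left unused. -/
lemma cancel (Q : Finset ι) : ∀ (T I J : Finset ι) (ω : Sym2 ι → Bool) (lam : ℝ), Disjoint Q T →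
    I ⊆ T → J ⊆ T → #I = #J → lam * (3 / 2) ^ #(I \ J) ≤ |per ω I J| → 0 ≤ lam →
    av (fun ω' => ind (¬ ∃ A ⊆ T ∪ Q, #A = #I + 2 * #(I \ J) ∧
      lam ≤ |per (mix (ins T) ω ω') A A|)) ≤ 2 ^ #(I \ J) * (7 / 8) ^ #Q := by
  induction Q using Finset.induction_on with
  | empty =>
    intro T I J ω lam _ _ _ _ _ _
    refine (av_ind_le_one _).trans ?_
    rw [Finset.card_empty, pow_zero, mul_one]
    exact one_le_pow₀ (by norm_num)
  | insert w Q hw ih =>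
    intro T I J ω lam hQ hI hJ hc hlam h0
    have hwT : w ∉ T := Finset.disjoint_left.1 hQ (Finset.mem_insert_self w Q)
    have hQT : Disjoint Q (insert w T) := by
      rw [Finset.disjoint_insert_right]
      exact ⟨hw, hQ.mono_left (Finset.subset_insert _ _)⟩
    have hU : insert w T ∪ Q = T ∪ insert w Q := by
      ext x; simp only [Finset.mem_union, Finset.mem_insert]; tauto
    rcases Nat.eq_zero_or_pos (#(I \ J)) with hR | hR
    · have hIJ : I = J := Finset.eq_of_subset_of_card_le
        (Finset.sdiff_eq_empty_iff_subset.1 (Finset.card_eq_zero.1 hR)) hc.ge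
      have : ∀ ω', ind (¬ ∃ A ⊆ T ∪ insert w Q, #A = #I + 2 * #(I \ J) ∧
          lam ≤ |per (mix (ins T) ω ω') A A|) = 0 := by
        intro ω'
        refine ind_false (not_not.2 ⟨I, hI.trans Finset.subset_union_left, by omega, ?_⟩)
        rw [per_congr_ins (fun e he => mix_of_mem he ω ω') hI hI]
        rw [hR, pow_zero, mul_one, ← hIJ] at hlam
        exact hlam
      simp_rw [this]
      rw [av_const]
      positivity
    · obtain ⟨I₁, J₁, a, b, hun, hI₁, hJ₁, hR₁, ha, ha', hb, hb', hval⟩ := triangle ω hc hR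
      have hIT : I₁ ∪ J₁ ⊆ T := hun ▸ Finset.union_subset hI hJ
      have haT : a ∈ T := hIT (Finset.mem_union_right _ ha)
      have hbT : b ∈ T := hIT (Finset.mem_union_left _ hb)
      have hI1T : insert a I₁ ⊆ T :=
        Finset.insert_subset haT (Finset.subset_union_left.trans hIT)
      have hJ1T : insert b J₁ ⊆ T :=
        Finset.insert_subset hbT (Finset.subset_union_right.trans hIT)
      have hab : a ≠ b := fun h => ha' (h ▸ hb)
      have haw : a ≠ w := fun h => hwT (h ▸ haT)
      have hbw : b ≠ w := fun h => hwT (h ▸ hbT)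
      set I₂ := insert w (insert a I₁) with hI₂
      set J₂ := insert w (insert b J₁) with hJ₂
      have hwI : w ∉ insert a I₁ := fun h => hwT (hI1T h)
      have hwJ : w ∉ insert b J₁ := fun h => hwT (hJ1T h)
      have hc2 : #I₂ = #I + 2 := by
        rw [hI₂, Finset.card_insert_of_notMem hwI, Finset.card_insert_of_notMem ha', hI₁]
      have hc2' : #J₂ = #I + 2 := by
        rw [hJ₂, Finset.card_insert_of_notMem hwJ, Finset.card_insert_of_notMem hb', hJ₁]
      have hR2 : #(I₂ \ J₂) + 1 = #(I \ J) := by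
        have : I₂ \ J₂ = (I₁ \ J₁).erase b := by
          ext x
          simp only [hI₂, hJ₂, Finset.mem_sdiff, Finset.mem_erase, Finset.mem_insert]
          by_cases h1 : x = a
          · subst h1; simp_all
          · by_cases h2 : x = b
            · subst h2; simp_all
            · by_cases h3 : x = w
              · subst h3
                have : x ∉ I₁ := fun h => hwI (by simp [h])
                simp_all
              · simp_all
        rw [this, Finset.card_erase_of_mem (by simp [hb, hb']), hR₁]
        omega
      obtain ⟨R, hRR⟩ : ∃ R, #(I \ J) = R + 1 := ⟨_, hR2.symm⟩
      have hR2' : #(I₂ \ J₂) = R := by omega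
      have hlam2 : lam * (3 / 2) ^ R ≤
          |per ω I₁ J₁ + per ω ((insert a I₁).erase b) ((insert b J₁).erase a)| := by
        refine le_trans ?_ hval
        rw [hRR, pow_succ] at hlam
        linarith
      have hG : 1 / 4 ≤ av (fun ω' => ind (lam * (3 / 2) ^ R ≤
          |per (mix (ins T) ω ω') I₂ J₂|)) := by
        refine quarter s(w, a) s(w, b) fun ω' => ?_
        obtain ⟨s, t, hst⟩ := second_diff (mix (ins T) ω ω') hwI hwJ hab haw hbw
        refine ⟨s, t, ?_⟩
        rw [mix_update (fun h => hwT (mem_ins.1 h).1), mix_update (fun h => hwT (mem_ins.1 h).1)]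
        refine le_trans ?_ hst
        rw [if_pos (by simp), if_pos (by simp [ha, hb]), Finset.erase_insert ha',
          Finset.erase_insert hb']
        have hm : ∀ I' ⊆ T, ∀ J' ⊆ T, per (mix (ins T) ω ω') I' J' = per ω I' J' :=
          fun I' h1 J' h2 => per_congr_ins (fun e he => mix_of_mem he ω ω') h1 h2
        rw [hm _ ((Finset.subset_insert _ _).trans hI1T) _ ((Finset.subset_insert _ _).trans hJ1T),
          hm _ ((Finset.erase_subset _ _).trans hI1T) _ ((Finset.erase_subset _ _).trans hJ1T)]
        exact hlam2
      have hpos : (0 : ℝ) ≤ 2 ^ R * (7 / 8) ^ #Q := by positivity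
      have := av_idle (ins_mono (Finset.subset_insert w T)) ω
        (G := fun η => lam * (3 / 2) ^ R ≤ |per η I₂ J₂|)
        (H := fun η => ∃ A ⊆ T ∪ insert w Q, #A = #I + 2 * #(I \ J) ∧ lam ≤ |per η A A|)
        (a := 2 ^ R * (7 / 8) ^ #Q) (b := 2 ^ (R + 1) * (7 / 8) ^ #Q) (c := 1 / 4)
        (by rw [pow_succ]; linarith) hG ?_ ?_
      · refine this.trans (le_of_eq ?_)
        rw [hRR, Finset.card_insert_of_notMem hw]
        ring
      · intro η _ hη
        have := ih (insert w T) I₂ J₂ η lam hQT (Finset.insert_subset_insert _ hI1T)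
          (Finset.insert_subset_insert _ hJ1T) (by omega) (by rw [hR2']; exact hη) h0
        rw [hR2', hU, hc2, show #I + 2 + 2 * R = #I + 2 * #(I \ J) by omega] at this
        exact this
      · intro η hη
        have hη' : per η I J = per ω I J := per_congr_ins hη hI hJ
        have := ih (insert w T) I J η lam hQT (hI.trans (Finset.subset_insert _ _))
          (hJ.trans (Finset.subset_insert _ _)) hc (by rw [hη']; exact hlam) h0
        rw [hU, hRR] at this
        rw [hRR]
        exact this

end Steps

/-! ### Enlarging a principal submatrix -/

section Principal

/-- If four given coordinates can always be set so that `G` holds, then `G` fails with conditional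
probability at most `15 / 16` given the other coordinates. -/
lemma sixteenth {E : Type*} [Fintype E] [DecidableEq E] {G : (E → Bool) → Prop}
    {f : (E → Bool) → ℝ} (e₁ e₂ e₃ e₄ : E) (hf0 : ∀ ω, 0 ≤ f ω)
    (hf : ∀ ω s₁ s₂ s₃ s₄, f (Function.update (Function.update (Function.update (Function.update ω
      e₁ s₁) e₂ s₂) e₃ s₃) e₄ s₄) = f ω)
    (h : ∀ ω, ∃ s₁ s₂ s₃ s₄, G (Function.update (Function.update (Function.update (Function.update ω
      e₁ s₁) e₂ s₂) e₃ s₃) e₄ s₄)) :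
    av (fun ω => f ω * ind (¬ G ω)) ≤ 15 / 16 * av f := by
  rw [av_update e₄, av_update e₃, av_update e₂, av_update e₁, ← av_mul_left]
  refine av_mono fun ω => ?_
  simp only [hf]
  obtain ⟨s₁, s₂, s₃, s₄, hs⟩ := h ω
  set g : Bool → Bool → Bool → Bool → ℝ := fun s₁ s₂ s₃ s₄ =>
    ind (¬ G (Function.update (Function.update (Function.update (Function.update ω
      e₁ s₁) e₂ s₂) e₃ s₃) e₄ s₄)) with hg
  have hg1 : ∀ a b c d, g a b c d ≤ 1 := fun a b c d => ind_le_one _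
  have hg0 : g s₁ s₂ s₃ s₄ = 0 := ind_false (not_not.2 hs)
  have key : g true true true true + g true true true false + g true true false true +
      g true true false false + g true false true true + g true false true false +
      g true false false true + g true false false false + g false true true true +
      g false true true false + g false true false true + g false true false false +
      g false false true true + g false false true false + g false false false true +
      g false false false false ≤ 15 := by
    have := hg1 true true true true
    have := hg1 true true true false
    have := hg1 true true false true
    have := hg1 true true false false
    have := hg1 true false true true
    have := hg1 true false true false
    have := hg1 true false false true
    have := hg1 true false false false
    have := hg1 false true true true
    have := hg1 false true true false
    have := hg1 false true false true
    have := hg1 false true false false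
    have := hg1 false false true true
    have := hg1 false false true false
    have := hg1 false false false true
    have := hg1 false false false false
    cases s₁ <;> cases s₂ <;> cases s₃ <;> cases s₄ <;> linarith
  have := mul_le_mul_of_nonneg_left key (hf0 ω)
  simp only [hg] at this
  linarith

variable {ι : Type*} [Fintype ι] [DecidableEq ι]

/-- Enlarging a principal submatrix by four indices `i`, `j`, `w₁`, `w₂` without losing size, by
choosing the four entries in rows `w₁`, `w₂` and columns `i`, `j`. -/
lemma grow (ω : Sym2 ι → Bool) {A : Finset ι} {i j w₁ w₂ : ι} (hij : i ≠ j) (hi : i ∉ A)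
    (hj : j ∉ A) (hw : w₁ ≠ w₂) (hw₁ : w₁ ∉ insert i (insert j A))
    (hw₂ : w₂ ∉ insert i (insert j A)) : ∃ s₁ s₂ s₃ s₄,
    |per ω A A| ≤ |per (Function.update (Function.update (Function.update (Function.update ω
      s(w₁, i) s₁) s(w₁, j) s₂) s(w₂, i) s₃) s(w₂, j) s₄)
      (insert w₂ (insert w₁ (insert i (insert j A))))
      (insert w₂ (insert w₁ (insert i (insert j A))))| := by
  have h1i : i ≠ w₁ := fun h => hw₁ (by simp [h])
  have h1j : j ≠ w₁ := fun h => hw₁ (by simp [h])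
  have h2i : i ≠ w₂ := fun h => hw₂ (by simp [h])
  have h2j : j ≠ w₂ := fun h => hw₂ (by simp [h])
  have h1A : w₁ ∉ A := fun h => hw₁ (by simp [h])
  have h2A : w₂ ∉ A := fun h => hw₂ (by simp [h])
  obtain ⟨s₁, s₂, h1⟩ := second_diff ω (w := w₁) (i := i) (j := j) (I := insert j A)
    (J := insert i A) (by simp [h1A, h1j.symm]) (by simp [h1A, h1i.symm]) hij h1i h1j
  rw [if_neg (by simp [hi, hij]), if_pos (by simp), Finset.erase_insert hj, Finset.erase_insert hi,
    zero_add] at h1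
  set η := Function.update (Function.update ω s(w₁, i) s₁) s(w₁, j) s₂
  set C := insert w₁ (insert i (insert j A)) with hC
  obtain ⟨s₃, s₄, h2⟩ := second_diff η (w := w₂) (i := i) (j := j) (I := C)
    (J := C) (by simp [hC, h2A, h2j.symm, h2i.symm, hw.symm])
    (by simp [hC, h2A, h2j.symm, h2i.symm, hw.symm]) hij h2i h2j
  refine ⟨s₁, s₂, s₃, s₄, h1.trans (le_trans ?_ h2)⟩
  have e1 : C.erase i = insert w₁ (insert j A) := by
    ext x
    simp only [hC, Finset.mem_erase, Finset.mem_insert]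
    by_cases x = i <;> simp_all
  have hji := hij.symm
  have e2 : C.erase j = insert w₁ (insert i A) := by
    ext x
    simp only [hC, Finset.mem_erase, Finset.mem_insert]
    by_cases x = j <;> simp_all
  rw [if_pos (by simp [hC]), if_pos (by simp [hC]), e1, e2, per_symm η (insert w₁ (insert i A)),
    ← two_mul, abs_mul, abs_two]
  have := abs_nonneg (per η (insert w₁ (insert j A)) (insert w₁ (insert i A)))
  linarith

/-- The enlargements of `A` by `b` disjoint pairs of unused indices of `T`, each together with the new
indices `w₁`, `w₂`, all fail with probability at most `(15 / 16) ^ b`, as each of them can be made to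
succeed by four entries that do not occur in the others. -/
lemma grow_prob (T : Finset ι) (ω : Sym2 ι → Bool) {A : Finset ι} {w₁ w₂ : ι} {lam : ℝ}
    (hA : A ⊆ T) (hw : w₁ ≠ w₂) (hw₁ : w₁ ∉ T) (hw₂ : w₂ ∉ T) (hlam : lam ≤ |per ω A A|) (b : ℕ) :
    ∀ (z : Fin b × Bool → ι), Function.Injective z → (∀ x, z x ∈ T) → (∀ x, z x ∉ A) →
    av (fun ω' => ∏ l, ind (¬ lam ≤ |per (mix (ins T) ω ω')
      (insert w₂ (insert w₁ (insert (z (l, true)) (insert (z (l, false)) A))))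
      (insert w₂ (insert w₁ (insert (z (l, true)) (insert (z (l, false)) A))))|)) ≤
      (15 / 16) ^ b := by
  induction b with
  | zero => intro z _ _ _; simp [av_const]
  | succ b ih =>
    intro z hz hzT hzA
    have hzw₁ : ∀ x, z x ≠ w₁ := fun x h => hw₁ (h ▸ hzT x)
    have hzw₂ : ∀ x, z x ≠ w₂ := fun x h => hw₂ (h ▸ hzT x)
    have h1 := ih (fun x => z (x.1.castSucc, x.2))
      (fun x y hxy => by
        have := hz hxy
        simp only [Prod.mk.injEq, Fin.castSucc_inj] at this
        exact Prod.ext this.1 this.2) (fun x => hzT _) (fun x => hzA _)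
    simp_rw [Fin.prod_univ_castSucc]
    set i := z (Fin.last b, true)
    set j := z (Fin.last b, false)
    have hij : i ≠ j := fun h => by simpa using hz h
    have hm : ∀ (ω' : Sym2 ι → Bool) (s₁ s₂ s₃ s₄ : Bool), mix (ins T) ω (Function.update
        (Function.update (Function.update (Function.update ω'
        s(w₁, i) s₁) s(w₁, j) s₂) s(w₂, i) s₃) s(w₂, j) s₄) = Function.update
        (Function.update (Function.update (Function.update (mix (ins T) ω ω')
        s(w₁, i) s₁) s(w₁, j) s₂) s(w₂, i) s₃) s(w₂, j) s₄ := by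
      intro ω' s₁ s₂ s₃ s₄
      rw [mix_update (fun h => hw₂ (mem_ins.1 h).1), mix_update (fun h => hw₂ (mem_ins.1 h).1),
        mix_update (fun h => hw₁ (mem_ins.1 h).1), mix_update (fun h => hw₁ (mem_ins.1 h).1)]
    refine (sixteenth (f := fun ω' => ∏ l : Fin b, ind (¬ lam ≤ |per (mix (ins T) ω ω')
      (insert w₂ (insert w₁ (insert (z (l.castSucc, true)) (insert (z (l.castSucc, false)) A))))
      (insert w₂ (insert w₁ (insert (z (l.castSucc, true)) (insert (z (l.castSucc, false)) A))))|))
      s(w₁, i) s(w₁, j) s(w₂, i) s(w₂, j) (fun ω' => Finset.prod_nonneg fun l _ => ind_nonneg _)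
      ?_ ?_).trans ?_
    · intro ω' s₁ s₂ s₃ s₄
      refine Finset.prod_congr rfl fun l _ => ?_
      rw [hm]
      have hk : ∀ v, ∀ k : Bool, z (Fin.last b, k) ≠ w₁ → z (Fin.last b, k) ≠ w₂ →
          ∀ p ∈ (insert w₂ (insert w₁ (insert (z (l.castSucc, true))
          (insert (z (l.castSucc, false)) A)))), ∀ q ∈ (insert w₂ (insert w₁
          (insert (z (l.castSucc, true)) (insert (z (l.castSucc, false)) A)))),
          s(p, q) ≠ s(v, z (Fin.last b, k)) := by
        intro v k hk1 hk2 p hp q hq h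
        have hmem : z (Fin.last b, k) ∈ (insert w₂ (insert w₁ (insert (z (l.castSucc, true))
            (insert (z (l.castSucc, false)) A)))) := by
          rcases Sym2.eq_iff.1 h with h | h
          · rw [← h.2]; exact hq
          · rw [← h.1]; exact hp
        simp only [Finset.mem_insert, hk1, hk2, hzA, or_false, false_or] at hmem
        rcases hmem with h | h
        · have := hz h
          simp only [Prod.mk.injEq] at this
          exact (Fin.castSucc_lt_last l).ne this.1.symm
        · have := hz h
          simp only [Prod.mk.injEq] at this
          exact (Fin.castSucc_lt_last l).ne this.1.symm
      rw [per_update (hk w₂ false (hzw₁ _) (hzw₂ _)), per_update (hk w₂ true (hzw₁ _) (hzw₂ _)),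
        per_update (hk w₁ false (hzw₁ _) (hzw₂ _)), per_update (hk w₁ true (hzw₁ _) (hzw₂ _))]
    · intro ω'
      obtain ⟨s₁, s₂, s₃, s₄, h⟩ := grow (mix (ins T) ω ω') (A := A) (w₁ := w₁) (w₂ := w₂) hij
        (hzA _) (hzA _) hw (fun h => hw₁ (by
          simp only [Finset.mem_insert] at h
          rcases h with h | h | h
          · exact h ▸ hzT _
          · exact h ▸ hzT _
          · exact hA h)) (fun h => hw₂ (by
          simp only [Finset.mem_insert] at h
          rcases h with h | h | h
          · exact h ▸ hzT _
          · exact h ▸ hzT _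
          · exact hA h))
      refine ⟨s₁, s₂, s₃, s₄, ?_⟩
      rw [hm]
      refine (hlam.trans (le_of_eq ?_)).trans h
      rw [per_congr_ins (fun e he => mix_of_mem he ω ω') hA hA]
    · rw [pow_succ, mul_comm]
      exact mul_le_mul_of_nonneg_right h1 (by norm_num)

end Principal

/-! ### Reducing the set of unused indices -/

section Complement

lemma ind_le_prod {κ : Type*} [Fintype κ] {p : Prop} {q : κ → Prop} (h : p → ∀ l, q l) :
    ind p ≤ ∏ l, ind (q l) := by
  by_cases hp : p
  · rw [Finset.prod_congr rfl fun l _ => ind_true (h hp l)]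
    simp [ind_le_one]
  · rw [ind_false hp]; exact Finset.prod_nonneg fun l _ => ind_nonneg _

variable {ι : Type*} [DecidableEq ι]

lemma sdiff_pair {T Z : Finset ι} {i j w₁ w₂ : ι} (hi : i ∈ Z) (hj : j ∈ Z) (hZ : Z ⊆ T)
    (hw₁ : w₁ ∉ T) (hw₂ : w₂ ∉ T) : insert w₂ (insert w₁ T) \ ((Z.erase i).erase j) =
      insert w₂ (insert w₁ (insert i (insert j (T \ Z)))) := by
  have hiT := hZ hi
  have hjT := hZ hj
  have h1 : w₁ ∉ Z := fun h => hw₁ (hZ h)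
  have h2 : w₂ ∉ Z := fun h => hw₂ (hZ h)
  ext x
  simp only [Finset.mem_sdiff, Finset.mem_erase, Finset.mem_insert]
  by_cases e1 : x = w₂
  · subst e1; simp [h2]
  by_cases e2 : x = w₁
  · subst e2; simp [h1]
  by_cases e3 : x = i
  · subst e3; simp [hiT]
  by_cases e4 : x = j
  · subst e4; simp [hjT]
  simp [e1, e2, e3, e4]

lemma exists_pair {Q : Finset ι} {m : ℕ} (h : #Q = 2 * (m + 1)) : ∃ w₁ w₂ Q', w₁ ≠ w₂ ∧ w₁ ∉ Q' ∧
    w₂ ∉ Q' ∧ Q = insert w₂ (insert w₁ Q') ∧ #Q' = 2 * m := by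
  obtain ⟨w₂, Q₁, h1, rfl, h2⟩ := Finset.card_eq_succ.1 (show #Q = (2 * m + 1) + 1 by omega)
  obtain ⟨w₁, Q', h3, rfl, h4⟩ := Finset.card_eq_succ.1 h2
  simp only [Finset.mem_insert, not_or] at h1
  exact ⟨w₁, w₂, Q', fun h => h1.1 h.symm, h3, h1.2, rfl, h4⟩

variable [Fintype ι]

/-- One pair of new indices `w₁`, `w₂` absorbs two of the unused indices in `Z`. -/
lemma shrink_step {T Z : Finset ι} (ω : Sym2 ι → Bool) {w₁ w₂ : ι} {lam : ℝ} (hZ : Z ⊆ T)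
    (hw : w₁ ≠ w₂) (hw₁ : w₁ ∉ T) (hw₂ : w₂ ∉ T) (hlam : lam ≤ |per ω (T \ Z) (T \ Z)|) (b : ℕ)
    (hb : 2 * b ≤ #Z) :
    av (fun ω' => ind (¬ ∃ Z' ⊆ Z, #Z' + 2 = #Z ∧ lam ≤ |per (mix (ins T) ω ω')
      (insert w₂ (insert w₁ T) \ Z') (insert w₂ (insert w₁ T) \ Z')|)) ≤ (15 / 16) ^ b := by
  obtain ⟨z⟩ : Nonempty (Fin b × Bool ↪ Z) := by
    refine Function.Embedding.nonempty_of_card_le ?_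
    simp only [Fintype.card_prod, Fintype.card_fin, Fintype.card_bool, Fintype.card_coe]
    omega
  refine le_trans (av_mono fun ω' => ?_) (grow_prob T ω (A := T \ Z) Finset.sdiff_subset hw hw₁ hw₂
    hlam b (fun x => (z x : ι)) (fun x y h => z.injective (Subtype.ext h))
    (fun x => hZ (z x).2) (fun x h => (Finset.mem_sdiff.1 h).2 (z x).2))
  refine ind_le_prod fun h l hl => h ?_
  refine ⟨(Z.erase (z (l, true))).erase (z (l, false)),
    (Finset.erase_subset _ _).trans (Finset.erase_subset _ _), ?_, ?_⟩
  · have hne : (z (l, false) : ι) ≠ z (l, true) := fun h => by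
      have := z.injective (Subtype.ext h)
      simp at this
    have hm : (z (l, false) : ι) ∈ Z.erase (z (l, true)) :=
      Finset.mem_erase.2 ⟨hne, (z (l, false)).2⟩
    rw [Finset.card_erase_of_mem hm, Finset.card_erase_of_mem (z (l, true)).2]
    have := Finset.card_pos.2 ⟨_, hm⟩
    rw [Finset.card_erase_of_mem (z (l, true)).2] at this
    omega
  · rw [sdiff_pair (z (l, true)).2 (z (l, false)).2 hZ hw₁ hw₂]
    exact hl

/-- Shrinking the set `Z` of unused indices down to `l` elements: every two new indices absorb two
elements of `Z`, and as many disjoint pairs of elements of `Z` are available, failure is unlikely as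
long as `Z` is large. -/
lemma shrink (l m : ℕ) : ∀ (T Z Q : Finset ι) (ω : Sym2 ι → Bool) (lam : ℝ), Z ⊆ T → Disjoint Q T →
    #Q = 2 * m → #Z = l + 2 * m → lam ≤ |per ω (T \ Z) (T \ Z)| →
    av (fun ω' => ind (¬ ∃ Z' ⊆ Z, #Z' = l ∧ lam ≤ |per (mix (ins T) ω ω')
      ((T ∪ Q) \ Z') ((T ∪ Q) \ Z')|)) ≤ 16 * (15 / 16) ^ (l / 2 + 1) * (1 - (15 / 16) ^ m) := by
  induction m with
  | zero =>
    intro T Z Q ω lam hZ hQ hQc hZc hlam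
    have hQ0 : Q = ∅ := by simpa using hQc
    have : ∀ ω', ind (¬ ∃ Z' ⊆ Z, #Z' = l ∧ lam ≤ |per (mix (ins T) ω ω')
      ((T ∪ Q) \ Z') ((T ∪ Q) \ Z')|) = 0 := by
      intro ω'
      refine ind_false (not_not.2 ⟨Z, subset_rfl, by omega, ?_⟩)
      rw [hQ0, Finset.union_empty, per_congr_ins (fun e he => mix_of_mem he ω ω')
        Finset.sdiff_subset Finset.sdiff_subset]
      exact hlam
    simp_rw [this]
    simp [av_const]
  | succ m ih =>
    intro T Z Q ω lam hZ hQ hQc hZc hlam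
    obtain ⟨w₁, w₂, Q', hw, hw1, hw2, rfl, hQ'⟩ := exists_pair hQc
    have hw₁ : w₁ ∉ T := Finset.disjoint_left.1 hQ (by simp)
    have hw₂ : w₂ ∉ T := Finset.disjoint_left.1 hQ (by simp)
    have hQT : Disjoint Q' (insert w₂ (insert w₁ T)) := by
      rw [Finset.disjoint_insert_right, Finset.disjoint_insert_right]
      exact ⟨hw2, hw1, hQ.mono_left ((Finset.subset_insert _ _).trans (Finset.subset_insert _ _))⟩
    have hU : insert w₂ (insert w₁ T) ∪ Q' = T ∪ insert w₂ (insert w₁ Q') := by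
      ext x; simp only [Finset.mem_union, Finset.mem_insert]; tauto
    have hTT : T ⊆ insert w₂ (insert w₁ T) :=
      (Finset.subset_insert _ _).trans (Finset.subset_insert _ _)
    have h1 := shrink_step ω hZ hw hw₁ hw₂ hlam (l / 2 + (m + 1)) (by omega)
    have hpm : (15 / 16 : ℝ) ^ m ≤ 1 := pow_le_one₀ (by norm_num) (by norm_num)
    refine (av_chain (ins_mono hTT) ω (q := 16 * (15 / 16) ^ (l / 2 + 1) * (1 - (15 / 16) ^ m))
      (G := fun η => ∃ Z' ⊆ Z, #Z' + 2 = #Z ∧ lam ≤ |per η (insert w₂ (insert w₁ T) \ Z')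
        (insert w₂ (insert w₁ T) \ Z')|) (H := fun η => ∃ Z' ⊆ Z, #Z' = l ∧ lam ≤ |per η
      ((T ∪ insert w₂ (insert w₁ Q')) \ Z') ((T ∪ insert w₂ (insert w₁ Q')) \ Z')|)
      (mul_nonneg (by positivity) (by linarith)) h1 ?_).trans (le_of_eq ?_)
    · rintro η _ ⟨Z', hZ', hc, hη⟩
      refine le_trans (av_mono fun ω'' => ind_mono ?_)
        (ih (insert w₂ (insert w₁ T)) Z' Q' η lam ((hZ'.trans hZ).trans hTT) hQT hQ' (by omega) hη)
      rintro h ⟨Z'', h1, h2, h3⟩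
      exact h ⟨Z'', h1.trans hZ', h2, by rw [← hU]; exact h3⟩
    · rw [show l / 2 + (m + 1) = (l / 2 + 1) + m by ring, pow_add _ _ m]
      ring

/-- Replacing the part `K` of the set of unused indices by new indices: each pair of new indices
absorbs two elements of `K` with probability at least `1 / 16`, and stays unused otherwise. -/
lemma clear (a : ℕ) : ∀ (R : ℕ) (T K Z Q : Finset ι) (ω : Sym2 ι → Bool) (lam : ℝ), K ⊆ T → Z ⊆ T →
    Disjoint K Z → Disjoint Q T → #Q = 2 * a → #K = 2 * R →
    lam ≤ |per ω (T \ (K ∪ Z)) (T \ (K ∪ Z))| →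
    av (fun ω' => ind (¬ ∃ Z' ⊆ Z ∪ Q, #Z' + 2 * R = #Z + 2 * a ∧ lam ≤ |per (mix (ins T) ω ω')
      ((T ∪ Q) \ Z') ((T ∪ Q) \ Z')|)) ≤ 2 ^ R * (31 / 32) ^ a := by
  induction a with
  | zero =>
    intro R T K Z Q ω lam _ _ _ _ _ _ _
    refine (av_ind_le_one _).trans ?_
    rw [pow_zero, mul_one]
    exact one_le_pow₀ (by norm_num)
  | succ a ih =>
    intro R T K Z Q ω lam hK hZ hKZ hQ hQc hKc hlam
    rcases Nat.eq_zero_or_pos R with hR | hR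
    · have hK0 : K = ∅ := by rw [hR] at hKc; simpa using hKc
      have : ∀ ω', ind (¬ ∃ Z' ⊆ Z ∪ Q, #Z' + 2 * R = #Z + 2 * (a + 1) ∧
          lam ≤ |per (mix (ins T) ω ω') ((T ∪ Q) \ Z') ((T ∪ Q) \ Z')|) = 0 := by
        intro ω'
        refine ind_false (not_not.2 ⟨Z ∪ Q, subset_rfl, ?_, ?_⟩)
        · rw [Finset.card_union_of_disjoint (hQ.mono_right hZ).symm, hR, hQc]; ring
        · have : (T ∪ Q) \ (Z ∪ Q) = T \ (K ∪ Z) := by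
            rw [hK0, Finset.empty_union]
            ext x
            simp only [Finset.mem_sdiff, Finset.mem_union]
            have hx : x ∈ Q → x ∉ T := fun h => Finset.disjoint_left.1 hQ h
            tauto
          rw [this, per_congr_ins (fun e he => mix_of_mem he ω ω')
            Finset.sdiff_subset Finset.sdiff_subset]
          exact hlam
      simp_rw [this]
      rw [av_const]
      positivity
    · obtain ⟨R, rfl⟩ : ∃ R', R = R' + 1 := ⟨R - 1, by omega⟩
      obtain ⟨w₁, w₂, Q', hw, hw1, hw2, rfl, hQ'⟩ := exists_pair hQc
      obtain ⟨i, j, K', hij, hi, hj, rfl, hK'⟩ := exists_pair hKc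
      have hw₁ : w₁ ∉ T := Finset.disjoint_left.1 hQ (by simp)
      have hw₂ : w₂ ∉ T := Finset.disjoint_left.1 hQ (by simp)
      have hQT : Disjoint Q' (insert w₂ (insert w₁ T)) := by
        rw [Finset.disjoint_insert_right, Finset.disjoint_insert_right]
        exact ⟨hw2, hw1, hQ.mono_left ((Finset.subset_insert _ _).trans (Finset.subset_insert _ _))⟩
      have hU : insert w₂ (insert w₁ T) ∪ Q' = T ∪ insert w₂ (insert w₁ Q') := by
        ext x; simp only [Finset.mem_union, Finset.mem_insert]; tauto
      have hTT : T ⊆ insert w₂ (insert w₁ T) :=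
        (Finset.subset_insert _ _).trans (Finset.subset_insert _ _)
      have hKK : K' ⊆ insert j (insert i K') :=
        (Finset.subset_insert _ _).trans (Finset.subset_insert _ _)
      have hiZ : i ∉ Z := Finset.disjoint_left.1 hKZ (by simp)
      have hjZ : j ∉ Z := Finset.disjoint_left.1 hKZ (by simp)
      set L := insert j (insert i K') ∪ Z with hL
      have hLT : L ⊆ T := Finset.union_subset hK hZ
      have hL2 : (L.erase i).erase j = K' ∪ Z := by
        ext x
        simp only [hL, Finset.mem_erase, Finset.mem_union, Finset.mem_insert]
        by_cases x = i <;> by_cases x = j <;> simp_all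
      have hG : 1 / 16 ≤ av (fun ω' => ind (lam ≤ |per (mix (ins T) ω ω')
          (insert w₂ (insert w₁ T) \ (K' ∪ Z)) (insert w₂ (insert w₁ T) \ (K' ∪ Z))|)) := by
        have h1 := grow_prob T ω (A := T \ L) Finset.sdiff_subset hw hw₁ hw₂ hlam 1
          (fun x => if x.2 then i else j)
          (by
            rintro ⟨x, s⟩ ⟨y, t⟩ h
            have : x = y := Subsingleton.elim _ _
            subst this
            cases s <;> cases t <;> simp_all [hij.symm])
          (by rintro ⟨x, s⟩; cases s <;> simp <;> exact hLT (by simp [hL]))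
          (by rintro ⟨x, s⟩; cases s <;> simp [hL])
        simp only [Fin.prod_univ_one, if_true, Bool.false_eq_true, if_false, pow_one] at h1
        rw [av_not, ← sdiff_pair (by simp [hL]) (by simp [hL]) hLT hw₁ hw₂, hL2] at h1
        linarith
      have hpos : (0 : ℝ) ≤ 2 ^ R * (31 / 32) ^ a := by positivity
      have := av_idle (ins_mono hTT) ω
        (G := fun η => lam ≤ |per η
          (insert w₂ (insert w₁ T) \ (K' ∪ Z)) (insert w₂ (insert w₁ T) \ (K' ∪ Z))|)
        (H := fun η => ∃ Z' ⊆ Z ∪ insert w₂ (insert w₁ Q'), #Z' + 2 * (R + 1) = #Z + 2 * (a + 1) ∧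
          lam ≤ |per η ((T ∪ insert w₂ (insert w₁ Q')) \ Z') ((T ∪ insert w₂ (insert w₁ Q')) \ Z')|)
        (a := 2 ^ R * (31 / 32) ^ a) (b := 2 ^ (R + 1) * (31 / 32) ^ a) (c := 1 / 16)
        (by rw [pow_succ]; linarith) hG ?_ ?_
      · refine this.trans (le_of_eq ?_)
        ring
      · intro η _ hη
        refine le_trans (av_mono fun ω'' => ind_mono ?_) (ih R (insert w₂ (insert w₁ T)) K' Z Q' η
          lam ((hKK.trans hK).trans hTT) (hZ.trans hTT) (hKZ.mono_left hKK) hQT hQ' hK' hη)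
        rintro h ⟨Z', h1, h2, h3⟩
        refine h ⟨Z', h1.trans (Finset.union_subset_union_right
          ((Finset.subset_insert _ _).trans (Finset.subset_insert _ _))), by omega, ?_⟩
        rw [← hU]; exact h3
      · intro η hη
        have hwZ1 : w₁ ∉ Z := fun h => hw₁ (hZ h)
        have hwZ2 : w₂ ∉ insert w₁ Z := by
          simp only [Finset.mem_insert, not_or]
          exact ⟨hw.symm, fun h => hw₂ (hZ h)⟩
        have hset : insert w₂ (insert w₁ T) \ (insert j (insert i K') ∪ insert w₂ (insert w₁ Z)) =
            T \ L := by
          ext x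
          simp only [hL, Finset.mem_sdiff, Finset.mem_union, Finset.mem_insert]
          by_cases e1 : x = w₁
          · subst e1; simp [hw₁]
          by_cases e2 : x = w₂
          · subst e2; simp [hw₂]
          simp [e1, e2]
        refine le_trans (av_mono fun ω'' => ind_mono ?_) (ih (R + 1) (insert w₂ (insert w₁ T))
          (insert j (insert i K')) (insert w₂ (insert w₁ Z)) Q' η
          lam (hK.trans hTT) (Finset.insert_subset_insert _ (Finset.insert_subset_insert _ hZ))
          ?_ hQT hQ' hKc ?_)
        · rintro h ⟨Z', h1, h2, h3⟩
          refine h ⟨Z', h1.trans ?_, ?_, ?_⟩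
          · intro x
            simp only [Finset.mem_union, Finset.mem_insert]
            tauto
          · rw [Finset.card_insert_of_notMem hwZ2, Finset.card_insert_of_notMem hwZ1] at h2
            omega
          · rw [← hU]; exact h3
        · rw [Finset.disjoint_insert_right, Finset.disjoint_insert_right]
          exact ⟨fun h => hw₂ (hK h), fun h => hw₁ (hK h), hKZ⟩
        · rw [hset, per_congr_ins hη Finset.sdiff_subset Finset.sdiff_subset]
          exact hlam

end Complement

/-! ### Principal submatrices with few missing indices -/

section Constant

variable {ι : Type*} [Fintype ι] [DecidableEq ι]

/-- Enlarging both index sets by exactly `c` new indices, using the diagonal entries. This adjusts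
the size of the submatrix modulo `4`. -/
lemma diag (Q : Finset ι) : ∀ (c : ℕ) (T I J : Finset ι) (ω : Sym2 ι → Bool) (lam : ℝ),
    Disjoint Q T → I ⊆ T → J ⊆ T → lam ≤ |per ω I J| →
    av (fun ω' => ind (¬ ∃ W ⊆ Q, #W = c ∧ lam ≤ |per (mix (ins T) ω ω') (I ∪ W) (J ∪ W)|)) ≤
      2 ^ c * (3 / 4) ^ #Q := by
  induction Q using Finset.induction_on with
  | empty =>
    intro c T I J ω lam _ _ _ _
    refine (av_ind_le_one _).trans ?_
    rw [Finset.card_empty, pow_zero, mul_one]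
    exact one_le_pow₀ (by norm_num)
  | insert w Q hw ih =>
    intro c T I J ω lam hQ hI hJ hlam
    have hwT : w ∉ T := Finset.disjoint_left.1 hQ (Finset.mem_insert_self w Q)
    have hQT : Disjoint Q (insert w T) := by
      rw [Finset.disjoint_insert_right]
      exact ⟨hw, hQ.mono_left (Finset.subset_insert _ _)⟩
    rcases Nat.eq_zero_or_pos c with hc | hc
    · have : ∀ ω', ind (¬ ∃ W ⊆ insert w Q, #W = c ∧
          lam ≤ |per (mix (ins T) ω ω') (I ∪ W) (J ∪ W)|) = 0 := by
        intro ω'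
        refine ind_false (not_not.2 ⟨∅, by simp, by simp [hc], ?_⟩)
        rw [Finset.union_empty, Finset.union_empty,
          per_congr_ins (fun e he => mix_of_mem he ω ω') hI hJ]
        exact hlam
      simp_rw [this]
      rw [av_const]
      positivity
    · obtain ⟨c, rfl⟩ : ∃ c', c = c' + 1 := ⟨c - 1, by omega⟩
      have hwI : w ∉ I := fun h => hwT (hI h)
      have hwJ : w ∉ J := fun h => hwT (hJ h)
      have hG : 1 / 2 ≤ av (fun ω' => ind (lam ≤
          |per (mix (ins T) ω ω') (insert w I) (insert w J)|)) := by
        rw [av_update s(w, w)]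
        refine le_av_of_le fun ω' => ?_
        have hws : s(w, w) ∉ ins T := fun h => hwT (mem_ins.1 h).1
        rw [mix_update hws, mix_update hws]
        set η := mix (ins T) ω ω' with hη
        have hne : ∀ p ∈ I, ∀ q ∈ J, s(p, q) ≠ s(w, w) := by
          intro p hp q hq h
          rcases Sym2.eq_iff.1 h with h | h <;> exact hwI (h.1 ▸ hp)
        obtain ⟨r, hr⟩ : ∃ r, ∀ s, per (Function.update η s(w, w) s) (insert w I) (insert w J) =
            rad s * per ω I J + r := by
          refine ⟨∑ q ∈ J, ∑ p ∈ I, ent η w q * ent η p w * per η (I.erase p) (J.erase q),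
            fun s => ?_⟩
          unfold per
          rw [pm_double _ hwI hwJ]
          congr 1
          · congr 1
            · simp [ent]
            · change per _ I J = per ω I J
              rw [per_update hne]
              exact per_congr_ins (fun e he => mix_of_mem he ω ω') hI hJ
          · refine Finset.sum_congr rfl fun q hq => Finset.sum_congr rfl fun p hp => ?_
            have hq' : q ≠ w := fun h => hwJ (h ▸ hq)
            have hp' : p ≠ w := fun h => hwI (h ▸ hp)
            congr 1
            · unfold ent
              rw [Function.update_of_ne (by simp [hq']), Function.update_of_ne (by simp [hp'])]
            · exact per_update fun p hp q hq => hne p (Finset.mem_of_mem_erase hp) q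
                (Finset.mem_of_mem_erase hq)
        rw [hr, hr, rad_true, rad_false]
        have hn1 := ind_nonneg (lam ≤ |1 * per ω I J + r|)
        have hn2 := ind_nonneg (lam ≤ |-1 * per ω I J + r|)
        by_cases h1 : lam ≤ |1 * per ω I J + r|
        · rw [ind_true h1]; linarith
        · have h2 : lam ≤ |-1 * per ω I J + r| := by
            by_contra h2
            rw [not_le, abs_lt] at h1 h2
            rcases abs_cases (per ω I J) with h | h <;> linarith [h1.1, h1.2, h2.1, h2.2]
          rw [ind_true h2]; linarith
      have hpos : (0 : ℝ) ≤ 2 ^ c * (3 / 4) ^ #Q := by positivity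
      have := av_idle (ins_mono (Finset.subset_insert w T)) ω
        (G := fun η => lam ≤ |per η (insert w I) (insert w J)|)
        (H := fun η => ∃ W ⊆ insert w Q, #W = c + 1 ∧ lam ≤ |per η (I ∪ W) (J ∪ W)|)
        (a := 2 ^ c * (3 / 4) ^ #Q) (b := 2 ^ (c + 1) * (3 / 4) ^ #Q) (c := 1 / 2)
        (by rw [pow_succ]; linarith) hG ?_ ?_
      · refine this.trans (le_of_eq ?_)
        rw [Finset.card_insert_of_notMem hw]
        ring
      · intro η _ hη
        refine le_trans (av_mono fun ω'' => ind_mono ?_) (ih c (insert w T) (insert w I)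
          (insert w J) η lam hQT (Finset.insert_subset_insert _ hI)
          (Finset.insert_subset_insert _ hJ) hη)
        rintro h ⟨W, h1, h2, h3⟩
        refine h ⟨insert w W, Finset.insert_subset_insert _ h1, ?_, ?_⟩
        · rw [Finset.card_insert_of_notMem (fun h => hw (h1 h)), h2]
        · rw [Finset.union_insert, Finset.union_insert, ← Finset.insert_union,
            ← Finset.insert_union]
          exact h3
      · intro η hη
        refine le_trans (av_mono fun ω'' => ind_mono ?_) (ih (c + 1) (insert w T) I J η lam hQT
          (hI.trans (Finset.subset_insert _ _)) (hJ.trans (Finset.subset_insert _ _))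
          (by rw [per_congr_ins hη hI hJ]; exact hlam))
        rintro h ⟨W, h1, h2, h3⟩
        exact h ⟨W, h1.trans (Finset.subset_insert _ _), h2, h3⟩

/-- From a large permanent of an almost full square submatrix of the principal submatrix `T` to a
large permanent of a principal submatrix that misses exactly `2 * r` indices, all of them in a
prescribed set of bounded size. -/
lemma few_missing {T Q F₁ F₂ I J : Finset ι} (ω : Sym2 ι → Bool) {lam : ℝ} {d x r : ℕ}
    (hI : I ⊆ T) (hJ : J ⊆ T) (hc : #I = #J) (hd : #T ≤ #I + d) (h0 : 0 ≤ lam)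
    (hlam : lam * (3 / 2) ^ d ≤ |per ω I J|) (hQ : Disjoint Q T) (hF₁ : Disjoint F₁ (T ∪ Q))
    (hF₂ : Disjoint F₂ (T ∪ Q ∪ F₁)) (hQc : 17 * d + 4 * x + 2 * r + 3 ≤ #Q)
    (hF₁c : #F₁ = 128 * r) (hF₂c : #F₂ = 124 * r) :
    av (fun ω' => ind (¬ ∃ Z ⊆ F₁ ∪ F₂, #Z = 2 * r ∧ lam ≤ |per (mix (ins T) ω ω')
      ((T ∪ Q ∪ F₁ ∪ F₂) \ Z) ((T ∪ Q ∪ F₁ ∪ F₂) \ Z)|)) ≤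
      8 * (3 / 4) ^ x + (7 / 8) ^ x + 32 * (15 / 16) ^ (r + 1) + 2 ^ r * (31 / 32) ^ (64 * r) := by
  set R := #(I \ J) with hR
  have hcu : #I + R ≤ #T := by
    have h1 : #(I ∪ J) ≤ #T := Finset.card_le_card (Finset.union_subset hI hJ)
    have h2 : #(I ∪ J) = #J + #(I \ J) := by
      rw [Finset.union_comm, Finset.card_union, Finset.card_sdiff]
      have := Finset.card_le_card (Finset.inter_subset_right : J ∩ I ⊆ I)
      rw [Finset.inter_comm] at this
      have h3 : #(J ∩ I) = #(I ∩ J) := by rw [Finset.inter_comm]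
      omega
    omega
  have hRd : R ≤ d := by omega
  obtain ⟨c, m, hc4, hcm⟩ : ∃ c m : ℕ, c ≤ 3 ∧ #Q + #T = 2 * r + #I + c + 2 * R + 4 * m :=
    ⟨(#Q + #T - (2 * r + #I + 2 * R)) % 4, (#Q + #T - (2 * r + #I + 2 * R)) / 4, by omega, by omega⟩
  obtain ⟨Q₀, hQ₀, hQ₀c⟩ := Finset.exists_subset_card_eq (show x ≤ #Q by omega)
  have hQ1 : #(Q \ Q₀) = #Q - x := by rw [Finset.card_sdiff_of_subset hQ₀, hQ₀c]
  obtain ⟨Q₂, hQ₂, hQ₂c⟩ := Finset.exists_subset_card_eq (show #Q - x - 2 * m ≤ #(Q \ Q₀) by omega)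
  set Q₃ := (Q \ Q₀) \ Q₂ with hQ₃
  have hQ₃c : #Q₃ = 2 * m := by
    rw [hQ₃, Finset.card_sdiff_of_subset hQ₂, hQ1, hQ₂c]; omega
  have hQ₂' : Q₂ ⊆ Q := hQ₂.trans Finset.sdiff_subset
  have hQ₃' : Q₃ ⊆ Q := Finset.sdiff_subset.trans Finset.sdiff_subset
  have hd0 : Disjoint Q₀ T := hQ.mono_left hQ₀
  have hd2 : Disjoint Q₂ (T ∪ Q₀) := by
    rw [Finset.disjoint_union_right]
    exact ⟨hQ.mono_left hQ₂', Finset.sdiff_disjoint.mono_left hQ₂⟩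
  have hd3 : Disjoint Q₃ (T ∪ Q₀ ∪ Q₂) := by
    rw [Finset.disjoint_union_right, Finset.disjoint_union_right]
    exact ⟨⟨hQ.mono_left hQ₃', Finset.sdiff_disjoint.mono_left Finset.sdiff_subset⟩,
      Finset.sdiff_disjoint⟩
  have hQQ : T ∪ Q₀ ∪ Q₂ ∪ Q₃ = T ∪ Q := by
    rw [Finset.union_assoc, Finset.union_assoc, hQ₃, Finset.union_sdiff_of_subset hQ₂,
      Finset.union_sdiff_of_subset hQ₀]
  have hF12 : Disjoint F₁ F₂ := (hF₂.mono_right Finset.subset_union_right).symm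
  set H : (Sym2 ι → Bool) → Prop := fun η => ∃ Z ⊆ F₁ ∪ F₂, #Z = 2 * r ∧ lam ≤ |per η
      ((T ∪ Q ∪ F₁ ∪ F₂) \ Z) ((T ∪ Q ∪ F₁ ∪ F₂) \ Z)| with hH
  set q : ℝ := 16 * (15 / 16) ^ (r + 1) with hq
  have hq0 : 0 ≤ q := by positivity
  have hshr : ∀ m', 16 * (15 / 16 : ℝ) ^ (2 * r / 2 + 1) * (1 - (15 / 16) ^ m') ≤ q := by
    intro m'
    rw [hq, show 2 * r / 2 = r by omega]
    have : (0 : ℝ) ≤ (15 / 16) ^ m' := by positivity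
    have h2 : (0 : ℝ) ≤ 16 * (15 / 16) ^ (r + 1) := by positivity
    nlinarith
  -- the last step, from `126 * r` unused indices in `F₁` to `2 * r`
  have step4 : ∀ η Z, Z ⊆ F₁ → #Z = 126 * r →
      lam ≤ |per η ((T ∪ Q ∪ F₁) \ Z) ((T ∪ Q ∪ F₁) \ Z)| →
      av (fun ω' => ind (¬ H (mix (ins (T ∪ Q ∪ F₁)) η ω'))) ≤ q := by
    intro η Z hZ hZc hη
    refine (le_trans (av_mono fun ω'' => ind_mono ?_) (shrink (2 * r) (62 * r) (T ∪ Q ∪ F₁) Z F₂ η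
      lam (hZ.trans Finset.subset_union_right) hF₂ (by omega) (by omega) hη)).trans (hshr _)
    rintro h ⟨Z', h1, h2, h3⟩
    exact h ⟨Z', (h1.trans hZ).trans Finset.subset_union_left, h2, h3⟩
  have step3 : ∀ η Z, Z ⊆ T ∪ Q → #Z = 2 * r → lam ≤ |per η ((T ∪ Q) \ Z) ((T ∪ Q) \ Z)| →
      av (fun ω' => ind (¬ H (mix (ins (T ∪ Q)) η ω'))) ≤ 2 ^ r * (31 / 32) ^ (64 * r) + q := by
    intro η Z hZ hZc hη
    refine av_chain (S' := ins (T ∪ Q ∪ F₁)) (ins_mono Finset.subset_union_left) η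
      (G := fun η' => ∃ Z' ⊆ ∅ ∪ F₁,
      #Z' + 2 * r = #(∅ : Finset ι) + 2 * (64 * r) ∧
      lam ≤ |per η' ((T ∪ Q ∪ F₁) \ Z') ((T ∪ Q ∪ F₁) \ Z')|) hq0 (clear (64 * r) r (T ∪ Q) Z ∅ F₁ η lam
      hZ (by simp) (by simp) hF₁ (by omega) (by omega) (by rw [Finset.union_empty]; exact hη)) ?_
    rintro η' _ ⟨Z', h1, h2, h3⟩
    exact step4 η' Z' (by simpa using h1) (by simp at h2; omega) h3
  have step2 : ∀ η A, A ⊆ T ∪ Q₀ ∪ Q₂ → #A = #I + c + 2 * R → lam ≤ |per η A A| →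
      av (fun ω' => ind (¬ H (mix (ins (T ∪ Q₀ ∪ Q₂)) η ω'))) ≤
        q + (2 ^ r * (31 / 32) ^ (64 * r) + q) := by
    intro η A hA hAc hη
    have hTc : #(T ∪ Q₀ ∪ Q₂) = #T + x + (#Q - x - 2 * m) := by
      rw [Finset.card_union_of_disjoint hd2.symm, Finset.card_union_of_disjoint hd0.symm, hQ₀c, hQ₂c]
    have h1 := shrink (2 * r) m (T ∪ Q₀ ∪ Q₂) ((T ∪ Q₀ ∪ Q₂) \ A) Q₃ η lam Finset.sdiff_subset hd3
      hQ₃c (by rw [Finset.card_sdiff_of_subset hA, hTc, hAc]; omega)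
      (by rw [Finset.sdiff_sdiff_eq_self hA]; exact hη)
    rw [hQQ] at h1
    refine av_chain (S' := ins (T ∪ Q)) (ins_mono (by rw [← hQQ]; exact Finset.subset_union_left)) η
      (G := fun η' => ∃ Z' ⊆ (T ∪ Q₀ ∪ Q₂) \ A, #Z' = 2 * r ∧
        lam ≤ |per η' ((T ∪ Q) \ Z') ((T ∪ Q) \ Z')|) (H := H) (by positivity) (h1.trans (hshr m)) ?_
    rintro η' _ ⟨Z', h1, h2, h3⟩
    refine step3 η' Z' (h1.trans (Finset.sdiff_subset.trans ?_)) h2 h3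
    rw [← hQQ]; exact Finset.subset_union_left
  have hpow : 2 ^ R * (7 / 8 : ℝ) ^ #Q₂ ≤ (7 / 8) ^ x := by
    have h1 : (7 / 8 : ℝ) ^ #Q₂ ≤ (7 / 8) ^ (8 * R + x) :=
      pow_le_pow_of_le_one (by norm_num) (by norm_num) (by omega)
    calc 2 ^ R * (7 / 8 : ℝ) ^ #Q₂ ≤ 2 ^ R * (7 / 8) ^ (8 * R + x) := by gcongr
      _ = (2 * (7 / 8) ^ 8) ^ R * (7 / 8) ^ x := by rw [pow_add, pow_mul, mul_pow]; ring
      _ ≤ 1 * (7 / 8) ^ x := by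
          gcongr
          exact pow_le_one₀ (by norm_num) (by norm_num)
      _ = _ := one_mul _
  have step1 : ∀ η W, W ⊆ Q₀ → #W = c → lam * (3 / 2) ^ d ≤ |per η (I ∪ W) (J ∪ W)| →
      av (fun ω' => ind (¬ H (mix (ins (T ∪ Q₀)) η ω'))) ≤
        (7 / 8) ^ x + (q + (2 ^ r * (31 / 32) ^ (64 * r) + q)) := by
    intro η W hW hWc hη
    have hWI : Disjoint I W := (hd0.mono hW hI).symm
    have hWJ : Disjoint J W := (hd0.mono hW hJ).symm
    have hsd : (I ∪ W) \ (J ∪ W) = I \ J := by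
      ext y
      have hy : y ∈ W → y ∉ I := fun h h' => Finset.disjoint_left.1 hWI h' h
      simp only [Finset.mem_sdiff, Finset.mem_union]
      tauto
    have h1 := cancel Q₂ (T ∪ Q₀) (I ∪ W) (J ∪ W) η lam hd2 (Finset.union_subset_union hI hW)
      (Finset.union_subset_union hJ hW) (by
        rw [Finset.card_union_of_disjoint hWI, Finset.card_union_of_disjoint hWJ, hc]) (by
        rw [hsd]
        refine le_trans ?_ hη
        gcongr
        norm_num) h0
    rw [hsd, Finset.card_union_of_disjoint hWI, hWc] at h1
    refine av_chain (S' := ins (T ∪ Q₀ ∪ Q₂)) (ins_mono Finset.subset_union_left) η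
      (G := fun η' => ∃ A ⊆ T ∪ Q₀ ∪ Q₂,
      #A = #I + c + 2 * R ∧ lam ≤ |per η' A A|) (H := H) (by positivity) (h1.trans hpow) ?_
    rintro η' _ ⟨A, h1, h2, h3⟩
    exact step2 η' A h1 h2 h3
  have h1 := diag Q₀ c T I J ω _ hd0 hI hJ hlam
  have h2 : (2 : ℝ) ^ c * (3 / 4) ^ #Q₀ ≤ 8 * (3 / 4) ^ x := by
    rw [hQ₀c]
    have : (2 : ℝ) ^ c ≤ 2 ^ 3 := pow_le_pow_right₀ (by norm_num) hc4
    have h3 : (0 : ℝ) ≤ (3 / 4) ^ x := by positivity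
    nlinarith
  refine (av_chain (S' := ins (T ∪ Q₀)) (ins_mono Finset.subset_union_left) ω
    (G := fun η => ∃ W ⊆ Q₀, #W = c ∧
    lam * (3 / 2) ^ d ≤ |per η (I ∪ W) (J ∪ W)|) (by positivity) (h1.trans h2)
    (H := H) (q := (7 / 8) ^ x + (q + (2 ^ r * (31 / 32) ^ (64 * r) + q))) ?_).trans (le_of_eq ?_)
  · rintro η _ ⟨W, h1, h2, h3⟩
    exact step1 η W h1 h2 h3
  · rw [hq]; ring

end Constant

/-! ### Gaining a factor with a batch of new columns -/

section Forms

variable {E κ : Type*} [Fintype E] [DecidableEq E]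

lemma sum_update_insert [DecidableEq κ] {e : κ → E} (he : Function.Injective e) {D : Finset κ}
    {d₀ : κ} (hd : d₀ ∉ D) (b : κ → ℝ) (x : E → Bool) (s : Bool) :
    ∑ d ∈ insert d₀ D, b d * rad (Function.update x (e d₀) s (e d)) =
      b d₀ * rad s + ∑ d ∈ D, b d * rad (x (e d)) := by
  rw [Finset.sum_insert hd, Function.update_self]
  congr 1
  refine Finset.sum_congr rfl fun d hdD => ?_
  have hne : d ≠ d₀ := fun h => hd (h ▸ hdD)
  rw [Function.update_of_ne (fun h => hne (he h))]

/-- The second moment of an affine form in random signs. -/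
lemma form_second [DecidableEq κ] {e : κ → E} (he : Function.Injective e) (D : Finset κ) (a : ℝ)
    (b : κ → ℝ) :
    av (fun x : E → Bool => (a + ∑ d ∈ D, b d * rad (x (e d))) ^ 2) = a ^ 2 + ∑ d ∈ D, b d ^ 2 := by
  induction D using Finset.induction_on with
  | empty => simp [av_const]
  | insert d₀ D hd ih =>
    rw [av_update (e d₀)]
    simp_rw [sum_update_insert he hd, rad_true, rad_false]
    rw [Finset.sum_insert hd]
    have : ∀ x : E → Bool, ((a + (b d₀ * 1 + ∑ d ∈ D, b d * rad (x (e d)))) ^ 2 +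
        (a + (b d₀ * -1 + ∑ d ∈ D, b d * rad (x (e d)))) ^ 2) / 2 =
        (a + ∑ d ∈ D, b d * rad (x (e d))) ^ 2 + b d₀ ^ 2 := by intro x; ring
    simp_rw [this]
    rw [av_add, av_const, ih]
    ring

/-- The mixed fourth moment of two linear forms in random signs. -/
lemma form_fourth [DecidableEq κ] {e : κ → E} (he : Function.Injective e) (D : Finset κ) (a a' : ℝ)
    (b b' : κ → ℝ) :
    av (fun x : E → Bool => (a + ∑ d ∈ D, b d * rad (x (e d))) ^ 2 *
      (a' + ∑ d ∈ D, b' d * rad (x (e d))) ^ 2) ≤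
      3 * ((a ^ 2 + ∑ d ∈ D, b d ^ 2) * (a' ^ 2 + ∑ d ∈ D, b' d ^ 2)) := by
  induction D using Finset.induction_on with
  | empty =>
    simp only [Finset.sum_empty, add_zero, av_const]
    nlinarith [mul_nonneg (sq_nonneg a) (sq_nonneg a')]
  | insert d₀ D hd ih =>
    rw [av_update (e d₀)]
    simp_rw [sum_update_insert he hd, rad_true, rad_false]
    rw [Finset.sum_insert hd, Finset.sum_insert hd]
    set X : (E → Bool) → ℝ := fun x => a + ∑ d ∈ D, b d * rad (x (e d)) with hX
    set Y : (E → Bool) → ℝ := fun x => a' + ∑ d ∈ D, b' d * rad (x (e d)) with hY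
    have hX2 : av (fun x => X x ^ 2) = a ^ 2 + ∑ d ∈ D, b d ^ 2 := form_second he D a b
    have hY2 : av (fun x => Y x ^ 2) = a' ^ 2 + ∑ d ∈ D, b' d ^ 2 := form_second he D a' b'
    have hpt : ∀ x : E → Bool, ((a + (b d₀ * 1 + ∑ d ∈ D, b d * rad (x (e d)))) ^ 2 *
        (a' + (b' d₀ * 1 + ∑ d ∈ D, b' d * rad (x (e d)))) ^ 2 +
        (a + (b d₀ * -1 + ∑ d ∈ D, b d * rad (x (e d)))) ^ 2 *
        (a' + (b' d₀ * -1 + ∑ d ∈ D, b' d * rad (x (e d)))) ^ 2) / 2 ≤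
        X x ^ 2 * Y x ^ 2 + (3 * b d₀ ^ 2) * Y x ^ 2 + (3 * b' d₀ ^ 2) * X x ^ 2 +
          b d₀ ^ 2 * b' d₀ ^ 2 := by
      intro x
      have h1 : a + (b d₀ * 1 + ∑ d ∈ D, b d * rad (x (e d))) = X x + b d₀ := by
        simp only [hX]; ring
      have h2 : a + (b d₀ * -1 + ∑ d ∈ D, b d * rad (x (e d))) = X x - b d₀ := by
        simp only [hX]; ring
      have h3 : a' + (b' d₀ * 1 + ∑ d ∈ D, b' d * rad (x (e d))) = Y x + b' d₀ := by
        simp only [hY]; ring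
      have h4 : a' + (b' d₀ * -1 + ∑ d ∈ D, b' d * rad (x (e d))) = Y x - b' d₀ := by
        simp only [hY]; ring
      rw [h1, h2, h3, h4]
      nlinarith [sq_nonneg (b d₀ * Y x - b' d₀ * X x)]
    refine (av_mono hpt).trans ?_
    rw [av_add, av_add, av_add, av_const, av_mul_left, av_mul_left, hX2, hY2]
    have : av (fun x => X x ^ 2 * Y x ^ 2) ≤
      3 * ((a ^ 2 + ∑ d ∈ D, b d ^ 2) * (a' ^ 2 + ∑ d ∈ D, b' d ^ 2)) := ih
    nlinarith [mul_nonneg (sq_nonneg (b d₀)) (sq_nonneg (b' d₀))]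

end Forms

/-- A Paley-Zygmund inequality. -/
lemma paley {α : Type*} [Fintype α] [Nonempty α] {f : α → ℝ} (hf : ∀ a, 0 ≤ f a)
    (h2 : av (fun a => f a ^ 2) ≤ 3 * av f ^ 2) {m : ℝ} (hm : m ≤ av f) :
    1 / 12 ≤ av (fun a => ind (m / 2 ≤ f a)) := by
  have h0 : 0 ≤ av f := av_nonneg hf
  rcases h0.eq_or_lt with h | h
  · refine le_av_of_le fun a => ?_
    rw [ind_true (by linarith [hf a])]; norm_num
  · set u := av f with hu
    have h1 : u ≤ av (fun a => u / 2 + (f a ^ 2 / (12 * u) + 3 * u * ind (m / 2 ≤ f a))) := by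
      rw [hu]
      refine av_mono fun a => ?_
      rw [← hu]
      by_cases ha : m / 2 ≤ f a
      · rw [ind_true ha]
        have : 0 ≤ (f a - 6 * u) ^ 2 / (12 * u) := by positivity
        have h3 : (f a - 6 * u) ^ 2 / (12 * u) = f a ^ 2 / (12 * u) - f a + 3 * u := by
          field_simp; ring
        linarith
      · rw [ind_false ha]
        have : 0 ≤ f a ^ 2 / (12 * u) := by positivity
        linarith
    rw [av_add, av_add, av_const, av_mul_left] at h1
    simp_rw [div_eq_mul_inv _ (12 * u)] at h1
    rw [av_mul_right] at h1
    have h3 : av (fun a => f a ^ 2) * (12 * u)⁻¹ ≤ u / 4 := by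
      calc _ ≤ 3 * u ^ 2 * (12 * u)⁻¹ := by gcongr
        _ = u / 4 := by field_simp; norm_num
    nlinarith

lemma sum_powersetCard_erase {ι : Type*} [DecidableEq ι] (D : Finset ι) (k : ℕ)
    (g : Finset ι → ℝ) : ∑ K ∈ D.powersetCard (k + 1), ∑ d ∈ K, g (K.erase d) =
      ((#D : ℝ) - k) * ∑ K ∈ D.powersetCard k, g K := by
  rw [Finset.mul_sum]
  have h1 : ∀ K ∈ D.powersetCard k, ((#D : ℝ) - k) * g K = ∑ _d ∈ D \ K, g K := by
    intro K hK
    rw [Finset.mem_powersetCard] at hK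
    rw [Finset.sum_const, Finset.card_sdiff_of_subset hK.1, nsmul_eq_mul, hK.2,
      Nat.cast_sub (hK.2 ▸ Finset.card_le_card hK.1)]
  rw [Finset.sum_congr rfl h1, Finset.sum_sigma', Finset.sum_sigma']
  refine Finset.sum_bij' (fun p _ => ⟨p.1.erase p.2, p.2⟩) (fun p _ => ⟨insert p.2 p.1, p.2⟩)
    ?_ ?_ ?_ ?_ ?_
  · rintro ⟨K, d⟩ h
    simp only [Finset.mem_sigma, Finset.mem_powersetCard] at h ⊢
    obtain ⟨⟨h1, h2⟩, h3⟩ := h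
    refine ⟨⟨(Finset.erase_subset _ _).trans h1, ?_⟩, by simp [h1 h3]⟩
    rw [Finset.card_erase_of_mem h3, h2]; rfl
  · rintro ⟨K, d⟩ h
    simp only [Finset.mem_sigma, Finset.mem_powersetCard, Finset.mem_sdiff] at h ⊢
    obtain ⟨⟨h1, h2⟩, h3, h4⟩ := h
    exact ⟨⟨Finset.insert_subset h3 h1, by rw [Finset.card_insert_of_notMem h4, h2]⟩, by simp⟩
  · rintro ⟨K, d⟩ h
    simp only [Finset.mem_sigma] at h
    simp [Finset.insert_erase h.2]
  · rintro ⟨K, d⟩ h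
    simp only [Finset.mem_sigma, Finset.mem_sdiff] at h
    simp [Finset.erase_insert h.2.2]
  · rintro ⟨K, d⟩ _
    rfl

/-! ### One stage of growth -/

section Stage

variable {ι : Type*} [Fintype ι] [DecidableEq ι]

/-- The sum of the squared permanents with row set `I` and column set `J ∪ K`, over the `k`-element
subsets `K` of `D`. -/
noncomputable def psi (D J : Finset ι) (k : ℕ) (ω : Sym2 ι → Bool) (I : Finset ι) : ℝ :=
  ∑ K ∈ D.powersetCard k, per ω I (J ∪ K) ^ 2

/-- The pairs that do not join an element of `B` to an element of `D`. -/
def offB (D B : Finset ι) : Set (Sym2 ι) := {e | ∀ w ∈ B, ∀ d ∈ D, e ≠ s(w, d)}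

lemma psi_nonneg (D J : Finset ι) (k : ℕ) (ω : Sym2 ι → Bool) (I : Finset ι) :
    0 ≤ psi D J k ω I := Finset.sum_nonneg fun _ _ => sq_nonneg _

lemma psi_congr {D J I : Finset ι} {k : ℕ} {ω ω' : Sym2 ι → Bool}
    (h1 : ∀ i ∈ I, ∀ j ∈ J, ω s(i, j) = ω' s(i, j))
    (h2 : ∀ i ∈ I, ∀ j ∈ D, ω s(i, j) = ω' s(i, j)) : psi D J k ω I = psi D J k ω' I := by
  unfold psi
  refine Finset.sum_congr rfl fun K hK => ?_
  rw [Finset.mem_powersetCard] at hK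
  rw [per_congr]
  intro i hi j hj
  rcases Finset.mem_union.1 hj with h | h
  · exact h1 i hi j h
  · exact h2 i hi j (hK.1 h)

/-- A new row increases the sum of squares by the factor `γ` with probability at least `1 / 12`. -/
lemma stage_step {S : Set (Sym2 ι)} (ω : Sym2 ι → Bool) {T D I J : Finset ι} {w : ι} {k : ℕ}
    (hI : I ⊆ T) (hJ : J ⊆ T) (hD : Disjoint D T) (hw : w ∈ T) (hwI : w ∉ I) (hS : ins T ⊆ S)
    (hSI : ∀ i ∈ I, ∀ d ∈ D, s(i, d) ∈ S) (hSw : ∀ d ∈ D, s(w, d) ∉ S) {ν γ : ℝ}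
    (hν : ν ≤ psi D J k ω I) (hγ0 : 0 ≤ γ) (hγ : 2 * γ ≤ (#D : ℝ) - k) :
    1 / 12 ≤ av (fun ω' => ind (ν * γ ≤ psi D J (k + 1) (mix S ω ω') (insert w I))) := by
  have hDJ : ∀ d ∈ D, d ∉ J := fun d hd hj => Finset.disjoint_left.1 hD hd (hJ hj)
  have he : Function.Injective (fun d : ι => s(w, d)) := by
    intro a b h
    exact Sym2.congr_right.1 h
  set c : Finset ι → ℝ := fun K => ∑ j ∈ J, ent ω w j * per ω I ((J ∪ K).erase j) with hc
  set b : Finset ι → ι → ℝ := fun K d => if d ∈ K then per ω I (J ∪ K.erase d) else 0 with hb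
  set v : Finset ι → ℝ := fun K => c K ^ 2 + ∑ d ∈ D, b K d ^ 2 with hv
  have hval : ∀ ω', ∀ K ∈ D.powersetCard (k + 1), per (mix S ω ω') (insert w I) (J ∪ K) =
      c K + ∑ d ∈ D, b K d * rad (ω' s(w, d)) := by
    intro ω' K hK
    rw [Finset.mem_powersetCard] at hK
    have hdis : Disjoint J K := Finset.disjoint_left.2 fun x hx hxK => hDJ x (hK.1 hxK) hx
    have hpI : ∀ X ⊆ J ∪ K, per (mix S ω ω') I X = per ω I X := by
      intro X hX
      refine per_congr fun i hi j hj => mix_of_mem ?_ _ _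
      rcases Finset.mem_union.1 (hX hj) with h | h
      · exact hS (mem_ins.2 ⟨hI hi, hJ h⟩)
      · exact hSI i hi j (hK.1 h)
    unfold per
    rw [pm_row _ hwI, Finset.sum_union hdis]
    congr 1
    · refine Finset.sum_congr rfl fun j hj => ?_
      have h1 := hpI _ (Finset.erase_subset j (J ∪ K))
      unfold per at h1
      rw [h1]
      unfold ent per
      rw [mix_of_mem (hS (mem_ins.2 ⟨hw, hJ hj⟩))]
      rfl
    · rw [← Finset.sum_subset hK.1 (fun d _ hd => by simp [hb, hd])]
      refine Finset.sum_congr rfl fun d hd => ?_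
      have h1 := hpI _ (Finset.erase_subset d (J ∪ K))
      have h2 : (J ∪ K).erase d = J ∪ K.erase d := by
        rw [Finset.erase_union_distrib, Finset.erase_eq_of_notMem (hDJ d (hK.1 hd))]
      unfold per at h1
      rw [h1, h2]
      unfold ent
      rw [mix_of_notMem (hSw d (hK.1 hd))]
      simp [hb, hd, per, mul_comm]
      left; rfl
  have hf : ∀ ω', psi D J (k + 1) (mix S ω ω') (insert w I) =
      ∑ K ∈ D.powersetCard (k + 1), (c K + ∑ d ∈ D, b K d * rad (ω' s(w, d))) ^ 2 := by
    intro ω'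
    unfold psi
    exact Finset.sum_congr rfl fun K hK => by rw [hval ω' K hK]
  have hav : av (fun ω' => psi D J (k + 1) (mix S ω ω') (insert w I)) =
      ∑ K ∈ D.powersetCard (k + 1), v K := by
    simp_rw [hf]
    rw [av_sum]
    exact Finset.sum_congr rfl fun K _ => form_second he D _ _
  have hlow : ((#D : ℝ) - k) * psi D J k ω I ≤ ∑ K ∈ D.powersetCard (k + 1), v K := by
    unfold psi
    rw [← sum_powersetCard_erase]
    refine Finset.sum_le_sum fun K hK => ?_
    rw [Finset.mem_powersetCard] at hK
    have : ∑ d ∈ D, b K d ^ 2 = ∑ d ∈ K, per ω I (J ∪ K.erase d) ^ 2 := by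
      rw [← Finset.sum_subset hK.1 (fun d _ hd => by simp [hb, hd])]
      exact Finset.sum_congr rfl fun d hd => by simp [hb, hd]
    simp only [hv]
    rw [this]
    nlinarith [sq_nonneg (c K)]
  have hp := paley (f := fun ω' => psi D J (k + 1) (mix S ω ω') (insert w I)) (m := 2 * (ν * γ))
    (fun _ => psi_nonneg _ _ _ _ _) ?_ ?_
  · refine hp.trans (av_mono fun ω' => ind_mono fun h => ?_)
    linarith
  · rw [hav]
    have hexp : ∀ ω' : Sym2 ι → Bool, psi D J (k + 1) (mix S ω ω') (insert w I) ^ 2 =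
        ∑ K ∈ D.powersetCard (k + 1), ∑ K' ∈ D.powersetCard (k + 1),
          (c K + ∑ d ∈ D, b K d * rad (ω' s(w, d))) ^ 2 *
          (c K' + ∑ d ∈ D, b K' d * rad (ω' s(w, d))) ^ 2 := by
      intro ω'
      rw [hf, sq, Finset.sum_mul_sum]
    simp_rw [hexp]
    rw [av_sum]
    simp_rw [av_sum]
    calc _ ≤ ∑ K ∈ D.powersetCard (k + 1), ∑ K' ∈ D.powersetCard (k + 1), 3 * (v K * v K') :=
          Finset.sum_le_sum fun K _ => Finset.sum_le_sum fun K' _ => form_fourth he D _ _ _ _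
      _ = _ := by
          simp_rw [← Finset.mul_sum]
          rw [sq, Finset.sum_mul]
  · rw [hav]
    refine le_trans ?_ hlow
    have h1 := psi_nonneg D J k ω I
    have h2 := mul_le_mul_of_nonneg_right hγ h1
    have h3 := mul_le_mul_of_nonneg_right hν hγ0
    nlinarith

lemma offB_ins {T D B : Finset ι} (hD : Disjoint D T) : ins T ⊆ offB D B := by
  intro e he w _ d hd h
  subst h
  exact Finset.disjoint_left.1 hD hd (mem_ins.1 he).2

lemma offB_mem {T D B I : Finset ι} (hD : Disjoint D T) (hI : I ⊆ T) (hB : Disjoint B I) {i d : ι}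
    (hi : i ∈ I) (_hd : d ∈ D) : s(i, d) ∈ offB D B := by
  intro w hw d' hd' h
  rw [Sym2.eq_iff] at h
  rcases h with h | h
  · exact Finset.disjoint_left.1 hB hw (h.1 ▸ hi)
  · exact Finset.disjoint_left.1 hD hd' (h.1 ▸ hI hi)

/-- The rows in `B` are tried one after the other until `r` of them have been added to `I`. -/
lemma stage_batch {T D J : Finset ι} (hJ : J ⊆ T) (hD : Disjoint D T) {m : ℕ} {γ : ℝ} (hγ0 : 0 ≤ γ)
    (hγ : 2 * γ ≤ (#D : ℝ) - m) (B : Finset ι) : ∀ (I : Finset ι) (ω : Sym2 ι → Bool) (k r : ℕ)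
    (ν : ℝ), B ⊆ T → I ⊆ T → Disjoint B I → k + r = m → 0 ≤ ν → ν ≤ psi D J k ω I →
    av (fun ω' => ind (¬ ∃ I' ⊆ I ∪ B, #I' = #I + r ∧ ν * γ ^ r ≤
      psi D J m (mix (offB D B) ω ω') I')) ≤ 2 ^ r * (23 / 24) ^ #B := by
  induction B using Finset.induction_on with
  | empty =>
    intro I ω k r ν _ _ _ _ _ _
    refine (av_ind_le_one _).trans ?_
    simpa using one_le_pow₀ (by norm_num : (1 : ℝ) ≤ 2)
  | insert w B hwB ih =>
    intro I ω k r ν hBT hIT hBI hk hν0 hν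
    have hBT' : B ⊆ T := (Finset.subset_insert _ _).trans hBT
    have hwT : w ∈ T := hBT (Finset.mem_insert_self _ _)
    have hwI : w ∉ I := Finset.disjoint_left.1 hBI (Finset.mem_insert_self _ _)
    have hBI' : Disjoint B I := Finset.disjoint_of_subset_left (Finset.subset_insert _ _) hBI
    have hSI : ∀ i ∈ I, ∀ d ∈ D, s(i, d) ∈ offB D (insert w B) :=
      fun i hi d hd => offB_mem hD hIT hBI hi hd
    have hTS : ins T ⊆ offB D (insert w B) := offB_ins hD
    have hpsi : ∀ (η : Sym2 ι → Bool), (∀ e ∈ offB D (insert w B), η e = ω e) → ∀ k',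
        psi D J k' η I = psi D J k' ω I := by
      intro η hη k'
      exact psi_congr (fun i hi j hj => hη _ (hTS (mem_ins.2 ⟨hIT hi, hJ hj⟩)))
        (fun i hi j hj => hη _ (hSI i hi j hj))
    cases r with
    | zero =>
      have : ∀ ω', ind (¬ ∃ I' ⊆ I ∪ insert w B, #I' = #I + 0 ∧ ν * γ ^ 0 ≤
          psi D J m (mix (offB D (insert w B)) ω ω') I') = 0 := by
        intro ω'
        refine ind_false ?_
        rw [not_not]
        refine ⟨I, Finset.subset_union_left, rfl, ?_⟩
        rw [hpsi _ (fun e he => mix_of_mem he _ _), pow_zero, mul_one, ← hk]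
        exact hν
      simp_rw [this]
      rw [av_const]
      positivity
    | succ r =>
      have hsub : offB D (insert w B) ⊆ offB D B :=
        fun e he w' hw' => he w' (Finset.mem_insert_of_mem hw')
      have hmk : (2 : ℝ) * γ ≤ (#D : ℝ) - k := by
        have : (k : ℝ) ≤ m := by exact_mod_cast (by omega : k ≤ m)
        linarith
      have h := av_idle (S := offB D (insert w B)) (S' := offB D B) hsub ω
        (G := fun η => ν * γ ≤ psi D J (k + 1) η (insert w I))
        (H := fun η => ∃ I' ⊆ I ∪ insert w B, #I' = #I + (r + 1) ∧ ν * γ ^ (r + 1) ≤ psi D J m η I')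
        (a := 2 ^ r * (23 / 24) ^ #B) (b := 2 ^ (r + 1) * (23 / 24) ^ #B) (c := 1 / 12) ?_
        (stage_step ω hIT hJ hD hwT hwI hTS hSI
          (fun d hd h => h w (Finset.mem_insert_self _ _) d hd rfl) hν hγ0 hmk) ?_ ?_
      · refine h.trans (le_of_eq ?_)
        rw [Finset.card_insert_of_notMem hwB, pow_succ, pow_succ]
        ring
      · gcongr <;> norm_num
      · intro η hη hG
        refine le_trans (av_mono fun ω'' => ind_mono ?_) (ih (insert w I) η (k + 1) r (ν * γ) hBT'
          (Finset.insert_subset hwT hIT) (Finset.disjoint_insert_right.2 ⟨hwB, hBI'⟩) (by omega)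
          (by positivity) hG)
        rintro hne ⟨I', h1, h2, h3⟩
        refine hne ⟨I', h1.trans_eq ?_, ?_, le_trans (le_of_eq (by ring)) h3⟩
        · ext x; simp only [Finset.mem_union, Finset.mem_insert]; tauto
        · rw [h2, Finset.card_insert_of_notMem hwI]; ring
      · intro η hη
        refine le_trans (av_mono fun ω'' => ind_mono ?_) (ih I η k (r + 1) ν hBT' hIT hBI' hk hν0
          (by rw [hpsi η hη]; exact hν))
        rintro hne ⟨I', h1, h2, h3⟩
        exact hne ⟨I', h1.trans (Finset.union_subset_union_right (Finset.subset_insert _ _)), h2, h3⟩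

/-- One stage of the growth of rectangular permanents: with `#D` fresh columns and `r` fresh rows,
the squared permanent grows by the factor `γ ^ r / 2 ^ #D`, for every
`γ ≤ (#D - r) / 2`. -/
lemma stage {T D I J : Finset ι} (ω : Sym2 ι → Bool) (hI : I ⊆ T) (hJ : J ⊆ T) (hD : Disjoint D T)
    {r : ℕ} {γ lam : ℝ} (hγ0 : 0 ≤ γ) (hγ : 2 * γ ≤ (#D : ℝ) - r) (hlam : lam ≤ per ω I J ^ 2)
    (h0 : 0 ≤ lam) :
    av (fun ω' => ind (¬ ∃ I' ⊆ T, ∃ K ⊆ D, #I' = #I + r ∧ #K = r ∧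
      lam * (γ ^ r / 2 ^ #D) ≤ per (mix (ins T) ω ω') I' (J ∪ K) ^ 2)) ≤
      2 ^ r * (23 / 24) ^ (#T - #I) := by
  rw [← Finset.card_sdiff_of_subset hI]
  have hsub : ins T ⊆ offB D (T \ I) := offB_ins hD
  rw [← av_tower hsub ω (fun η => ind (¬ ∃ I' ⊆ T, ∃ K ⊆ D, #I' = #I + r ∧ #K = r ∧
      lam * (γ ^ r / 2 ^ #D) ≤ per η I' (J ∪ K) ^ 2))]
  refine av_le_of_le fun ω' => ?_
  refine le_trans (av_mono fun ω'' => ind_mono ?_) (stage_batch hJ hD hγ0 hγ (T \ I) I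
    (mix (ins T) ω ω') 0 r lam Finset.sdiff_subset hI Finset.sdiff_disjoint (by omega) h0 ?_)
  · rintro hne ⟨I', h1, h2, h3⟩
    rw [Finset.union_sdiff_of_subset hI] at h1
    apply hne
    by_contra hcon
    push Not at hcon
    have hlt : ∀ K ∈ D.powersetCard r,
        per (mix (offB D (T \ I)) (mix (ins T) ω ω') ω'') I' (J ∪ K) ^ 2 < lam * (γ ^ r / 2 ^ #D) := by
      intro K hK
      rw [Finset.mem_powersetCard] at hK
      exact hcon I' h1 K hK.1 h2 hK.2
    have hrD : r ≤ #D := by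
      have : (r : ℝ) ≤ #D := by linarith
      exact_mod_cast this
    have hne' : (D.powersetCard r).Nonempty := Finset.powersetCard_nonempty.2 hrD
    have hsum := Finset.sum_lt_sum_of_nonempty hne' hlt
    rw [Finset.sum_const, Finset.card_powersetCard, nsmul_eq_mul] at hsum
    have hch : ((#D).choose r : ℝ) ≤ 2 ^ #D := by exact_mod_cast Nat.choose_le_two_pow _ _
    have h4 : ((#D).choose r : ℝ) * (lam * (γ ^ r / 2 ^ #D)) ≤ 2 ^ #D * (lam * (γ ^ r / 2 ^ #D)) := by
      gcongr
    have h5 : (2 : ℝ) ^ #D * (lam * (γ ^ r / 2 ^ #D)) = lam * γ ^ r := by field_simp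
    unfold psi at h3
    linarith
  · unfold psi
    rw [Finset.powersetCard_zero, Finset.sum_singleton, Finset.union_empty]
    rw [per_congr_ins (fun e he => mix_of_mem he ω ω') hI hJ]
    exact hlam

end Stage

/-! ### Growth of rectangular permanents -/

section Growth

variable {ι : Type*} [Fintype ι] [DecidableEq ι]

lemma mix_empty {E β : Type*} (ω ω' : E → β) : mix (∅ : Set E) ω ω' = ω' := by
  ext e; simp [mix]

/-- After `b` stages there is, with high probability, a large permanent of size `b * r`. -/
lemma growth {s r : ℕ} {γ : ℝ} (hγ0 : 0 ≤ γ) (hγ : 2 * γ ≤ (s : ℝ) - r) (b : ℕ) :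
    ∀ U : Finset ι, #U = (25 + b) * s →
    av (fun ω : Sym2 ι → Bool => ind (¬ ∃ I ⊆ U, ∃ J ⊆ U, #I = b * r ∧ #J = b * r ∧
      (γ ^ r / 2 ^ s) ^ b ≤ per ω I J ^ 2)) ≤ b * (2 ^ r * (23 / 24) ^ (25 * s)) := by
  have hrs : r ≤ s := by
    have : (r : ℝ) ≤ s := by linarith
    exact_mod_cast this
  induction b with
  | zero =>
    intro U _
    have : ∀ ω : Sym2 ι → Bool, ind (¬ ∃ I ⊆ U, ∃ J ⊆ U, #I = 0 * r ∧ #J = 0 * r ∧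
      (γ ^ r / 2 ^ s) ^ 0 ≤ per ω I J ^ 2) = 0 := by
      intro ω
      refine ind_false ?_
      rw [not_not]
      refine ⟨∅, by simp, ∅, by simp, by simp, by simp, ?_⟩
      unfold per
      rw [pm_empty]
      simp
    simp_rw [this]
    rw [av_const]
    simp
  | succ b ih =>
    intro U hU
    obtain ⟨D, hDU, hDs⟩ := Finset.exists_subset_card_eq (s := U) (n := s) (by rw [hU]; nlinarith)
    have hT : #(U \ D) = (25 + b) * s := by
      rw [Finset.card_sdiff_of_subset hDU, hU, hDs]
      have : (25 + (b + 1)) * s = (25 + b) * s + s := by ring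
      omega
    have hih := ih (U \ D) hT
    have h := av_chain (S := ∅) (S' := ins (U \ D)) (Set.empty_subset _)
      (fun _ : Sym2 ι => true)
      (G := fun ω => ∃ I ⊆ U \ D, ∃ J ⊆ U \ D, #I = b * r ∧ #J = b * r ∧
        (γ ^ r / 2 ^ s) ^ b ≤ per ω I J ^ 2)
      (H := fun ω => ∃ I ⊆ U, ∃ J ⊆ U, #I = (b + 1) * r ∧ #J = (b + 1) * r ∧
        (γ ^ r / 2 ^ s) ^ (b + 1) ≤ per ω I J ^ 2)
      (p := b * (2 ^ r * (23 / 24) ^ (25 * s))) (q := 2 ^ r * (23 / 24) ^ (25 * s)) (by positivity)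
      (by simp_rw [mix_empty]; exact hih) ?_
    · simp_rw [mix_empty] at h
      refine h.trans (le_of_eq ?_)
      push_cast; ring
    · rintro η - ⟨I, hI, J, hJ, hIc, hJc, hper⟩
      refine le_trans (av_mono fun ω'' => ind_mono ?_) ((stage η hI hJ
        Finset.disjoint_sdiff (r := r) hγ0 (by rw [hDs]; exact hγ) hper (by positivity)).trans ?_)
      · rintro hne ⟨I', h1, K, h2, h3, h4, h5⟩
        refine hne ⟨I', h1.trans Finset.sdiff_subset, J ∪ K,
          Finset.union_subset (hJ.trans Finset.sdiff_subset) (h2.trans hDU), ?_, ?_, ?_⟩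
        · rw [h3, hIc]; ring
        · rw [Finset.card_union_of_disjoint, h4, hJc]
          · ring
          · exact Finset.disjoint_of_subset_left hJ
              (Finset.disjoint_of_subset_right h2 Finset.sdiff_disjoint)
        · rw [hDs] at h5
          refine le_trans (le_of_eq ?_) h5
          rw [pow_succ]
      · refine mul_le_mul_of_nonneg_left ?_ (by positivity)
        refine pow_le_pow_of_le_one (by norm_num) (by norm_num) ?_
        rw [hT, hIc]
        have : b * r ≤ b * s := Nat.mul_le_mul_left _ hrs
        have h2 : (25 + b) * s = 25 * s + b * s := by ring
        omega

end Growth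

/-! ### The Littlewood-Offord inequality -/

/-- The Littlewood-Offord bound for `2 * n` coefficients: the largest point mass of the binomial
distribution with `2 * n` trials. -/
noncomputable def lo (n : ℕ) : ℝ := (n.centralBinom : ℝ) / 4 ^ n

lemma lo_nonneg (n : ℕ) : 0 ≤ lo n := by unfold lo; positivity

lemma lo_sq (n : ℕ) : lo n ^ 2 * (2 * n + 1) ≤ 1 := by
  induction n with
  | zero => simp [lo]
  | succ n ih =>
    have h : lo (n + 1) * (2 * n + 2) = lo n * (2 * n + 1) := by
      have h1 : ((n : ℝ) + 1) * ((n + 1).centralBinom : ℝ) = 2 * (2 * n + 1) * n.centralBinom := by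
        exact_mod_cast Nat.succ_mul_centralBinom_succ n
      unfold lo
      rw [pow_succ]
      field_simp
      linarith
    have h2 : lo (n + 1) = lo n * (2 * n + 1) / (2 * n + 2) := by
      rw [eq_div_iff (by positivity), h]
    rw [h2]
    have h3 : (lo n * (2 * n + 1) / (2 * n + 2)) ^ 2 * (2 * ((n + 1 : ℕ) : ℝ) + 1) =
        (lo n ^ 2 * (2 * n + 1)) * (((2 * n + 1) * (2 * n + 3)) / (2 * n + 2) ^ 2) := by
      push_cast
      field_simp
      ring
    rw [h3]
    have h4 : (((2 : ℝ) * n + 1) * (2 * n + 3)) / (2 * n + 2) ^ 2 ≤ 1 := by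
      rw [div_le_one (by positivity)]
      nlinarith
    exact mul_le_one₀ ih (by positivity) h4

lemma exists_lo {ε : ℝ} (hε : 0 < ε) : ∃ n : ℕ, lo n ≤ ε := by
  obtain ⟨n, hn⟩ := exists_nat_gt (1 / ε ^ 2)
  refine ⟨n, ?_⟩
  by_contra hcon
  push Not at hcon
  have h1 := lo_sq n
  have h2 : ε ^ 2 < lo n ^ 2 := by gcongr
  rw [div_lt_iff₀ (by positivity)] at hn
  nlinarith [sq_nonneg (lo n), (Nat.cast_nonneg n : (0 : ℝ) ≤ n)]

/-- The Littlewood-Offord inequality when all coefficients are large: after a change of signs the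
favourable sets form an antichain, so that Sperner's theorem applies. -/
lemma lo_core {κ : Type*} [Fintype κ] [DecidableEq κ] {n : ℕ} (hn : Fintype.card κ = 2 * n)
    {a : κ → ℝ} {μ : ℝ} (ha : ∀ i, μ ≤ |a i|) (c : ℝ) :
    av (fun x : κ → Bool => ind (|c + ∑ i, a i * rad (x i)| < μ)) ≤ lo n := by
  classical
  set F : Finset κ → ℝ := fun s => c + ∑ i, |a i| * (if i ∈ s then 1 else -1) with hF
  set 𝒜 : Finset (Finset κ) := univ.filter fun s => |F s| < μ with h𝒜
  set X : (κ → Bool) → Finset κ := fun x => univ.filter fun i => x i = decide (0 ≤ a i) with hX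
  have hFX : ∀ x : κ → Bool, c + ∑ i, a i * rad (x i) = F (X x) := by
    intro x
    simp only [hF, hX]
    congr 1
    refine Finset.sum_congr rfl fun i _ => ?_
    by_cases h0 : 0 ≤ a i
    · cases hx : x i <;> simp [h0, hx, rad, abs_of_nonneg h0]
    · cases hx : x i <;> simp [h0, hx, rad, abs_of_neg (not_le.1 h0)]
  have hXinj : Function.Injective X := by
    intro x y h
    ext i
    have h1 : i ∈ X x ↔ i ∈ X y := by rw [h]
    simp only [hX, Finset.mem_filter, Finset.mem_univ, true_and] at h1
    cases hx : x i <;> cases hy : y i <;> cases hd : decide (0 ≤ a i) <;> simp_all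
  have hanti : IsAntichain (· ⊆ ·) (SetLike.coe 𝒜) := by
    intro s hs t ht hne hst
    have hs' : |F s| < μ := by simpa [h𝒜] using hs
    have ht' : |F t| < μ := by simpa [h𝒜] using ht
    obtain ⟨i₀, hi₀t, hi₀s⟩ := Finset.exists_of_ssubset (hst.ssubset_of_ne hne)
    have hd : F t - F s = ∑ i, |a i| * ((if i ∈ t then 1 else -1) - (if i ∈ s then 1 else -1)) := by
      simp only [hF, mul_sub, Finset.sum_sub_distrib]
      ring
    have hle : 2 * |a i₀| ≤ F t - F s := by
      rw [hd]
      refine le_trans (le_of_eq ?_) (Finset.single_le_sum (f := fun i =>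
        |a i| * ((if i ∈ t then (1 : ℝ) else -1) - (if i ∈ s then 1 else -1))) ?_ (Finset.mem_univ i₀))
      · simp only [hi₀t, hi₀s, if_true, if_false]
        ring
      · intro i _
        refine mul_nonneg (abs_nonneg _) ?_
        by_cases h1 : i ∈ s
        · simp [h1, hst h1]
        · by_cases h2 : i ∈ t <;> simp [h1, h2]
    rw [abs_lt] at hs' ht'
    have := ha i₀
    linarith [hs'.1, ht'.2]
  have hcard := hanti.sperner
  rw [hn, Nat.mul_div_cancel_left _ (by norm_num), ← Nat.centralBinom_eq_two_mul_choose] at hcard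
  have hsum : ∑ x : κ → Bool, ind (|c + ∑ i, a i * rad (x i)| < μ) ≤ #𝒜 := by
    have h1 : ∀ x : κ → Bool, ind (|c + ∑ i, a i * rad (x i)| < μ) =
        if |F (X x)| < μ then 1 else 0 := by
      intro x
      rw [hFX]
      simp [ind]
    simp_rw [h1]
    rw [Finset.sum_boole]
    have : #(univ.filter fun x => |F (X x)| < μ) ≤ #𝒜 := by
      refine Finset.card_le_card_of_injOn X ?_ hXinj.injOn
      intro x hx
      simpa [h𝒜] using hx
    exact_mod_cast this
  unfold av lo
  have h4 : ((Fintype.card (κ → Bool) : ℕ) : ℝ) = 4 ^ n := by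
    rw [Fintype.card_fun, hn, Fintype.card_bool, pow_mul]
    norm_num
  rw [h4]
  gcongr
  exact hsum.trans (by exact_mod_cast hcard)

/-- The Littlewood-Offord inequality: a linear form in random signs with `2 * n` coefficients that
are at least `μ` in absolute value is in an interval of length `2 * μ` with probability at most
`lo n`. -/
lemma lo_form {E κ : Type*} [Fintype E] [DecidableEq E] [DecidableEq κ] {e : κ → E}
    (he : Function.Injective e) {D A : Finset κ} (hAD : A ⊆ D) {n : ℕ} (hn : 2 * n ≤ #A) {b : κ → ℝ}
    {μ : ℝ} (hb : ∀ d ∈ A, μ ≤ |b d|) (c : ℝ) :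
    av (fun x : E → Bool => ind (|c + ∑ d ∈ D, b d * rad (x (e d))| < μ)) ≤ lo n := by
  obtain ⟨A', hA', hcard⟩ := Finset.exists_subset_card_eq hn
  have hi : Function.Injective (fun d : A' => e d) := he.comp Subtype.val_injective
  rw [av_extend (fun d : A' => e d) hi]
  refine av_le_of_le fun ω => ?_
  refine le_trans (le_of_eq ?_) (lo_core (κ := A') (n := n) (by simp [hcard])
    (a := fun d => b d) (μ := μ) (fun d => hb d (hA' d.2))
    (c + ∑ d ∈ D \ A', b d * rad (ω (e d))))
  congr 1
  ext x
  congr 2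
  have h1 : ∑ d ∈ D \ A', b d * rad (Function.extend (fun d : A' => e d) x ω (e d)) =
      ∑ d ∈ D \ A', b d * rad (ω (e d)) := by
    refine Finset.sum_congr rfl fun d hd => ?_
    rw [Function.extend_apply']
    rintro ⟨a, ha⟩
    exact (Finset.mem_sdiff.1 hd).2 (he ha ▸ a.2)
  have h2 : ∑ d ∈ A', b d * rad (Function.extend (fun d : A' => e d) x ω (e d)) =
      ∑ d : A', b d * rad (x d) := by
    rw [← Finset.sum_coe_sort A']
    refine Finset.sum_congr rfl fun d _ => ?_
    rw [hi.extend_apply x ω d]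
  rw [← Finset.sum_sdiff (hA'.trans hAD), h1, h2]
  ring_nf

/-! ### Many large linear forms -/

section Rows

/-- If each of at least `2 * k` rows is bad with probability at most `q`, then fewer than `k` rows
are good with probability at most `2 * q`. -/
lemma light_rows {α κ : Type*} [Fintype α] [Nonempty α] {R : Finset κ} {good : κ → α → Prop}
    [∀ a x, Decidable (good a x)]
    {q : ℝ} (hq : ∀ a ∈ R, av (fun x => ind (¬ good a x)) ≤ q) {k : ℕ} (hk : 2 * k ≤ #R)
    (hq0 : 0 ≤ q) : av (fun x => ind (#(R.filter fun a => good a x) < k)) ≤ 2 * q := by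
  rcases Nat.eq_zero_or_pos #R with h0 | h0
  · have hnn : ∀ x : α, ind (#(R.filter fun a => good a x) < k) = 0 := fun x =>
      ind_false (by omega)
    simp_rw [hnn]
    rw [av_const]
    linarith
  · have hR : (0 : ℝ) < #R := by exact_mod_cast h0
    have h1 : av (fun x => (#R : ℝ) / 2 * ind (#(R.filter fun a => good a x) < k)) ≤
        av (fun x => ∑ a ∈ R, ind (¬ good a x)) := by
      refine av_mono fun x => ?_
      by_cases h : #(R.filter fun a => good a x) < k
      · rw [ind_true h]
        have h2 : ∑ a ∈ R, ind (¬ good a x) = (#R : ℝ) - #(R.filter fun a => good a x) := by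
          have : ∀ a, ind (¬ good a x) = 1 - if good a x then 1 else 0 := by
            intro a; rw [ind_not]; simp [ind]
          simp_rw [this]
          rw [Finset.sum_sub_distrib, Finset.sum_boole]
          simp
        rw [h2]
        have h3 : (#(R.filter fun a => good a x) : ℝ) ≤ k := by exact_mod_cast h.le
        have h4 : (2 : ℝ) * k ≤ #R := by exact_mod_cast hk
        linarith
      · rw [ind_false h, mul_zero]
        exact Finset.sum_nonneg fun _ _ => ind_nonneg _
    rw [av_mul_left, av_sum] at h1
    have h2 : ∑ a ∈ R, av (fun x => ind (¬ good a x)) ≤ #R * q := by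
      refine (Finset.sum_le_sum hq).trans ?_
      rw [Finset.sum_const, nsmul_eq_mul]
    have h3 := h1.trans h2
    by_contra hcon
    push Not at hcon
    nlinarith

/-- A symmetric relation in which every element has at most `K` neighbours has a large independent
set. -/
lemma indep {κ : Type*} [DecidableEq κ] {r : κ → κ → Prop} [DecidableRel r]
    (hr : ∀ a b, r a b → r b a) {K : ℕ} (s : ℕ) : ∀ P : Finset κ, s * K ≤ #P →
    (∀ a ∈ P, r a a) → (∀ a ∈ P, #(P.filter (r a)) ≤ K) → 0 < K →
    ∃ S ⊆ P, #S = s ∧ ∀ a ∈ S, ∀ b ∈ S, a ≠ b → ¬ r a b := by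
  induction s with
  | zero => intro P _ _ _ _; exact ⟨∅, by simp, by simp, by simp⟩
  | succ s ih =>
    intro P hP hrefl hdeg hK
    have hpos : 0 < #P := by
      have : (s + 1) * K = s * K + K := by ring
      omega
    obtain ⟨a, ha⟩ := Finset.card_pos.1 hpos
    have hsub : P.filter (r a) ⊆ P := Finset.filter_subset _ _
    obtain ⟨S, hSP, hSc, hS⟩ := ih (P \ P.filter (r a)) (by
      rw [Finset.card_sdiff_of_subset hsub]
      have h1 := hdeg a ha
      have : (s + 1) * K = s * K + K := by ring
      omega) (fun b hb => hrefl b (Finset.mem_sdiff.1 hb).1)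
      (fun b hb => (Finset.card_le_card
        (Finset.filter_subset_filter _ Finset.sdiff_subset)).trans (hdeg b (Finset.mem_sdiff.1 hb).1))
      hK
    have hna : ∀ b ∈ S, ¬ r a b := by
      intro b hb hab
      have h1 := Finset.mem_sdiff.1 (hSP hb)
      exact h1.2 (Finset.mem_filter.2 ⟨h1.1, hab⟩)
    have haS : a ∉ S := fun h => hna a h (hrefl a ha)
    refine ⟨insert a S, Finset.insert_subset ha (hSP.trans Finset.sdiff_subset), by
      rw [Finset.card_insert_of_notMem haS, hSc], ?_⟩
    intro b hb c hc hbc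
    rcases Finset.mem_insert.1 hb with rfl | hb
    · rcases Finset.mem_insert.1 hc with rfl | hc
      · exact absurd rfl hbc
      · exact hna c hc
    · rcases Finset.mem_insert.1 hc with hca | hc
      · rw [hca]
        exact fun h => hna b hb (hr _ _ h)
      · exact hS b hb c hc hbc

lemma rad_match {u : ℝ} (hu : u = 1 ∨ u = -1) (b : Bool) [Decidable (rad b = u)] :
    u * rad b = 2 * (if rad b = u then 1 else 0) - 1 := by
  rcases hu with rfl | rfl <;> cases b <;> simp [rad] <;> norm_num

variable {E κ : Type*} [Fintype E] [DecidableEq E] [DecidableEq κ] {e : κ → E}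

open Classical in
/-- If the diagonal dominates a square block of coefficients, then about half of the corresponding
linear forms are large, each thanks to its diagonal term. -/
lemma poor_rows (he : Function.Injective e) {D S : Finset κ} (hSD : S ⊆ D) {s k : ℕ} (hs : #S = s)
    (hs0 : 0 < s) (hk : 4 * k ≤ s) {B : κ → κ → ℝ} {lam : ℝ} (h0 : 0 ≤ lam)
    (hdiag : ∀ a ∈ S, lam ≤ |B a a|)
    (hoff : ∀ a ∈ S, ∀ b ∈ S, a ≠ b → |B a b| ≤ lam / (4 * s)) :
    av (fun x : E → Bool => ind (#(S.filter fun a =>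
      lam / (4 * s) ≤ |∑ d ∈ D, B a d * rad (x (e d))|) < k)) ≤ 4 / s := by
  have hsR : (0 : ℝ) < s := by exact_mod_cast hs0
  rw [← av_mix (e '' (S : Set κ))ᶜ]
  refine av_le_of_le fun ω => ?_
  set c : κ → ℝ := fun a => ∑ d ∈ D \ S, B a d * rad (ω (e d)) with hc
  set g : κ → ℝ := fun a => if 0 ≤ c a * B a a then 1 else -1 with hg
  have hg2 : ∀ a, g a ^ 2 = 1 := by intro a; simp only [hg]; split_ifs <;> norm_num
  have hval : ∀ (ω' : E → Bool) (a : κ),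
      ∑ d ∈ D, B a d * rad (mix (e '' (S : Set κ))ᶜ ω ω' (e d)) =
      c a + ∑ d ∈ S, B a d * rad (ω' (e d)) := by
    intro ω' a
    rw [← Finset.sum_sdiff hSD]
    congr 1
    · refine Finset.sum_congr rfl fun d hd => ?_
      rw [mix_of_mem]
      rintro ⟨d', hd', h⟩
      exact (Finset.mem_sdiff.1 hd).2 (he h ▸ hd')
    · refine Finset.sum_congr rfl fun d hd => ?_
      rw [mix_of_notMem]
      exact fun h => h ⟨d, hd, rfl⟩
  have hgood : ∀ (ω' : E → Bool), ∀ a ∈ S, rad (ω' (e a)) = g a →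
      lam / (4 * s) ≤ |∑ d ∈ D, B a d * rad (mix (e '' (S : Set κ))ᶜ ω ω' (e d))| := by
    intro ω' a ha hga
    rw [hval, ← Finset.add_sum_erase _ _ ha, hga]
    have h1 : lam ≤ |c a + B a a * g a| := by
      refine (hdiag a ha).trans ?_
      rw [← sq_le_sq]
      simp only [hg]
      split_ifs with h
      · nlinarith [sq_nonneg (c a)]
      · nlinarith [sq_nonneg (c a)]
    have h2 : |∑ d ∈ S.erase a, B a d * rad (ω' (e d))| ≤ lam / 4 := by
      refine (Finset.abs_sum_le_sum_abs _ _).trans ?_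
      have h3 : ∀ d ∈ S.erase a, |B a d * rad (ω' (e d))| ≤ lam / (4 * s) := by
        intro d hd
        rw [abs_mul, abs_rad, mul_one]
        exact hoff a ha d (Finset.mem_of_mem_erase hd) (Finset.ne_of_mem_erase hd).symm
      refine (Finset.sum_le_sum h3).trans ?_
      rw [Finset.sum_const, nsmul_eq_mul]
      have h4 : (#(S.erase a) : ℝ) ≤ s := by
        rw [← hs]; exact_mod_cast Finset.card_le_card (Finset.erase_subset _ _)
      calc (#(S.erase a) : ℝ) * (lam / (4 * s)) ≤ s * (lam / (4 * s)) := by gcongr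
        _ = lam / 4 := by field_simp
    have h5 : lam / (4 * s) ≤ lam / 4 := by
      gcongr
      have : (1 : ℝ) ≤ s := by exact_mod_cast hs0
      linarith
    have h6 := abs_sub_abs_le_abs_sub (c a + B a a * g a) (-(∑ d ∈ S.erase a, B a d * rad (ω' (e d))))
    rw [abs_neg, sub_neg_eq_add] at h6
    rw [← add_assoc]
    linarith
  have hY := form_second (E := E) he S 0 g
  simp only [zero_add, hg2] at hY
  rw [Finset.sum_const, nsmul_eq_mul, mul_one, hs] at hY
  norm_num at hY
  have hm := av_markov (f := fun x : E → Bool => (∑ d ∈ S, g d * rad (x (e d))) ^ 2)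
    (fun _ => sq_nonneg _) (c := (s : ℝ) ^ 2 / 4) (by positivity)
  rw [hY] at hm
  refine le_trans (av_mono fun ω' => ind_mono fun hlt => ?_)
    (hm.trans (le_of_eq (by field_simp)))
  have hmatch : #(S.filter fun a => rad (ω' (e a)) = g a) < k :=
    lt_of_le_of_lt (Finset.card_le_card fun a ha => by
      rw [Finset.mem_filter] at ha ⊢
      exact ⟨ha.1, hgood ω' a ha.1 ha.2⟩) hlt
  have hsum : ∑ d ∈ S, g d * rad (ω' (e d)) =
      2 * #(S.filter fun a => rad (ω' (e a)) = g a) - s := by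
    have : ∀ d, g d * rad (ω' (e d)) = 2 * (if rad (ω' (e d)) = g d then 1 else 0) - 1 := by
      intro d
      refine rad_match ?_ _
      simp only [hg]
      split_ifs
      · exact Or.inl rfl
      · exact Or.inr rfl
    simp_rw [this]
    rw [Finset.sum_sub_distrib, ← Finset.mul_sum, Finset.sum_boole]
    simp [hs]
  rw [hsum]
  have h1 : (#(S.filter fun a => rad (ω' (e a)) = g a) : ℝ) ≤ k := by exact_mod_cast hmatch.le
  have h2 : (4 : ℝ) * k ≤ s := by exact_mod_cast hk
  nlinarith

open Classical in
/-- For a symmetric array of coefficients with many large diagonal entries, many of the linear forms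
given by its rows are large: either many rows have many large entries, or there is a block in which
the diagonal dominates. -/
lemma rows_many (he : Function.Injective e) {D H : Finset κ} (hHD : H ⊆ D) {s k K : ℕ}
    (hs0 : 0 < s) (hK0 : 0 < K) (hk : 4 * k ≤ s) (hH : 2 * k + s * (2 * K) ≤ #H) {B : κ → κ → ℝ}
    (hB : ∀ a b, B a b = B b a) {lam : ℝ} (h0 : 0 ≤ lam) (hdiag : ∀ a ∈ H, lam ≤ |B a a|) :
    av (fun x : E → Bool => ind (#(D.filter fun a =>
      lam / (4 * s) ≤ |∑ d ∈ D, B a d * rad (x (e d))|) < k)) ≤ 2 * lo K + 4 / s := by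
  have hsR : (0 : ℝ) < s := by exact_mod_cast hs0
  set R : Finset κ := H.filter fun a => 2 * K ≤ #(D.filter fun b => lam / (4 * s) ≤ |B a b|) with hR
  have hRH : R ⊆ H := Finset.filter_subset _ _
  have hlo := lo_nonneg K
  have hmono : ∀ {S : Finset κ}, S ⊆ D → av (fun x : E → Bool => ind (#(D.filter fun a =>
      lam / (4 * s) ≤ |∑ d ∈ D, B a d * rad (x (e d))|) < k)) ≤ av (fun x : E → Bool =>
      ind (#(S.filter fun a => lam / (4 * s) ≤ |∑ d ∈ D, B a d * rad (x (e d))|) < k)) := by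
    intro S hS
    exact av_mono fun x => ind_mono fun h => lt_of_le_of_lt (Finset.card_le_card
      (Finset.filter_subset_filter _ hS)) h
  by_cases hcase : 2 * k ≤ #R
  · have hl : ∀ a ∈ R, av (fun x : E → Bool =>
        ind (¬ lam / (4 * s) ≤ |∑ d ∈ D, B a d * rad (x (e d))|)) ≤ lo K := by
      intro a ha
      have h1 := (Finset.mem_filter.1 ha).2
      refine le_trans (av_mono fun x => ind_mono fun h => ?_) (lo_form he
        (Finset.filter_subset (fun b => lam / (4 * s) ≤ |B a b|) D) h1
        (fun d hd => (Finset.mem_filter.1 hd).2) 0)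
      rw [zero_add]
      exact not_le.1 h
    have h1 := light_rows hl hcase hlo
    have h2 := hmono (hRH.trans hHD)
    have h3 : (0 : ℝ) ≤ 4 / s := by positivity
    linarith
  · have hcard : s * (2 * K) ≤ #(H \ R) := by
      rw [Finset.card_sdiff_of_subset hRH]
      omega
    have hrefl : ∀ a ∈ H \ R, lam / (4 * s) ≤ |B a a| := by
      intro a ha
      refine le_trans ?_ (hdiag a (Finset.sdiff_subset ha))
      rw [div_le_iff₀ (by positivity)]
      have : (1 : ℝ) ≤ s := by exact_mod_cast hs0
      nlinarith
    have hdeg : ∀ a ∈ H \ R, #((H \ R).filter fun b => lam / (4 * s) ≤ |B a b|) ≤ 2 * K := by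
      intro a ha
      have h1 := Finset.mem_sdiff.1 ha
      have h2 : ¬ 2 * K ≤ #(D.filter fun b => lam / (4 * s) ≤ |B a b|) := fun h =>
        h1.2 (Finset.mem_filter.2 ⟨h1.1, h⟩)
      have h3 : #((H \ R).filter fun b => lam / (4 * s) ≤ |B a b|) ≤
          #(D.filter fun b => lam / (4 * s) ≤ |B a b|) :=
        Finset.card_le_card (Finset.filter_subset_filter _ (Finset.sdiff_subset.trans hHD))
      omega
    obtain ⟨S, hSP, hSc, hS⟩ := indep (r := fun a b => lam / (4 * s) ≤ |B a b|)
      (fun a b h => by rw [hB b a]; exact h) (K := 2 * K) s (H \ R) hcard hrefl hdeg (by omega)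
    have hSD : S ⊆ D := hSP.trans (Finset.sdiff_subset.trans hHD)
    have h1 := poor_rows (E := E) he hSD hSc hs0 hk h0
      (fun a ha => hdiag a (Finset.sdiff_subset (hSP ha)))
      (fun a ha b hb hab => (not_le.1 (hS a ha b hb hab)).le)
    have h2 := hmono hSD
    linarith

end Rows

/-! ### Anticoncentration of permanents -/

section Boost

variable {ι : Type*} [Fintype ι] [DecidableEq ι]

lemma pair_right_injective {ι : Type*} (w : ι) : Function.Injective (fun d : ι => s(w, d)) :=
  fun _ _ h => Sym2.congr_right.1 h

/-- If many of the permanents obtained from the index set `C` by deleting one index are large, then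
the permanent with row set `C ∪ {q}` and column set `C ∪ {p}` is large with high probability. -/
lemma offdiag {C H : Finset ι} {p q : ι} (hpq : p ≠ q) (hp : p ∉ C) (hq : q ∉ C) (hHC : H ⊆ C)
    {s K K' : ℕ} (hs0 : 0 < s) (hK0 : 0 < K) (hk : 8 * K' ≤ s) (hH : 4 * K' + s * (2 * K) ≤ #H)
    (ω : Sym2 ι → Bool) {lam : ℝ} (h0 : 0 ≤ lam)
    (hdiag : ∀ a ∈ H, lam ≤ |per ω (C.erase a) (C.erase a)|) :
    av (fun ω' => ind (¬ lam / (4 * s) ≤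
      |per (mix (ins C) ω ω') (insert q C) (insert p C)|)) ≤ (2 * lo K + 4 / s) + lo K' := by
  classical
  set S' : Set (Sym2 ι) := {e | ∀ a ∈ C, e ≠ s(q, a)} with hS'
  have hsub : ins C ⊆ S' := by
    intro e he a _ h
    subst h
    exact hq (mem_ins.1 he).1
  refine av_chain (S := ins C) (S' := S') hsub ω
    (G := fun η => ¬ #(C.filter fun a => lam / (4 * s) ≤ |per η C ((insert p C).erase a)|) < 2 * K')
    (H := fun η => lam / (4 * s) ≤ |per η (insert q C) (insert p C)|) (lo_nonneg K') ?_ ?_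
  · simp_rw [not_not]
    refine le_trans (le_of_eq ?_) (rows_many (E := Sym2 ι) (pair_right_injective p) hHC (k := 2 * K')
      hs0 hK0 (by omega) (by omega) (B := fun a b => per ω (C.erase a) (C.erase b))
      (fun a b => per_symm _ _ _) h0 hdiag)
    congr 1
    ext ω'
    congr 3
    refine Finset.filter_congr fun a ha => ?_
    have hpa : p ≠ a := fun h => hp (h ▸ ha)
    have h1 : per (mix (ins C) ω ω') C ((insert p C).erase a) =
        ∑ b ∈ C, per ω (C.erase a) (C.erase b) * rad (ω' s(p, b)) := by
      unfold per
      rw [pm_col _ C (c := p) (Finset.mem_erase.2 ⟨hpa, Finset.mem_insert_self _ _⟩)]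
      refine Finset.sum_congr rfl fun b hb => ?_
      have h2 : ((insert p C).erase a).erase p = C.erase a := by
        rw [Finset.erase_right_comm, Finset.erase_insert hp]
      rw [h2]
      have h3 := per_congr_ins (fun e he => mix_of_mem he ω ω') (Finset.erase_subset b C)
        (Finset.erase_subset a C)
      have h4 := per_symm ω (C.erase a) (C.erase b)
      unfold per at h3 h4
      rw [h3, h4, ent_symm]
      unfold ent
      rw [mix_of_notMem (fun h => hp (mem_ins.1 h).1), mul_comm]
    rw [h1]
  · intro η _ hG
    rw [not_lt] at hG
    have hval : ∀ ω'', per (mix S' η ω'') (insert q C) (insert p C) =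
        ent η q p * per η C C +
        ∑ j ∈ C, per η C ((insert p C).erase j) * rad (ω'' s(q, j)) := by
      intro ω''
      have hmem : ∀ i ∈ C, ∀ j ∈ insert p C, s(i, j) ∈ S' := by
        intro i hi j hj a ha h
        rw [Sym2.eq_iff] at h
        rcases h with h | h
        · exact hq (h.1 ▸ hi)
        · rcases Finset.mem_insert.1 hj with h3 | h3
          · exact hpq (h3.symm.trans h.2)
          · exact hq (h.2 ▸ h3)
      have hc : ∀ X ⊆ insert p C, pm (ent (mix S' η ω'')) C X = pm (ent η) C X :=
        fun X hX => per_congr fun i hi j hj => mix_of_mem (hmem i hi j (hX hj)) _ _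
      unfold per
      rw [pm_row _ hq, Finset.sum_insert hp, Finset.erase_insert hp, hc C (Finset.subset_insert _ _)]
      congr 1
      · congr 1
        unfold ent
        rw [mix_of_mem]
        intro a ha h
        exact hp (Sym2.congr_right.1 h ▸ ha)
      · refine Finset.sum_congr rfl fun j hj => ?_
        rw [hc _ (Finset.erase_subset _ _), mul_comm]
        unfold ent
        rw [mix_of_notMem]
        exact fun h => h j hj rfl
    refine le_trans (av_mono fun ω'' => ind_mono fun h => ?_)
      (lo_form (E := Sym2 ι) (pair_right_injective q) (Finset.filter_subset _ _) hG
        (fun d hd => (Finset.mem_filter.1 hd).2) (ent η q p * per η C C))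
    rw [hval, not_le] at h
    exact h

/-- Anticoncentration of a quadratic form in random signs, by decoupling: the coordinates in `Y` are
resampled, and the difference of the two values is a linear form in the coordinates in `X`. -/
lemma quad {ι : Type*} [Fintype ι] [DecidableEq ι] {w : ι} {X Y : Finset ι} (hXY : Disjoint X Y)
    (hw : w ∉ Y) {f : ι → ι → ℝ} (hf : ∀ a b, f a b = f b a) {c μ : ℝ} {K : ℕ} {R : Finset ι}
    (hRX : R ⊆ X) (hR : 2 * (2 * K) ≤ #R)
    (hRY : ∀ p ∈ R, ∃ A ⊆ Y, 2 * K ≤ #A ∧ ∀ q ∈ A, μ ≤ |f p q|) :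
    av (fun x : ι → Bool => ind (|c * rad (x w) + ∑ q ∈ X ∪ Y, ∑ p ∈ X ∪ Y,
      rad (x q) * rad (x p) * f p q| < μ)) ^ 2 ≤ 3 * lo K := by
  classical
  set F : (ι → Bool) → ℝ := fun x => c * rad (x w) + ∑ q ∈ X ∪ Y, ∑ p ∈ X ∪ Y,
      rad (x q) * rad (x p) * f p q with hF
  set S : Set ι := (Y : Set ι)ᶜ with hS
  set lin : ι → (ι → Bool) → (ι → Bool) → ℝ := fun p y y' =>
    (-∑ q ∈ Y, f p q * rad (y' q)) + ∑ q ∈ Y, f p q * rad (y q) with hlin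
  set YY : (ι → Bool) → ℝ := fun y => ∑ q ∈ Y, ∑ p ∈ Y, rad (y q) * rad (y p) * f p q with hYY
  have hdiff : ∀ x y y', F (mix S x y) - F (mix S x y') =
      (YY y - YY y') + ∑ p ∈ X, (2 * lin p y y') * rad (x p) := by
    intro x y y'
    have hmX : ∀ (z : ι → Bool), ∀ p ∈ X, mix S x z p = x p := fun z p hp =>
      mix_of_mem (S := S) (by simpa [hS] using Finset.disjoint_left.1 hXY hp) _ _
    have hmY : ∀ (z : ι → Bool), ∀ p ∈ Y, mix S x z p = z p := fun z p hp =>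
      mix_of_notMem (S := S) (by simpa [hS] using hp) _ _
    have hmw : ∀ (z : ι → Bool), mix S x z w = x w := fun z =>
      mix_of_mem (S := S) (by simpa [hS] using hw) _ _
    have hone : ∀ z : ι → Bool, F (mix S x z) = c * rad (x w) +
        (∑ q ∈ X, ∑ p ∈ X, rad (x q) * rad (x p) * f p q) + YY z +
        2 * ∑ p ∈ X, (∑ q ∈ Y, f p q * rad (z q)) * rad (x p) := by
      intro z
      simp only [hF, hmw]
      rw [Finset.sum_union hXY]
      have e1 : ∑ q ∈ X, ∑ p ∈ X ∪ Y, rad (mix S x z q) * rad (mix S x z p) * f p q =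
          (∑ q ∈ X, ∑ p ∈ X, rad (x q) * rad (x p) * f p q) +
          ∑ p ∈ X, (∑ q ∈ Y, f p q * rad (z q)) * rad (x p) := by
        rw [← Finset.sum_add_distrib]
        refine Finset.sum_congr rfl fun q hq => ?_
        rw [Finset.sum_union hXY, Finset.sum_mul]
        congr 1
        · exact Finset.sum_congr rfl fun p hp => by rw [hmX z q hq, hmX z p hp]
        · exact Finset.sum_congr rfl fun p hp => by rw [hmX z q hq, hmY z p hp, hf p q]; ring
      have e2 : ∑ q ∈ Y, ∑ p ∈ X ∪ Y, rad (mix S x z q) * rad (mix S x z p) * f p q =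
          YY z + ∑ p ∈ X, (∑ q ∈ Y, f p q * rad (z q)) * rad (x p) := by
        simp_rw [Finset.sum_union hXY]
        rw [Finset.sum_add_distrib, add_comm]
        congr 1
        · exact Finset.sum_congr rfl fun q hq => Finset.sum_congr rfl fun p hp => by
            rw [hmY z q hq, hmY z p hp]
        · rw [Finset.sum_comm]
          refine Finset.sum_congr rfl fun p hp => ?_
          rw [Finset.sum_mul]
          exact Finset.sum_congr rfl fun q hq => by rw [hmY z q hq, hmX z p hp]; ring
      rw [e1, e2]
      ring
    rw [hone, hone]
    have e3 : ∑ p ∈ X, (2 * lin p y y') * rad (x p) =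
        2 * ∑ p ∈ X, (∑ q ∈ Y, f p q * rad (y q)) * rad (x p) -
        2 * ∑ p ∈ X, (∑ q ∈ Y, f p q * rad (y' q)) * rad (x p) := by
      rw [← mul_sub, ← Finset.sum_sub_distrib, Finset.mul_sum]
      refine Finset.sum_congr rfl fun p _ => ?_
      simp only [hlin]
      ring
    rw [e3]
    ring
  have hstep : av (fun x : ι → Bool => ind (|F x| < μ)) ^ 2 ≤
      av (fun y' : ι → Bool => av (fun y : ι → Bool => av (fun x : ι → Bool =>
      ind (|(YY y - YY y') + ∑ p ∈ X, (2 * lin p y y') * rad (x p)| < 2 * μ)))) := by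
    rw [← av_mix S]
    refine (av_sq_le _).trans ?_
    have h1 : ∀ x : ι → Bool, av (fun y => ind (|F (mix S x y)| < μ)) ^ 2 ≤
        av (fun y' : ι → Bool => av (fun y : ι → Bool => ind (|(YY y - YY y') + ∑ p ∈ X, (2 * lin p y y') * rad (x p)| <
          2 * μ))) := by
      intro x
      rw [sq, ← av_mul_left]
      refine av_mono fun y' => ?_
      rw [← av_mul_right]
      refine av_mono fun y => ?_
      rw [← ind_and, ← hdiff]
      refine ind_mono fun h => ?_
      have h2 := abs_sub (F (mix S x y)) (F (mix S x y'))
      linarith [h.1, h.2]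
    refine (av_mono h1).trans (le_of_eq ?_)
    rw [av_comm]
    congr 1
    ext y'
    rw [av_comm]
  refine hstep.trans (av_le_of_le fun y' => ?_)
  have hlight : av (fun y => ind (#(R.filter fun p => μ ≤ |lin p y y'|) < 2 * K)) ≤ 2 * lo K := by
    refine light_rows (good := fun p y => μ ≤ |lin p y y'|) ?_ hR (lo_nonneg K)
    intro p hp
    obtain ⟨A, hA, hAc, hAf⟩ := hRY p hp
    refine le_trans (av_mono fun y => ind_mono fun h => ?_)
      (lo_form (E := ι) (e := id) Function.injective_id hA hAc hAf (-∑ q ∈ Y, f p q * rad (y' q)))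
    exact not_le.1 h
  have hpt : ∀ y, av (fun x : ι → Bool =>
      ind (|(YY y - YY y') + ∑ p ∈ X, (2 * lin p y y') * rad (x p)| < 2 * μ)) ≤
      ind (#(R.filter fun p => μ ≤ |lin p y y'|) < 2 * K) + lo K := by
    intro y
    by_cases h : #(R.filter fun p => μ ≤ |lin p y y'|) < 2 * K
    · rw [ind_true h]
      have := av_ind_le_one (fun x : ι → Bool =>
        |(YY y - YY y') + ∑ p ∈ X, (2 * lin p y y') * rad (x p)| < 2 * μ)
      have := lo_nonneg K
      linarith
    · rw [ind_false h, zero_add]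
      exact lo_form (E := ι) (e := id) Function.injective_id
        ((Finset.filter_subset (fun p => μ ≤ |lin p y y'|) R).trans hRX) (not_lt.1 h)
        (b := fun p => 2 * lin p y y') (fun p hp => by
          have := (Finset.mem_filter.1 hp).2
          rw [abs_mul, abs_two]
          linarith) (YY y - YY y')
  refine (av_mono hpt).trans ?_
  rw [av_add, av_const]
  linarith

end Boost

/-! ### Quadratic forms with a dense set of large coefficients -/

section Dense

lemma exists_le_of_le_av {α : Type*} [Fintype α] [Nonempty α] {f : α → ℝ} {c : ℝ} (h : c ≤ av f) :
    ∃ a, c ≤ f a := by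
  by_contra hcon
  push Not at hcon
  have h1 : ∑ a, f a < ∑ _a : α, c :=
    Finset.sum_lt_sum_of_nonempty Finset.univ_nonempty fun a _ => hcon a
  have h2 : (0 : ℝ) < Fintype.card α := by exact_mod_cast Fintype.card_pos
  unfold av at h
  rw [le_div_iff₀ h2] at h
  simp only [Finset.sum_const, Finset.card_univ, nsmul_eq_mul] at h1
  linarith

lemma av_ind_card {α : Type*} [Fintype α] (p : α → Prop) [DecidablePred p] :
    av (fun a => ind (p a)) = #(univ.filter p) / (Fintype.card α : ℝ) := by
  unfold av ind
  congr 1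
  rw [Finset.card_filter]
  push_cast
  exact Finset.sum_congr rfl fun a _ => by split_ifs <;> rfl

/-- A function with values at most `1` and average at least `ρ` is at least `ρ / 2` on a proportion
at least `ρ / 2` of its domain. -/
lemma many_of_av {α : Type*} [Fintype α] [Nonempty α] {u : α → ℝ} (hu : ∀ a, u a ≤ 1) {ρ : ℝ}
    (hρ0 : 0 ≤ ρ) (hρ : ρ ≤ av u) [DecidablePred fun a => ρ / 2 ≤ u a] :
    ρ / 2 * Fintype.card α ≤ #(univ.filter fun a => ρ / 2 ≤ u a) := by
  have h1 : av u ≤ av (fun a => ind (ρ / 2 ≤ u a) + ρ / 2) := by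
    refine av_mono fun a => ?_
    by_cases h : ρ / 2 ≤ u a
    · rw [ind_true h]; linarith [hu a]
    · rw [ind_false h]; linarith
  have h2 : (0 : ℝ) < Fintype.card α := by exact_mod_cast Fintype.card_pos
  rw [av_add, av_const, av_ind_card] at h1
  rw [← le_div_iff₀ h2]
  linarith

variable {ι : Type*} [Fintype ι] [DecidableEq ι] {β : Type*} [Fintype β] [DecidableEq β]
  [Nonempty β] {j : β → ι}

/-- Splitting a set at random into two parts, a quarter of the ordered pairs go from the first part
to the second on average. -/
lemma exists_split {P : β → β → Prop} (hP : ∀ p q, P p q → p ≠ q) {ρ : ℝ}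
    (hρ : ρ ≤ av (fun p => av (fun q => ind (P p q)))) : ∃ z : β → Bool,
    ρ / 4 ≤ av (fun p => av (fun q => ind (z p = true ∧ z q = false ∧ P p q))) := by
  refine exists_le_of_le_av ?_
  have key : ∀ p q, ind (P p q) / 4 ≤
      av (fun z : β → Bool => ind (z p = true ∧ z q = false ∧ P p q)) := by
    intro p q
    by_cases h : P p q
    · rw [ind_true h]
      refine quarter p q fun z => ⟨true, false, ?_⟩
      have := hP p q h
      simp [Function.update_of_ne this, h]
    · rw [ind_false h, zero_div]
      exact av_nonneg fun _ => ind_nonneg _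
  calc ρ / 4 ≤ av (fun p => av (fun q => ind (P p q) / 4)) := by
        simp_rw [div_eq_mul_inv, av_mul_right]
        linarith
    _ ≤ av (fun p => av (fun q => av (fun z : β → Bool =>
          ind (z p = true ∧ z q = false ∧ P p q)))) := av_mono fun p => av_mono fun q => key p q
    _ = _ := by
        conv_rhs => rw [av_comm]
        congr 1
        ext p
        rw [av_comm]

/-- If a positive proportion of the coefficients of a quadratic form in random signs are at least
`μ` in absolute value, then the form is unlikely to be smaller than `μ` in absolute value. -/
lemma quad_dense (hj : Function.Injective j) {A : Finset ι} {w : ι} (hw : w ∉ A) {f : ι → ι → ℝ}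
    (hf : ∀ a b, f a b = f b a) {c μ ρ : ℝ} {K : ℕ} (hρ0 : 0 < ρ)
    (hK : 32 * (K : ℝ) ≤ ρ * Fintype.card β)
    (hρ : ρ ≤ av (fun p : β => av (fun q : β =>
      ind (p ≠ q ∧ j p ∈ A ∧ j q ∈ A ∧ μ ≤ |f (j p) (j q)|)))) :
    av (fun x : ι → Bool => ind (|c * rad (x w) + ∑ q ∈ A, ∑ p ∈ A,
      rad (x q) * rad (x p) * f p q| < μ)) ^ 2 ≤ 3 * lo K := by
  classical
  obtain ⟨z, hz⟩ := exists_split (fun p q h => h.1) hρ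
  set hv : β → β → Prop := fun p q => z p = true ∧ z q = false ∧ p ≠ q ∧ j p ∈ A ∧ j q ∈ A ∧
    μ ≤ |f (j p) (j q)| with hhv
  set u : β → ℝ := fun p => av (fun q => ind (hv p q)) with hu
  have h1 := many_of_av (u := u) (fun p => av_ind_le_one _) (by linarith) hz
  set R₀ : Finset β := univ.filter fun p => ρ / 4 / 2 ≤ u p with hR₀
  have hg : (0 : ℝ) < Fintype.card β := by exact_mod_cast Fintype.card_pos
  have hrow : ∀ p ∈ R₀, 4 * (K : ℝ) ≤ #(univ.filter fun q => hv p q) := by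
    intro p hp
    have h2 := (Finset.mem_filter.1 hp).2
    simp only [hu] at h2
    rw [av_ind_card, le_div_iff₀ hg] at h2
    linarith
  have hrowne : ∀ p ∈ R₀, ∃ q, hv p q := by
    intro p hp
    have h2 := (Finset.mem_filter.1 hp).2
    by_contra hcon
    push Not at hcon
    have h3 : u p = 0 := by
      simp only [hu]
      simp_rw [fun q => ind_false (hcon q)]
      rw [av_const]
    rw [h3] at h2
    linarith
  set X : Finset ι := A.filter fun i => ∃ p, z p = true ∧ j p = i with hX
  set Y : Finset ι := A \ X with hY
  have hA : A = X ∪ Y := by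
    rw [hY, Finset.union_sdiff_of_subset (Finset.filter_subset _ _)]
  rw [hA]
  refine quad (R := R₀.image j) Finset.disjoint_sdiff (fun h => hw (Finset.mem_sdiff.1 h).1) hf
    ?_ ?_ ?_
  · intro i hi
    obtain ⟨p, hp, rfl⟩ := Finset.mem_image.1 hi
    obtain ⟨q, hq⟩ := hrowne p hp
    exact Finset.mem_filter.2 ⟨hq.2.2.2.1, p, hq.1, rfl⟩
  · rw [Finset.card_image_of_injective _ hj]
    have : (4 * K : ℝ) ≤ #R₀ := by linarith
    have : 4 * K ≤ #R₀ := by exact_mod_cast this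
    omega
  · intro i hi
    obtain ⟨p, hp, rfl⟩ := Finset.mem_image.1 hi
    refine ⟨(univ.filter fun q => hv p q).image j, ?_, ?_, ?_⟩
    · intro i hi
      obtain ⟨q, hq, rfl⟩ := Finset.mem_image.1 hi
      have hq := (Finset.mem_filter.1 hq).2
      refine Finset.mem_sdiff.2 ⟨hq.2.2.2.2.1, fun h => ?_⟩
      obtain ⟨q', hq', he⟩ := (Finset.mem_filter.1 h).2
      rw [hj he, hq.2.1] at hq'
      exact absurd hq' (by simp)
    · rw [Finset.card_image_of_injective _ hj]
      have : 4 * K ≤ #(univ.filter fun q => hv p q) := by exact_mod_cast hrow p hp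
      omega
    · intro i hi
      obtain ⟨q, hq, rfl⟩ := Finset.mem_image.1 hi
      exact (Finset.mem_filter.1 hq).2.2.2.2.2.2

/-- If a positive proportion of the permanents obtained from the index set `A` by deleting one row
and a different column are large, then adding one index to `A` makes the permanent large with high
probability. -/
lemma square_dense (hj : Function.Injective j) {A : Finset ι} {w : ι} (hw : w ∉ A)
    (ω : Sym2 ι → Bool) {μ ρ : ℝ} {K : ℕ} (hρ0 : 0 < ρ) (hK : 32 * (K : ℝ) ≤ ρ * Fintype.card β)
    (hρ : ρ ≤ av (fun p : β => av (fun q : β =>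
      ind (p ≠ q ∧ j p ∈ A ∧ j q ∈ A ∧ μ ≤ |per ω (A.erase (j p)) (A.erase (j q))|)))) :
    av (fun ω' => ind (|per (mix (ins A) ω ω') (insert w A) (insert w A)| < μ)) ^ 2 ≤ 3 * lo K := by
  refine le_trans (le_of_eq ?_) (quad_dense (K := K) (c := per ω A A) hj hw
    (f := fun a b => per ω (A.erase a) (A.erase b)) (fun a b => per_symm _ _ _) hρ0 hK hρ)
  rw [← av_restrict (fun i => s(w, i)) (pair_right_injective w)]
  congr 2
  ext ω'
  have hnot : ∀ i, s(w, i) ∉ ins A := fun i h => hw (mem_ins.1 h).1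
  have h1 : ∀ I' ⊆ A, ∀ J' ⊆ A, pm (ent (mix (ins A) ω ω')) I' J' = per ω I' J' :=
    fun I' hI' J' hJ' => per_congr_ins (fun e he => mix_of_mem he _ _) hI' hJ'
  have h2 : per (mix (ins A) ω ω') (insert w A) (insert w A) = per ω A A * rad (ω' s(w, w)) +
      ∑ q ∈ A, ∑ p ∈ A, rad (ω' s(w, q)) * rad (ω' s(w, p)) *
        per ω (A.erase p) (A.erase q) := by
    unfold per
    rw [pm_double _ hw hw, h1 A subset_rfl A subset_rfl, mul_comm]
    congr 1
    · simp only [ent]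
      rw [mix_of_notMem (hnot w)]
      rfl
    · refine Finset.sum_congr rfl fun q _ => Finset.sum_congr rfl fun p _ => ?_
      rw [h1 _ (Finset.erase_subset _ _) _ (Finset.erase_subset _ _), ent_symm _ p w]
      simp only [ent]
      rw [mix_of_notMem (hnot q), mix_of_notMem (hnot p)]
      rfl
  rw [h2]
  rfl

end Dense

/-! ### Densities of large principal minors -/

section Density

variable {ι : Type*} [DecidableEq ι] {β : Type*} [Fintype β]

/-- The average of `h (A \ {j b₁, …, j bₘ})` over `b₁, …, bₘ`, where the tuples for which
`j b₁, …, j bₘ` are not distinct elements of `A` contribute `0`. -/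
noncomputable def dm (j : β → ι) : ℕ → (Finset ι → ℝ) → Finset ι → ℝ
  | 0, h, A => h A
  | m + 1, h, A => av (fun b => ind (j b ∈ A) * dm j m h (A.erase (j b)))

variable {j : β → ι}

lemma dm_mono {h h' : Finset ι → ℝ} (m : ℕ) : ∀ {A : Finset ι}, (∀ A' ⊆ A, h A' ≤ h' A') →
    dm j m h A ≤ dm j m h' A := by
  induction m with
  | zero => exact fun hh => hh _ subset_rfl
  | succ m ih =>
    intro A hh
    exact av_mono fun b => mul_le_mul_of_nonneg_left
      (ih fun A' hA' => hh A' (hA'.trans (Finset.erase_subset _ _))) (ind_nonneg _)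

lemma dm_add (h h' : Finset ι → ℝ) (m : ℕ) : ∀ A : Finset ι,
    dm j m (fun A' => h A' + h' A') A = dm j m h A + dm j m h' A := by
  induction m with
  | zero => exact fun A => rfl
  | succ m ih =>
    intro A
    simp only [dm, ih, mul_add, av_add]

lemma dm_const_le [Nonempty β] {c : ℝ} (hc : 0 ≤ c) (m : ℕ) : ∀ A : Finset ι,
    dm j m (fun _ => c) A ≤ c := by
  induction m with
  | zero => exact fun A => le_refl _
  | succ m ih =>
    intro A
    refine av_le_of_le fun b => ?_
    have h1 := ind_le_one (j b ∈ A)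
    have h2 := ind_nonneg (j b ∈ A)
    nlinarith [ih (A.erase (j b))]

lemma dm_nonneg {h : Finset ι → ℝ} (hh : ∀ A, 0 ≤ h A) (m : ℕ) : ∀ A : Finset ι, 0 ≤ dm j m h A := by
  induction m with
  | zero => exact fun A => hh A
  | succ m ih => exact fun A => av_nonneg fun b => mul_nonneg (ind_nonneg _) (ih _)

lemma dm_comp (h : Finset ι → ℝ) (m k : ℕ) : ∀ A : Finset ι,
    dm j (m + k) h A = dm j m (dm j k h) A := by
  induction m with
  | zero => intro A; rw [zero_add]; rfl
  | succ m ih =>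
    intro A
    rw [Nat.succ_add]
    simp only [dm, ih]

lemma av_dm {α : Type*} [Fintype α] (h : α → Finset ι → ℝ) (m : ℕ) : ∀ A : Finset ι,
    av (fun a => dm j m (h a) A) = dm j m (fun A' => av (fun a => h a A')) A := by
  induction m with
  | zero => intro A; rfl
  | succ m ih =>
    intro A
    simp only [dm]
    rw [av_comm]
    simp only [av_mul_left, ih]

lemma dm_insert {w : ι} (hw : ∀ b, j b ≠ w) (h : Finset ι → ℝ) (m : ℕ) : ∀ A : Finset ι,
    dm j m h (insert w A) = dm j m (fun A' => h (insert w A')) A := by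
  induction m with
  | zero => intro A; rfl
  | succ m ih =>
    intro A
    simp only [dm]
    congr 1
    ext b
    rw [Finset.erase_insert_of_ne (hw b).symm, ih]
    congr 2
    simp [hw b]

variable [Fintype ι]

/-- The event, as an indicator, that the principal minor (in the sense of permanents) with index set
`A` is at least `lam` in absolute value. -/
noncomputable def big (lam : ℝ) (ω : Sym2 ι → Bool) (A : Finset ι) : ℝ := ind (lam ≤ |per ω A A|)

variable [Nonempty β] [DecidableEq β]

/-- Adding the index `w` to the index set turns a positive density of large principal minors with
`m + 3` deleted indices into a positive density of large ones with `m` deleted indices. -/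
lemma boost (hj : Function.Injective j) {w : ι} {T : Finset ι} (hwT : w ∉ T) (hwj : ∀ b, j b ≠ w)
    {ρ ρ' lam : ℝ} {s K K' K₂ : ℕ} (hs0 : 0 < s) (hK0 : 0 < K) (hk : 8 * K' ≤ s)
    (hρ : 0 < ρ) (hρ' : 0 < ρ') (hρs : 4 * (K' : ℝ) + s * (2 * K) ≤ ρ * Fintype.card β)
    (hρK : 32 * (K₂ : ℝ) ≤ ρ' * Fintype.card β) (h0 : 0 ≤ lam) (m : ℕ) :
    ∃ loss : (Sym2 ι → Bool) → ℝ, (∀ ω, dm j (m + 3) (big lam ω) T ≤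
      dm j m (big (lam / (4 * s)) ω) (insert w T) + loss ω) ∧ (∀ ω, 0 ≤ loss ω) ∧
      av loss ≤ (ρ + ρ') + ((2 * lo K + 4 / s) + lo K') + √(3 * lo K₂) := by
  classical
  have hg : (0 : ℝ) < Fintype.card β := by exact_mod_cast Fintype.card_pos
  set μ : ℝ := lam / (4 * s) with hμ
  set η₁ : ℝ := (2 * lo K + 4 / s) + lo K' with hη₁
  set η₂ : ℝ := √(3 * lo K₂) with hη₂
  have hη₁0 : 0 ≤ η₁ := by
    have := lo_nonneg K
    have := lo_nonneg K'
    positivity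
  have hη₂0 : 0 ≤ η₂ := Real.sqrt_nonneg _
  set rich : (Sym2 ι → Bool) → Finset ι → Prop := fun ω C => ρ ≤ dm j 1 (big lam ω) C with hrich
  set g₂ : (Sym2 ι → Bool) → Finset ι → ℝ := fun ω A => av (fun p : β => av (fun q : β =>
    ind (p ≠ q ∧ j p ∈ A ∧ j q ∈ A ∧ μ ≤ |per ω (A.erase (j p)) (A.erase (j q))|))) with hg₂
  set bad : (Sym2 ι → Bool) → Finset ι → ℝ := fun ω A => av (fun p : β => av (fun q : β =>
    ind (p ≠ q ∧ j p ∈ A ∧ j q ∈ A ∧ rich ω ((A.erase (j p)).erase (j q)) ∧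
      ¬ μ ≤ |per ω (A.erase (j p)) (A.erase (j q))|))) with hbad
  set bad' : (Sym2 ι → Bool) → Finset ι → ℝ := fun ω A =>
    ind (ρ' ≤ g₂ ω A ∧ |per ω (insert w A) (insert w A)| < μ) with hbad'
  -- the minors counted by `dm j 1 (big lam ω) C` only see the entries indexed by `C`
  have hloc : ∀ (ω ω' : Sym2 ι → Bool) (C : Finset ι),
      dm j 1 (big lam (mix (ins C) ω ω')) C = dm j 1 (big lam ω) C := by
    intro ω ω' C
    simp only [dm, big]
    congr 1
    ext b
    rw [per_congr_ins (fun e he => mix_of_mem he ω ω') (Finset.erase_subset _ _)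
      (Finset.erase_subset _ _)]
  have hEbad : ∀ A, av (fun ω => bad ω A) ≤ η₁ := by
    intro A
    simp only [hbad]
    rw [av_comm]
    refine av_le_of_le fun p => ?_
    rw [av_comm]
    refine av_le_of_le fun q => ?_
    by_cases hpq : p ≠ q ∧ j p ∈ A ∧ j q ∈ A
    swap
    · have : ∀ ω : Sym2 ι → Bool, ind (p ≠ q ∧ j p ∈ A ∧ j q ∈ A ∧
          rich ω ((A.erase (j p)).erase (j q)) ∧
          ¬ μ ≤ |per ω (A.erase (j p)) (A.erase (j q))|) = 0 := fun ω =>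
        ind_false fun h => hpq ⟨h.1, h.2.1, h.2.2.1⟩
      simp_rw [this]
      rw [av_const]
      exact hη₁0
    obtain ⟨hne, hpA, hqA⟩ := hpq
    have hjne : j p ≠ j q := fun h => hne (hj h)
    set C := (A.erase (j p)).erase (j q) with hC
    have hCq : insert (j q) C = A.erase (j p) :=
      Finset.insert_erase (Finset.mem_erase.2 ⟨hjne.symm, hqA⟩)
    have hCp : insert (j p) C = A.erase (j q) := by
      rw [hC, Finset.erase_right_comm]
      exact Finset.insert_erase (Finset.mem_erase.2 ⟨hjne, hpA⟩)
    rw [← av_mix (ins C)]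
    refine av_le_of_le fun ω => ?_
    by_cases hr : rich ω C
    swap
    · have : ∀ ω' : Sym2 ι → Bool, ind (p ≠ q ∧ j p ∈ A ∧ j q ∈ A ∧ rich (mix (ins C) ω ω') C ∧
          ¬ μ ≤ |per (mix (ins C) ω ω') (A.erase (j p)) (A.erase (j q))|) = 0 := fun ω' =>
        ind_false fun h => hr (by
          have := h.2.2.2.1
          simp only [hrich] at this ⊢
          rwa [hloc] at this)
      simp_rw [this]
      rw [av_const]
      exact hη₁0
    set H₀ : Finset β := univ.filter fun b =>
      j b ∈ C ∧ lam ≤ |per ω (C.erase (j b)) (C.erase (j b))| with hH₀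
    have hH₀c : ρ * Fintype.card β ≤ #H₀ := by
      simp only [hrich, dm, big] at hr
      simp_rw [← ind_and] at hr
      rw [av_ind_card, le_div_iff₀ hg] at hr
      exact hr
    have hHc : 4 * K' + s * (2 * K) ≤ #(H₀.image j) := by
      rw [Finset.card_image_of_injective _ hj]
      exact_mod_cast hρs.trans hH₀c
    refine le_trans (av_mono fun ω' => ?_) (offdiag (C := C) (H := H₀.image j) (p := j p) (q := j q)
      hjne ?_ ?_ ?_ hs0 hK0 hk hHc ω h0 ?_)
    · rw [hCq, hCp]
      exact ind_mono fun h => h.2.2.2.2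
    · simp [hC]
    · simp [hC]
    · intro i hi
      obtain ⟨b, hb, rfl⟩ := Finset.mem_image.1 hi
      exact (Finset.mem_filter.1 hb).2.1
    · intro i hi
      obtain ⟨b, hb, rfl⟩ := Finset.mem_image.1 hi
      exact (Finset.mem_filter.1 hb).2.2
  have hEbad' : ∀ A, w ∉ A → av (fun ω => bad' ω A) ≤ η₂ := by
    intro A hwA
    simp only [hbad']
    rw [← av_mix (ins A)]
    refine av_le_of_le fun ω => ?_
    have hgloc : ∀ ω', g₂ (mix (ins A) ω ω') A = g₂ ω A := by
      intro ω'
      simp only [hg₂]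
      congr 1
      ext p
      congr 1
      ext q
      rw [per_congr_ins (fun e he => mix_of_mem he ω ω') (Finset.erase_subset _ _)
        (Finset.erase_subset _ _)]
    by_cases hr : ρ' ≤ g₂ ω A
    swap
    · have : ∀ ω', ind (ρ' ≤ g₂ (mix (ins A) ω ω') A ∧
          |per (mix (ins A) ω ω') (insert w A) (insert w A)| < μ) = 0 := fun ω' =>
        ind_false fun h => hr (by rw [← hgloc ω']; exact h.1)
      simp_rw [this]
      rw [av_const]
      exact hη₂0
    refine (av_mono fun ω' => ind_mono fun h => h.2).trans ?_
    exact Real.le_sqrt_of_sq_le (square_dense hj hwA ω hρ' hρK hr)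
  have hpt : ∀ ω, ∀ A ⊆ T, dm j 3 (big lam ω) A ≤
      big μ ω (insert w A) + (((ρ + ρ') + bad ω A) + bad' ω A) := by
    intro ω A _
    have h1 : dm j 3 (big lam ω) A ≤ dm j 2 (fun C => ρ + ind (rich ω C)) A := by
      rw [dm_comp _ 2 1]
      refine dm_mono 2 fun C _ => ?_
      by_cases hr : rich ω C
      · rw [ind_true hr]
        have : dm j 1 (big lam ω) C ≤ dm j 1 (fun _ => (1 : ℝ)) C :=
          dm_mono 1 fun C' _ => ind_le_one _
        have := dm_const_le (j := j) zero_le_one 1 C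
        linarith
      · rw [ind_false hr]
        have := not_le.1 hr
        linarith
    have h2 : dm j 2 (fun C => ρ + ind (rich ω C)) A ≤ ρ + (g₂ ω A + bad ω A) := by
      rw [dm_add]
      refine add_le_add (dm_const_le hρ.le 2 A) ?_
      simp only [hg₂, hbad]
      rw [← av_add]
      simp_rw [← av_add]
      simp only [dm]
      simp_rw [← av_mul_left]
      refine av_mono fun p => av_mono fun q => ?_
      rw [← ind_and, ← ind_and]
      refine le_trans (ind_mono ?_) (ind_or_le _ _)
      rintro ⟨hp, hq, hr⟩
      obtain ⟨hqp, hq⟩ := Finset.mem_erase.1 hq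
      have hne : p ≠ q := fun h => hqp (h ▸ rfl)
      by_cases hl : μ ≤ |per ω (A.erase (j p)) (A.erase (j q))|
      · exact Or.inl ⟨hne, hp, hq, hl⟩
      · exact Or.inr ⟨hne, hp, hq, hr, hl⟩
    have h3 : g₂ ω A ≤ ρ' + (big μ ω (insert w A) + bad' ω A) := by
      have hb0 : 0 ≤ big μ ω (insert w A) := ind_nonneg _
      have hb1 : 0 ≤ bad' ω A := ind_nonneg _
      by_cases hr : ρ' ≤ g₂ ω A
      · have h4 : g₂ ω A ≤ 1 := av_le_of_le fun p => av_ind_le_one _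
        by_cases hl : μ ≤ |per ω (insert w A) (insert w A)|
        · have : big μ ω (insert w A) = 1 := ind_true hl
          linarith
        · have : bad' ω A = 1 := ind_true ⟨hr, not_le.1 hl⟩
          linarith
      · have := not_le.1 hr
        linarith
    linarith
  refine ⟨fun ω => dm j m (fun A => (((ρ + ρ') + bad ω A) + bad' ω A)) T, fun ω => ?_, fun ω => ?_, ?_⟩
  · rw [dm_comp, dm_insert hwj, ← dm_add]
    exact dm_mono m (hpt ω)
  · refine dm_nonneg (fun A => ?_) m T
    have h1 : 0 ≤ bad ω A := av_nonneg fun p => av_nonneg fun q => ind_nonneg _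
    have h2 : 0 ≤ bad' ω A := ind_nonneg _
    positivity
  · rw [av_dm]
    refine le_trans (dm_mono m (h' := fun _ => (ρ + ρ') + η₁ + η₂) fun A hA => ?_)
      (dm_const_le (by positivity) m T)
    rw [av_add, av_add, av_const]
    have := hEbad A
    have := hEbad' A fun h => hwT (hA h)
    linarith

end Density

/-! ### Adding several indices -/

section Iterate

lemma lo_zero : lo 0 = 1 := by simp [lo]

lemma exists_lo_pos {ε : ℝ} (hε : 0 < ε) : ∃ n : ℕ, 0 < n ∧ lo n ≤ ε := by
  obtain ⟨n, hn⟩ := exists_lo (ε := min ε (1 / 2)) (by positivity)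
  refine ⟨n, Nat.pos_of_ne_zero ?_, hn.trans (min_le_left _ _)⟩
  rintro rfl
  rw [lo_zero] at hn
  have := hn.trans (min_le_right _ _)
  norm_num at this

/-- The statement of `boost` with its parameters chosen so that the loss is at most `ε`. The factor
`c` and the bound `g₀` depend on `ε` only. -/
lemma boost_eps {ε : ℝ} (hε : 0 < ε) : ∃ c : ℝ, 0 < c ∧ ∃ g₀ : ℕ, ∀ n g : ℕ, 0 < g → g₀ ≤ g →
    ∀ j : Fin g → Fin n, Function.Injective j → ∀ (w : Fin n) (T : Finset (Fin n)), w ∉ T →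
    (∀ b, j b ≠ w) → ∀ lam : ℝ, 0 ≤ lam → ∀ m : ℕ,
    ∃ loss : (Sym2 (Fin n) → Bool) → ℝ, (∀ ω, dm j (m + 3) (big lam ω) T ≤
      dm j m (big (c * lam) ω) (insert w T) + loss ω) ∧ (∀ ω, 0 ≤ loss ω) ∧ av loss ≤ ε := by
  obtain ⟨K, hK0, hK⟩ := exists_lo_pos (ε := ε / 10) (by positivity)
  obtain ⟨K₂, -, hK₂⟩ := exists_lo_pos (ε := (ε / 10) ^ 2 / 3) (by positivity)
  obtain ⟨s₁, hs₁⟩ := exists_nat_ge (40 / ε)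
  set s : ℕ := s₁ + 8 * K with hs
  have hs0 : 0 < s := by omega
  have hsR : (0 : ℝ) < s := by exact_mod_cast hs0
  obtain ⟨g₀, hg₀⟩ := exists_nat_ge ((4 * (K : ℝ) + s * (2 * K) + 32 * K₂) / (ε / 10))
  refine ⟨1 / (4 * s), by positivity, g₀, ?_⟩
  intro n g hg hgg j hj w T hwT hwj lam h0 m
  have hgne : Nonempty (Fin g) := ⟨⟨0, hg⟩⟩
  have hgR : 4 * (K : ℝ) + s * (2 * K) + 32 * K₂ ≤ ε / 10 * (Fintype.card (Fin g) : ℝ) := by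
    rw [Fintype.card_fin]
    rw [div_le_iff₀ (by positivity)] at hg₀
    have : (g₀ : ℝ) ≤ g := by exact_mod_cast hgg
    nlinarith
  have e1 : (0 : ℝ) ≤ K := Nat.cast_nonneg _
  have e2 : (0 : ℝ) ≤ K₂ := Nat.cast_nonneg _
  have e3 : (0 : ℝ) ≤ s * (2 * K) := by positivity
  obtain ⟨loss, h1, h2, h3⟩ := boost hj hwT hwj (ρ := ε / 10) (ρ' := ε / 10) (s := s) (K := K)
    (K' := K) (K₂ := K₂) hs0 hK0 (by omega) (by positivity) (by positivity) (by linarith)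
    (by linarith) h0 m
  refine ⟨loss, fun ω => ?_, h2, h3.trans ?_⟩
  · have : 1 / (4 * (s : ℝ)) * lam = lam / (4 * s) := by ring
    rw [this]
    exact h1 ω
  · have h4 : 4 / (s : ℝ) ≤ ε / 10 := by
      have : 40 / ε ≤ s := hs₁.trans (by rw [hs]; push_cast; linarith)
      rw [div_le_iff₀ hε] at this
      rw [div_le_iff₀ hsR]
      linarith
    have h5 : √(3 * lo K₂) ≤ ε / 10 := by
      rw [Real.sqrt_le_left (by positivity)]
      linarith
    linarith

/-- Adding the indices of a set `W` one at a time. -/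
lemma boost_iter {n g : ℕ} {j : Fin g → Fin n} {c ε : ℝ} (hc : 0 < c)
    (hboost : ∀ (w : Fin n) (T : Finset (Fin n)), w ∉ T →
    (∀ b, j b ≠ w) → ∀ lam : ℝ, 0 ≤ lam → ∀ m : ℕ,
    ∃ loss : (Sym2 (Fin n) → Bool) → ℝ, (∀ ω, dm j (m + 3) (big lam ω) T ≤
      dm j m (big (c * lam) ω) (insert w T) + loss ω) ∧ (∀ ω, 0 ≤ loss ω) ∧ av loss ≤ ε)
    (W : Finset (Fin n)) : ∀ T : Finset (Fin n), Disjoint W T → (∀ b, j b ∉ W) →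
    ∀ lam : ℝ, 0 ≤ lam → ∃ loss : (Sym2 (Fin n) → Bool) → ℝ,
    (∀ ω, dm j (3 * #W) (big lam ω) T ≤ big (c ^ #W * lam) ω (T ∪ W) + loss ω) ∧
    (∀ ω, 0 ≤ loss ω) ∧ av loss ≤ #W * ε := by
  induction W using Finset.induction_on with
  | empty =>
    intro T _ _ lam _
    refine ⟨fun _ => 0, fun ω => ?_, fun _ => le_refl _, ?_⟩
    · simp [dm]
    · rw [av_const]; simp
  | insert w W hw ih =>
    intro T hT hj lam h0
    rw [Finset.disjoint_insert_left] at hT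
    obtain ⟨l₁, h1, h2, h3⟩ := hboost w T hT.1
      (fun b h => hj b (h ▸ Finset.mem_insert_self _ _)) lam h0 (3 * #W)
    obtain ⟨l₂, k1, k2, k3⟩ := ih (insert w T) (Finset.disjoint_insert_right.2 ⟨hw, hT.2⟩)
      (fun b h => hj b (Finset.mem_insert_of_mem h)) (c * lam) (by positivity)
    refine ⟨fun ω => l₂ ω + l₁ ω, fun ω => ?_, fun ω => add_nonneg (k2 ω) (h2 ω), ?_⟩
    · have e1 : T ∪ insert w W = insert w T ∪ W := by
        rw [Finset.union_insert, Finset.insert_union]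
      have e2 : c ^ #(insert w W) * lam = c ^ #W * (c * lam) := by
        rw [Finset.card_insert_of_notMem hw]; ring
      have e3 : 3 * #(insert w W) = 3 * #W + 3 := by
        rw [Finset.card_insert_of_notMem hw]; ring
      rw [e1, e2, e3]
      linarith [h1 ω, k1 ω]
    · rw [av_add, Finset.card_insert_of_notMem hw]
      push_cast
      linarith

end Iterate

/-! ### Random tuples and densities -/

section Tuples

variable {ι : Type*} [DecidableEq ι] {β : Type*} [Fintype β] [DecidableEq β] {j : β → ι}

/-- The density of a nonnegative function dominates its average over injective tuples. -/
lemma dm_tuple (hj : Function.Injective j) {h : Finset ι → ℝ} (hh : ∀ A, 0 ≤ h A) (l : ℕ) : ∀ A : Finset ι,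
    av (fun z : Fin l → β => ind (Function.Injective z ∧ ∀ i, j (z i) ∈ A) *
      h (A \ univ.image fun i => j (z i))) ≤ dm j l h A := by
  induction l with
  | zero =>
    intro A
    refine av_le_of_le fun z => ?_
    simp only [dm, Finset.univ_eq_empty, Finset.image_empty, Finset.sdiff_empty]
    nlinarith [ind_le_one (Function.Injective z ∧ ∀ i, j (z i) ∈ A), hh A]
  | succ l ih =>
    intro A
    rw [← av_equiv (Fin.consEquiv fun _ : Fin (l + 1) => β), av_prod]
    refine av_mono fun b => ?_
    by_cases hb : j b ∈ A
    · rw [ind_true hb, one_mul]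
      refine le_trans (av_mono fun z => ?_) (ih (A.erase (j b)))
      have himg : (A \ univ.image fun i : Fin (l + 1) =>
          j ((Fin.consEquiv fun _ : Fin (l + 1) => β) (b, z) i)) =
          A.erase (j b) \ univ.image fun i => j (z i) := by
        ext x
        simp only [Finset.mem_sdiff, Finset.mem_image, Finset.mem_univ, true_and,
          Finset.mem_erase, Fin.consEquiv_apply, Fin.exists_fin_succ, Fin.cons_zero, Fin.cons_succ]
        constructor
        · rintro ⟨h1, h2⟩
          push Not at h2
          exact ⟨⟨fun h => h2.1 h.symm, h1⟩, fun ⟨i, hi⟩ => h2.2 i hi⟩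
        · rintro ⟨⟨h1, h2⟩, h3⟩
          refine ⟨h2, ?_⟩
          rintro (h | h)
          · exact h1 h.symm
          · exact h3 h
      rw [himg]
      refine mul_le_mul_of_nonneg_right (ind_mono ?_) (hh _)
      rintro ⟨h1, h2⟩
      replace h1 : Function.Injective (Fin.cons b z : Fin (l + 1) → β) := h1
      rw [Fin.cons_injective_iff] at h1
      refine ⟨h1.2, fun i => Finset.mem_erase.2 ⟨fun h => h1.1 ⟨i, hj h⟩, ?_⟩⟩
      simpa using h2 i.succ
    · rw [ind_false hb, zero_mul]
      have : Nonempty β := ⟨b⟩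
      refine av_le_of_le fun z => ?_
      rw [ind_false fun h => hb (by simpa using h.2 0), zero_mul]

lemma av_coincide [Nonempty β] {f : ℕ} {i k : Fin f} (hik : i ≠ k) :
    av (fun φ : Fin f → β => ind (φ i = φ k)) = 1 / Fintype.card β := by
  have hinj : Function.Injective (![i, k] : Fin 2 → Fin f) := by
    intro a b h
    fin_cases a <;> fin_cases b <;> simp_all
  have h1 := av_restrict (β := β) (![i, k] : Fin 2 → Fin f) hinj (fun z => ind (z 0 = z 1))
  have h2 : av (fun φ : Fin f → β => ind (φ i = φ k)) = av (fun z : Fin 2 → β => ind (z 0 = z 1)) := by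
    rw [← h1]
    rfl
  rw [h2, ← av_equiv (finTwoArrowEquiv β).symm, av_prod]
  have h3 : ∀ a : β, av (fun b => ind ((finTwoArrowEquiv β).symm (a, b) 0 =
      (finTwoArrowEquiv β).symm (a, b) 1)) = 1 / Fintype.card β := by
    intro a
    classical
    rw [av_ind_card]
    congr 1
    simp [Finset.filter_eq]
  simp_rw [h3]
  rw [av_const]

lemma av_not_injective [Nonempty β] (f : ℕ) :
    av (fun φ : Fin f → β => ind (¬ Function.Injective φ)) ≤ f ^ 2 / Fintype.card β := by
  have h1 : ∀ φ : Fin f → β, ind (¬ Function.Injective φ) ≤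
      ∑ i : Fin f, ∑ k : Fin f, if i = k then 0 else ind (φ i = φ k) := by
    intro φ
    have hnn : ∀ i k : Fin f, (0 : ℝ) ≤ if i = k then 0 else ind (φ i = φ k) := by
      intro i k
      split_ifs
      · exact le_refl _
      · exact ind_nonneg _
    by_cases h : Function.Injective φ
    · rw [ind_false (not_not.2 h)]
      exact Finset.sum_nonneg fun i _ => Finset.sum_nonneg fun k _ => hnn i k
    · rw [ind_true h]
      unfold Function.Injective at h
      push Not at h
      obtain ⟨i, k, he, hne⟩ := h
      calc (1 : ℝ) = if i = k then 0 else ind (φ i = φ k) := by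
            rw [if_neg hne, ind_true he]
        _ ≤ ∑ k : Fin f, if i = k then 0 else ind (φ i = φ k) :=
            Finset.single_le_sum (fun k _ => hnn i k) (Finset.mem_univ k)
        _ ≤ _ := Finset.single_le_sum
            (f := fun i => ∑ k : Fin f, if i = k then 0 else ind (φ i = φ k))
            (fun i _ => Finset.sum_nonneg fun k _ => hnn i k) (Finset.mem_univ i)
  refine (av_mono h1).trans ?_
  rw [av_sum]
  simp_rw [av_sum]
  have h2 : ∀ i k : Fin f, av (fun φ : Fin f → β => if i = k then 0 else ind (φ i = φ k)) ≤
      1 / Fintype.card β := by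
    intro i k
    by_cases h : i = k
    · simp only [if_pos h]
      rw [av_const]
      positivity
    · simp only [if_neg h]
      exact (av_coincide h).le
  refine (Finset.sum_le_sum fun i _ => Finset.sum_le_sum fun k _ => h2 i k).trans (le_of_eq ?_)
  simp
  ring

/-- If a random tuple of indices is likely to contain a good set of `l` indices, then the good sets
of `l` indices have positive density. -/
lemma tuple_le_dm [Nonempty β] (hj : Function.Injective j) {A : Finset ι} (hjA : ∀ b, j b ∈ A)
    {P : Finset ι → Prop} (f l : ℕ) :
    av (fun φ : Fin f → β => ind (Function.Injective φ ∧
      ∃ Z ⊆ univ.image (fun i => j (φ i)), #Z = l ∧ P (A \ Z))) ≤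
    f ^ l * dm j l (fun A => ind (P A)) A := by
  classical
  set Es : Finset (Fin l → Fin f) := univ.filter fun e => Function.Injective e with hEs
  have h1 : ∀ φ : Fin f → β, ind (Function.Injective φ ∧
      ∃ Z ⊆ univ.image (fun i => j (φ i)), #Z = l ∧ P (A \ Z)) ≤
      ∑ e ∈ Es, ind (Function.Injective (φ ∘ e) ∧ ∀ i, j ((φ ∘ e) i) ∈ A) *
        ind (P (A \ univ.image fun i => j ((φ ∘ e) i))) := by
    intro φ
    have hnn : ∀ e ∈ Es, 0 ≤ ind (Function.Injective (φ ∘ e) ∧ ∀ i, j ((φ ∘ e) i) ∈ A) *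
        ind (P (A \ univ.image fun i => j ((φ ∘ e) i))) := fun e _ =>
      mul_nonneg (ind_nonneg _) (ind_nonneg _)
    by_cases h : Function.Injective φ ∧ ∃ Z ⊆ univ.image (fun i => j (φ i)), #Z = l ∧ P (A \ Z)
    swap
    · rw [ind_false h]
      exact Finset.sum_nonneg hnn
    rw [ind_true h]
    obtain ⟨hφ, Z, hZ, hZc, hP⟩ := h
    have hZe : ∀ i : Fin l, ∃ k : Fin f, j (φ k) = (Z.equivFin.symm (Fin.cast hZc.symm i) : ι) := by
      intro i
      have := hZ (Z.equivFin.symm (Fin.cast hZc.symm i)).2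
      simpa using this
    choose e he using hZe
    have hinj : Function.Injective e := by
      intro a b hab
      have h2 := he a
      rw [hab, he b] at h2
      have h3 := Z.equivFin.symm.injective (Subtype.ext h2)
      exact (Fin.cast_injective _ h3).symm
    have himg : univ.image (fun i => j ((φ ∘ e) i)) = Z := by
      ext x
      simp only [Finset.mem_image, Finset.mem_univ, true_and, Function.comp, he]
      constructor
      · rintro ⟨i, rfl⟩
        exact Finset.coe_mem _
      · intro hx
        refine ⟨Fin.cast hZc (Z.equivFin ⟨x, hx⟩), ?_⟩
        simp
    refine le_trans ?_ (Finset.single_le_sum hnn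
      (Finset.mem_filter.2 ⟨Finset.mem_univ e, hinj⟩))
    rw [himg, ind_true hP, ind_true ⟨hφ.comp hinj, fun i => hjA _⟩, mul_one]
  refine (av_mono h1).trans ?_
  rw [av_sum]
  have h2 : ∀ e ∈ Es, av (fun φ : Fin f → β =>
      ind (Function.Injective (φ ∘ e) ∧ ∀ i, j ((φ ∘ e) i) ∈ A) *
        ind (P (A \ univ.image fun i => j ((φ ∘ e) i)))) ≤ dm j l (fun A => ind (P A)) A := by
    intro e he
    rw [av_restrict e (Finset.mem_filter.1 he).2 (fun z : Fin l → β =>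
      ind (Function.Injective z ∧ ∀ i, j (z i) ∈ A) * ind (P (A \ univ.image fun i => j (z i))))]
    exact dm_tuple hj (fun _ => ind_nonneg _) l A
  refine (Finset.sum_le_sum h2).trans ?_
  rw [Finset.sum_const, nsmul_eq_mul]
  refine mul_le_mul_of_nonneg_right ?_ (dm_nonneg (fun _ => ind_nonneg _) l A)
  have : #Es ≤ f ^ l := by
    refine (Finset.card_filter_le _ _).trans ?_
    simp
  exact_mod_cast this

end Tuples

/-! ### From few missing indices to the full permanent -/

section Combine

/-- With high probability some principal submatrix of `A` that misses exactly `2 * r` indices, all of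
them in `F`, has a large permanent: `growth` inside `U`, followed by `few_missing`. -/
lemma hit_prob {ι : Type*} [Fintype ι] [DecidableEq ι] {A U F : Finset ι} (hUA : U ⊆ A)
    (hF : F ⊆ A \ U) {r : ℕ} (hFc : #F = 252 * r) {s R b : ℕ} {γ : ℝ} (hγ0 : 0 ≤ γ)
    (hγ : 2 * γ ≤ s - R) (hU : #U = (25 + b) * s) {lam : ℝ} (h0 : 0 ≤ lam) {d x : ℕ}
    (hlam : (lam * (3 / 2) ^ d) ^ 2 ≤ (γ ^ R / 2 ^ s) ^ b) (hd : (25 + b) * s ≤ b * R + d)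
    (hQ : #U + 252 * r + (17 * d + 4 * x + 2 * r + 3) ≤ #A) :
    av (fun ω : Sym2 ι → Bool => ind (¬ ∃ Z ⊆ F, #Z = 2 * r ∧ lam ≤ |per ω (A \ Z) (A \ Z)|)) ≤
      b * (2 ^ R * (23 / 24) ^ (25 * s)) + (8 * (3 / 4) ^ x + (7 / 8) ^ x +
        32 * (15 / 16) ^ (r + 1) + 2 ^ r * (31 / 32) ^ (64 * r)) := by
  classical
  obtain ⟨F₁, hF₁, hF₁c⟩ := Finset.exists_subset_card_eq (show 128 * r ≤ #F by omega)
  set F₂ := F \ F₁ with hF₂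
  have hF₂c : #F₂ = 124 * r := by
    rw [hF₂, Finset.card_sdiff_of_subset hF₁]; omega
  set Q := (A \ U) \ F with hQdef
  have hQc : #U + #Q + 252 * r = #A := by
    rw [hQdef, Finset.card_sdiff_of_subset hF, Finset.card_sdiff_of_subset hUA]
    have h1 := Finset.card_le_card hUA
    have h2 := Finset.card_le_card hF
    rw [Finset.card_sdiff_of_subset hUA] at h2
    omega
  have hFF : F₁ ∪ F₂ = F := Finset.union_sdiff_of_subset hF₁
  have hAll : U ∪ Q ∪ F₁ ∪ F₂ = A := by
    rw [Finset.union_assoc, hFF, hQdef, Finset.union_assoc, Finset.sdiff_union_of_subset hF,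
      Finset.union_sdiff_of_subset hUA]
  have hdQU : Disjoint Q U := by
    rw [Finset.disjoint_left]
    intro i hi hiU
    exact (Finset.mem_sdiff.1 (Finset.mem_sdiff.1 hi).1).2 hiU
  have hdF : Disjoint F (U ∪ Q) := by
    rw [Finset.disjoint_left]
    intro i hi hiU
    rcases Finset.mem_union.1 hiU with h | h
    · exact (Finset.mem_sdiff.1 (hF hi)).2 h
    · exact (Finset.mem_sdiff.1 h).2 hi
  have hmain : ∀ ω : Sym2 ι → Bool, av (fun ω' : Sym2 ι → Bool => ind (¬ ∃ Z ⊆ F, #Z = 2 * r ∧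
      lam ≤ |per (mix ∅ ω ω') (A \ Z) (A \ Z)|)) ≤
      b * (2 ^ R * (23 / 24) ^ (25 * s)) + (8 * (3 / 4) ^ x + (7 / 8) ^ x +
        32 * (15 / 16) ^ (r + 1) + 2 ^ r * (31 / 32) ^ (64 * r)) := by
    intro ω
    refine av_chain (S := ∅) (S' := ins U) (Set.empty_subset _) ω
      (G := fun η => ∃ I ⊆ U, ∃ J ⊆ U, #I = b * R ∧ #J = b * R ∧ (γ ^ R / 2 ^ s) ^ b ≤ per η I J ^ 2)
      (H := fun η => ∃ Z ⊆ F, #Z = 2 * r ∧ lam ≤ |per η (A \ Z) (A \ Z)|) (by positivity) ?_ ?_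
    · simp_rw [mix_empty]
      exact growth hγ0 hγ b U hU
    · rintro η - ⟨I, hI, J, hJ, hIc, hJc, hIJ⟩
      have := few_missing (T := U) (Q := Q) (F₁ := F₁) (F₂ := F₂) (I := I) (J := J) η (lam := lam)
        (d := d) (x := x) (r := r) hI hJ (by omega) (by omega) h0
        ((le_abs_self _).trans (sq_le_sq.1 (hlam.trans hIJ))) hdQU
        (Finset.disjoint_of_subset_left hF₁ hdF) ?_ (by omega) hF₁c hF₂c
      · rwa [hAll, hFF] at this
      · rw [Finset.disjoint_union_right]
        exact ⟨Finset.disjoint_of_subset_left Finset.sdiff_subset hdF, Finset.sdiff_disjoint⟩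
  have h1 := hmain (fun _ => true)
  simp_rw [mix_empty] at h1
  exact h1

/-- The full permanent is large with high probability. The indices `F` of `hit_prob` are chosen at
random among the values of `j`, so that the large principal submatrices have positive density; the
indices of `W` are then added by `boost_iter`. -/
lemma light_prob {n g : ℕ} (hg : 0 < g) {j : Fin g → Fin n} (hj : Function.Injective j)
    {W U : Finset (Fin n)} (hWU : Disjoint W U) (hjW : ∀ b, j b ∉ W) (hjU : ∀ b, j b ∉ U)
    {c ε : ℝ} (hc : 0 < c)
    (hboost : ∀ (w : Fin n) (T : Finset (Fin n)), w ∉ T →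
    (∀ b, j b ≠ w) → ∀ lam : ℝ, 0 ≤ lam → ∀ m : ℕ,
    ∃ loss : (Sym2 (Fin n) → Bool) → ℝ, (∀ ω, dm j (m + 3) (big lam ω) T ≤
      dm j m (big (c * lam) ω) (insert w T) + loss ω) ∧ (∀ ω, 0 ≤ loss ω) ∧ av loss ≤ ε)
    {r : ℕ} (hr : 3 * #W = 2 * r) {s R b : ℕ} {γ : ℝ} (hγ0 : 0 ≤ γ)
    (hγ : 2 * γ ≤ s - R) (hU : #U = (25 + b) * s) {lam : ℝ} (h0 : 0 ≤ lam) {d x : ℕ}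
    (hlam : (lam * (3 / 2) ^ d) ^ 2 ≤ (γ ^ R / 2 ^ s) ^ b) (hd : (25 + b) * s ≤ b * R + d)
    (hQ : #U + 252 * r + (17 * d + 4 * x + 2 * r + 3) + #W ≤ n) :
    av (fun ω : Sym2 (Fin n) → Bool => ind (¬ c ^ #W * lam ≤ |per ω univ univ|)) ≤
      (b * (2 ^ R * (23 / 24) ^ (25 * s)) + (8 * (3 / 4) ^ x + (7 / 8) ^ x +
        32 * (15 / 16) ^ (r + 1) + 2 ^ r * (31 / 32) ^ (64 * r))) +
      ((252 * r : ℕ) : ℝ) ^ 2 / g + ((252 * r : ℕ) : ℝ) ^ (2 * r) * (#W * ε) := by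
  classical
  have hgne : Nonempty (Fin g) := ⟨⟨0, hg⟩⟩
  set A : Finset (Fin n) := univ \ W with hA
  set f : ℕ := 252 * r with hf
  set δ : ℝ := b * (2 ^ R * (23 / 24) ^ (25 * s)) + (8 * (3 / 4) ^ x + (7 / 8) ^ x +
        32 * (15 / 16) ^ (r + 1) + 2 ^ r * (31 / 32) ^ (64 * r)) with hδ
  have hδ0 : 0 ≤ δ := by positivity
  have hAc : #A + #W = n := by
    rw [hA, Finset.card_sdiff_of_subset (Finset.subset_univ _), Finset.card_univ, Fintype.card_fin]
    have := Finset.card_le_univ W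
    rw [Fintype.card_fin] at this
    omega
  have hUA : U ⊆ A := fun i hi =>
    Finset.mem_sdiff.2 ⟨Finset.mem_univ _, fun h => Finset.disjoint_left.1 hWU h hi⟩
  have hjA : ∀ b, j b ∈ A := fun b => Finset.mem_sdiff.2 ⟨Finset.mem_univ _, hjW b⟩
  set X : (Sym2 (Fin n) → Bool) → ℝ := fun ω => av (fun φ : Fin f → Fin g =>
    ind (Function.Injective φ ∧ ∃ Z ⊆ univ.image (fun i => j (φ i)), #Z = 2 * r ∧
      lam ≤ |per ω (A \ Z) (A \ Z)|)) with hX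
  have hX1 : ∀ ω, X ω ≤ 1 := fun ω => av_ind_le_one _
  have hXdm : ∀ ω, X ω ≤ (f : ℝ) ^ (2 * r) * dm j (2 * r) (big lam ω) A := fun ω =>
    tuple_le_dm hj hjA (P := fun A => lam ≤ |per ω A A|) f (2 * r)
  have hEX : av (fun ω => 1 - X ω) ≤ δ + (f : ℝ) ^ 2 / g := by
    have e1 : ∀ ω, 1 - X ω = av (fun φ : Fin f → Fin g =>
        ind (¬ (Function.Injective φ ∧ ∃ Z ⊆ univ.image (fun i => j (φ i)), #Z = 2 * r ∧
        lam ≤ |per ω (A \ Z) (A \ Z)|))) := fun ω => (av_not _).symm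
    simp_rw [e1]
    rw [av_comm]
    have e2 : ∀ φ : Fin f → Fin g, av (fun ω : Sym2 (Fin n) → Bool =>
        ind (¬ (Function.Injective φ ∧ ∃ Z ⊆ univ.image (fun i => j (φ i)), #Z = 2 * r ∧
        lam ≤ |per ω (A \ Z) (A \ Z)|))) ≤ δ + ind (¬ Function.Injective φ) := by
      intro φ
      by_cases hφ : Function.Injective φ
      · rw [ind_false (not_not.2 hφ), add_zero]
        refine le_trans (av_mono fun ω => ind_mono fun h hZ => h ⟨hφ, hZ⟩)
          (hit_prob hUA ?_ ?_ hγ0 hγ hU h0 hlam hd (by omega))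
        · intro i hi
          obtain ⟨k, -, rfl⟩ := Finset.mem_image.1 hi
          exact Finset.mem_sdiff.2 ⟨hjA _, hjU _⟩
        · rw [Finset.card_image_of_injective _ fun a b h => hφ (hj h)]
          simp [hf]
      · rw [ind_true hφ]
        exact (av_ind_le_one _).trans (by linarith)
    refine (av_mono e2).trans ?_
    rw [av_add, av_const]
    have := av_not_injective (β := Fin g) f
    rw [Fintype.card_fin] at this
    linarith
  obtain ⟨loss, h1, h2, h3⟩ := boost_iter hc hboost W A
    (Finset.disjoint_sdiff) hjW lam h0
  have hAW : A ∪ W = univ := Finset.sdiff_union_of_subset (Finset.subset_univ _)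
  rw [hr, hAW] at h1
  have hpt : ∀ ω, ind (¬ c ^ #W * lam ≤ |per ω univ univ|) ≤
      (1 - X ω) + (f : ℝ) ^ (2 * r) * loss ω := by
    intro ω
    have e0 : 0 ≤ (f : ℝ) ^ (2 * r) * loss ω := mul_nonneg (by positivity) (h2 ω)
    by_cases hb : c ^ #W * lam ≤ |per ω univ univ|
    · rw [ind_false (not_not.2 hb)]
      linarith [hX1 ω]
    · rw [ind_true hb]
      have e1 : big (c ^ #W * lam) ω univ = 0 := ind_false hb
      have e2 := h1 ω
      rw [e1, zero_add] at e2
      have e3 := mul_le_mul_of_nonneg_left e2 (show 0 ≤ (f : ℝ) ^ (2 * r) by positivity)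
      linarith [hXdm ω]
  refine (av_mono hpt).trans ?_
  rw [av_add, av_mul_left]
  have := mul_le_mul_of_nonneg_left h3 (show 0 ≤ (f : ℝ) ^ (2 * r) by positivity)
  linarith

end Combine

/-! ### The lower bound -/

section Lower

open Filter

/-- The choice of sizes: with `t` large, there are `2 * l` growth stages of length `2 * l * t`, each
of which contributes `(2 * l - 1) * t` rows and columns. -/
lemma lower_sized {δ : ℝ} (hδ : 0 < δ) : ∃ c' : ℝ, 0 < c' ∧ ∀ l : ℕ, 0 < l → ∀ᶠ t : ℕ in atTop,
    ∀ n : ℕ, (4 * l ^ 2 + 934 * l + 1) * t ≤ n →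
    av (fun ω : Sym2 (Fin n) → Bool => ind (¬ c' *
      ((((t : ℝ) / 2) ^ ((2 * l - 1) * t) / 2 ^ (2 * l * t)) ^ l / (3 / 2) ^ (52 * l * t)) ≤
        |per ω univ univ|)) ≤ δ := by
  obtain ⟨κ, hκ⟩ := exists_pow_lt_of_lt_one (show 0 < δ / (5 * 33) by positivity)
    (show (15 / 16 : ℝ) < 1 by norm_num)
  obtain ⟨x, hx⟩ := exists_pow_lt_of_lt_one (show 0 < δ / (5 * 9) by positivity)
    (show (7 / 8 : ℝ) < 1 by norm_num)
  set r : ℕ := 3 * κ with hr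
  set f : ℕ := 252 * r with hf
  obtain ⟨c, hc, g₀, hboost⟩ := boost_eps
    (show 0 < δ / (5 * ((f : ℝ) ^ (2 * r) * (2 * κ : ℕ) + 1)) by positivity)
  set ε₀ : ℝ := δ / (5 * ((f : ℝ) ^ (2 * r) * (2 * κ : ℕ) + 1)) with hε₀
  obtain ⟨g₁, hg₁⟩ := exists_nat_ge ((f : ℝ) ^ 2 / (δ / 5))
  set g : ℕ := g₀ + g₁ + 1 with hg
  refine ⟨c ^ (2 * κ), by positivity, fun l hl => ?_⟩
  have hlR : (0 : ℝ) < l := by exact_mod_cast hl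
  have hsmall : ∀ᶠ t : ℕ in atTop, (7 / 10 : ℝ) ^ t < δ / (5 * (2 * l)) :=
    (tendsto_pow_atTop_nhds_zero_of_lt_one (by norm_num) (by norm_num)).eventually_lt_const
      (by positivity)
  filter_upwards [hsmall, eventually_ge_atTop (252 * r + 4 * x + 2 * r + 3 + 2 * κ + g)]
    with t ht htg n hn
  -- the sets `W` and `U` and the reservoir of deletable indices
  obtain ⟨l', rfl⟩ : ∃ l', l = l' + 1 := ⟨l - 1, by omega⟩
  have hsz : (25 + 2 * (l' + 1)) * (2 * (l' + 1) * t) + 17 * (52 * (l' + 1) * t) + t ≤ n := by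
    refine le_trans (le_of_eq ?_) hn
    ring
  set N : ℕ := (25 + 2 * (l' + 1)) * (2 * (l' + 1) * t) with hN
  have hcardn : #(univ : Finset (Fin n)) = n := by simp
  obtain ⟨W, -, hWc⟩ := Finset.exists_subset_card_eq
    (show 2 * κ ≤ #(univ : Finset (Fin n)) by omega)
  have hWn : #(univ \ W) = n - 2 * κ := by
    rw [Finset.card_sdiff_of_subset (Finset.subset_univ _), hWc, hcardn]
  obtain ⟨U, hU, hUc⟩ := Finset.exists_subset_card_eq (show N ≤ #(univ \ W) by omega)
  obtain ⟨V, hV, hVc⟩ := Finset.exists_subset_card_eq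
    (show g ≤ #((univ \ W) \ U) by
      rw [Finset.card_sdiff_of_subset hU, hWn, hUc]; omega)
  set j : Fin g → Fin n := fun b => V.orderEmbOfFin hVc b with hj
  have hjinj : Function.Injective j := (V.orderEmbOfFin hVc).injective
  have hjV : ∀ b, j b ∈ (univ \ W) \ U := fun b => hV (V.orderEmbOfFin_mem hVc b)
  have hg0 : 0 < g := by omega
  set lam : ℝ := (((t : ℝ) / 2) ^ ((2 * (l' + 1) - 1) * t) / 2 ^ (2 * (l' + 1) * t)) ^ (l' + 1) /
    (3 / 2) ^ (52 * (l' + 1) * t) with hlam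
  have hlam0 : 0 ≤ lam := by positivity
  have key := light_prob hg0 hjinj (W := W) (U := U)
    (Finset.disjoint_of_subset_right hU Finset.disjoint_sdiff)
    (fun b => (Finset.mem_sdiff.1 (Finset.mem_sdiff.1 (hjV b)).1).2)
    (fun b => (Finset.mem_sdiff.1 (hjV b)).2) hc
    (hboost n g hg0 (by omega) j hjinj) (r := r) (by omega) (s := 2 * (l' + 1) * t)
    (R := (2 * (l' + 1) - 1) * t) (b := 2 * (l' + 1)) (γ := (t : ℝ) / 2) (by positivity)
    (by
      have : 2 * (l' + 1) - 1 = 2 * l' + 1 := by omega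
      rw [this]; push_cast; linarith) hUc hlam0 (d := 52 * (l' + 1) * t) (x := x)
    (by
      rw [hlam, div_mul_cancel₀ _ (by positivity), ← pow_mul, mul_comm (l' + 1) 2])
    (by
      have : 2 * (l' + 1) - 1 = 2 * l' + 1 := by omega
      rw [this]
      refine le_of_eq ?_
      ring)
    (by omega)
  rw [hWc] at key
  refine key.trans ?_
  have b1 : ((2 * (l' + 1) : ℕ) : ℝ) *
      (2 ^ ((2 * (l' + 1) - 1) * t) * (23 / 24) ^ (25 * (2 * (l' + 1) * t))) ≤ δ / 5 := by
    have e1 : (2 : ℝ) ^ ((2 * (l' + 1) - 1) * t) ≤ 2 ^ (2 * (l' + 1) * t) :=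
      pow_le_pow_right₀ (by norm_num) (Nat.mul_le_mul_right _ (by omega))
    have e2 : (2 : ℝ) ^ ((2 * (l' + 1) - 1) * t) * (23 / 24) ^ (25 * (2 * (l' + 1) * t)) ≤
        (7 / 10) ^ t := by
      calc _ ≤ (2 : ℝ) ^ (2 * (l' + 1) * t) * (23 / 24) ^ (25 * (2 * (l' + 1) * t)) := by gcongr
        _ = (2 * (23 / 24 : ℝ) ^ 25) ^ (2 * (l' + 1) * t) := by
            rw [mul_pow, ← pow_mul]
        _ ≤ (7 / 10) ^ (2 * (l' + 1) * t) := by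
            gcongr
            norm_num
        _ ≤ (7 / 10) ^ t := pow_le_pow_of_le_one (by norm_num) (by norm_num) (by nlinarith)
    rw [lt_div_iff₀ (by positivity)] at ht
    push_cast at ht ⊢
    nlinarith
  have b2 : (8 * (3 / 4) ^ x + (7 / 8) ^ x : ℝ) ≤ δ / 5 := by
    have e1 : (3 / 4 : ℝ) ^ x ≤ (7 / 8) ^ x :=
      pow_le_pow_left₀ (by norm_num) (by norm_num) x
    rw [lt_div_iff₀ (by positivity)] at hx
    linarith
  have b3 : (32 * (15 / 16) ^ (r + 1) + 2 ^ r * (31 / 32) ^ (64 * r) : ℝ) ≤ δ / 5 := by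
    have e1 : (15 / 16 : ℝ) ^ (r + 1) ≤ (15 / 16) ^ κ :=
      pow_le_pow_of_le_one (by norm_num) (by norm_num) (by omega)
    have e2 : (2 ^ r * (31 / 32) ^ (64 * r) : ℝ) ≤ (15 / 16) ^ κ := by
      calc (2 ^ r * (31 / 32) ^ (64 * r) : ℝ) = (2 * (31 / 32) ^ 64) ^ r := by
            rw [mul_pow, ← pow_mul]
        _ ≤ (15 / 16) ^ r := by
            gcongr
            norm_num
        _ ≤ (15 / 16) ^ κ := pow_le_pow_of_le_one (by norm_num) (by norm_num) (by omega)
    rw [lt_div_iff₀ (by positivity)] at hκ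
    linarith
  have b4 : (f : ℝ) ^ 2 / g ≤ δ / 5 := by
    rw [div_le_iff₀ (by positivity)] at hg₁
    rw [div_le_iff₀ (by positivity)]
    have : (g₁ : ℝ) ≤ g := by rw [hg]; push_cast; linarith [(Nat.cast_nonneg g₀ : (0 : ℝ) ≤ g₀)]
    nlinarith
  have b5 : (f : ℝ) ^ (2 * r) * ((2 * κ : ℕ) * ε₀) ≤ δ / 5 := by
    have e0 : 0 ≤ (f : ℝ) ^ (2 * r) * (2 * κ : ℕ) := by positivity
    rw [hε₀, ← mul_assoc, ← div_div, mul_div_assoc', div_le_iff₀ (by positivity)]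
    nlinarith
  linarith

set_option maxHeartbeats 1000000 in
/-- The bound of `lower_sized` exceeds `n ^ (n / 2 - ε * n)` once `l` is large in terms of `ε` and `t` is
large in terms of `l`. -/
lemma lower_real {ε : ℝ} (hε : 0 < ε) (hε2 : ε ≤ 1 / 2) {c' : ℝ} (hc : 0 < c') : ∃ l : ℕ, 0 < l ∧
    ∀ᶠ t : ℕ in atTop, ∀ n : ℕ, (4 * l ^ 2 + 934 * l + 1) * t ≤ n →
    n ≤ (4 * l ^ 2 + 934 * l + 1) * (t + 1) → (n : ℝ) ^ ((n : ℝ) / 2 - ε * n) ≤ c' *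
      ((((t : ℝ) / 2) ^ ((2 * l - 1) * t) / 2 ^ (2 * l * t)) ^ l / (3 / 2) ^ (52 * l * t)) := by
  obtain ⟨l₀, hl₀⟩ := exists_nat_ge (118 / ε)
  refine ⟨l₀ + 1, by omega, ?_⟩
  set l : ℕ := l₀ + 1 with hl
  have hl1 : (1 : ℝ) ≤ l := by exact_mod_cast (show 1 ≤ l by omega)
  have hlε : 118 ≤ ε * l := by
    rw [div_le_iff₀ hε] at hl₀
    rw [hl]; push_cast
    nlinarith
  set M : ℝ := 4 * l ^ 2 + 934 * l + 1 with hM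
  have hM1 : 1 ≤ M := by nlinarith
  set a : ℝ := (2 * l - 1) * l with ha
  set D : ℝ := a - (1 / 2 - ε) * M with hD
  have hDpos : 0 < D := by
    have e1 : D = ε * l * (4 * l) - 468 * l - 1 / 2 + ε * (934 * l + 1) := by
      rw [hD, ha, hM]; ring
    rw [e1]
    have e2 : 118 * (4 * (l : ℝ)) ≤ ε * l * (4 * l) := mul_le_mul_of_nonneg_right hlε (by positivity)
    have e3 : 0 ≤ ε * (934 * (l : ℝ) + 1) := by positivity
    linarith
  set C : ℝ := a * Real.log 2 + 2 * l * l * Real.log 2 + 52 * l * Real.log (3 / 2) +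
    |Real.log c'| + 2 * M * Real.log (2 * M) + M with hC
  have hlarge : ∀ᶠ t : ℕ in atTop, C / D ≤ Real.log t :=
    (Real.tendsto_log_atTop.comp tendsto_natCast_atTop_atTop).eventually_ge_atTop _
  filter_upwards [hlarge, eventually_ge_atTop 1] with t ht ht1 n hn1 hn2
  have htR : (1 : ℝ) ≤ t := by exact_mod_cast ht1
  have hnle : (n : ℝ) ≤ M * (t + 1) := by rw [hM]; exact_mod_cast hn2
  have hnge : M * t ≤ (n : ℝ) := by rw [hM]; exact_mod_cast hn1
  have hn0 : (0 : ℝ) < n := by nlinarith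
  rw [← Real.log_le_log_iff (by positivity) (by positivity), Real.log_rpow hn0,
    Real.log_mul hc.ne' (by positivity), Real.log_div (by positivity) (by positivity),
    Real.log_pow, Real.log_pow, Real.log_div (by positivity) (by positivity), Real.log_pow,
    Real.log_pow, Real.log_div (by positivity) (by norm_num)]
  have hcast : (((2 * l - 1) * t : ℕ) : ℝ) = (2 * l - 1) * t := by
    rw [Nat.cast_mul, Nat.cast_sub (by omega)]; push_cast; ring
  rw [hcast]
  push_cast
  set T := Real.log t with hT
  have hT0 : 0 ≤ T := Real.log_nonneg htR
  have hTt : T ≤ t := (Real.log_le_sub_one_of_pos (by linarith)).trans (by linarith)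
  have hlogn : Real.log n ≤ T + Real.log (2 * M) := by
    rw [hT, ← Real.log_mul (by positivity) (by positivity)]
    exact Real.log_le_log hn0 (by nlinarith)
  have hlogM : 0 ≤ Real.log (2 * M) := Real.log_nonneg (by linarith)
  have hup : ((n : ℝ) / 2 - ε * n) * Real.log n ≤
      (1 / 2 - ε) * (M * (t + 1)) * (T + Real.log (2 * M)) := by
    have e1 : (n : ℝ) / 2 - ε * n = (1 / 2 - ε) * n := by ring
    rw [e1]
    have e2 : 0 ≤ 1 / 2 - ε := by linarith
    have e3 : (1 / 2 - ε) * (n : ℝ) ≤ (1 / 2 - ε) * (M * (t + 1)) :=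
      mul_le_mul_of_nonneg_left hnle e2
    have e4 : 0 ≤ Real.log n := Real.log_nonneg (by nlinarith)
    have e5 : 0 ≤ (1 / 2 - ε) * (M * (t + 1)) := by positivity
    exact mul_le_mul e3 hlogn e4 e5
  rw [div_le_iff₀ hDpos] at ht
  have hlogc : -|Real.log c'| ≤ Real.log c' := neg_abs_le _
  have hmain : C * t ≤ T * D * t := mul_le_mul_of_nonneg_right ht (by linarith)
  have hcabs : |Real.log c'| ≤ |Real.log c'| * t := le_mul_of_one_le_right (abs_nonneg _) htR
  have hrest : (1 / 2 - ε) * (M * (t + 1)) * (T + Real.log (2 * M)) ≤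
      (1 / 2 - ε) * M * (t * T) + (2 * M * Real.log (2 * M) + M) * t := by
    have e0 : 0 ≤ 1 / 2 - ε := by linarith
    have e1 : 1 / 2 - ε ≤ 1 := by linarith
    have e2 : M * T + M * (t + 1) * Real.log (2 * M) ≤
        M * t + 2 * M * Real.log (2 * M) * t := by
      have : M * T ≤ M * t := by gcongr
      have : (t + 1) * (M * Real.log (2 * M)) ≤ (2 * t) * (M * Real.log (2 * M)) :=
        mul_le_mul_of_nonneg_right (by linarith) (by positivity)
      linarith
    have e3 : 0 ≤ M * T + M * (t + 1) * Real.log (2 * M) := by positivity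
    have e4 : (1 / 2 - ε) * (M * T + M * (t + 1) * Real.log (2 * M)) ≤
      1 * (M * T + M * (t + 1) * Real.log (2 * M)) := mul_le_mul_of_nonneg_right e1 e3
    linarith
  have hfin : T * D * t = a * (t * T) - (1 / 2 - ε) * M * (t * T) := by rw [hD]; ring
  have hgoal : Real.log c' + ((l : ℝ) * ((2 * l - 1) * t * (T - Real.log 2) -
      2 * l * t * Real.log 2) - 52 * l * t * Real.log (3 / 2)) =
      Real.log c' + a * (t * T) - (a * Real.log 2 + 2 * l * l * Real.log 2 +
        52 * l * Real.log (3 / 2)) * t := by rw [ha]; ring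
  rw [hgoal]
  have hCt : C * t = (a * Real.log 2 + 2 * l * l * Real.log 2 + 52 * l * Real.log (3 / 2)) * t +
    |Real.log c'| * t + (2 * M * Real.log (2 * M) + M) * t := by rw [hC]; ring
  linarith

lemma lower_bound {ε δ : ℝ} (hε : 0 < ε) (hε2 : ε ≤ 1 / 2) (hδ : 0 < δ) : ∀ᶠ n : ℕ in atTop,
    av (fun ω : Sym2 (Fin n) → Bool => ind (¬ (n : ℝ) ^ ((n : ℝ) / 2 - ε * n) ≤
      |per ω univ univ|)) ≤ δ := by
  obtain ⟨c', hc, h1⟩ := lower_sized hδ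
  obtain ⟨l, hl, h2⟩ := lower_real hε hε2 hc
  set M : ℕ := 4 * l ^ 2 + 934 * l + 1 with hM
  have hM0 : 0 < M := by omega
  have hdiv : Tendsto (fun n : ℕ => n / M) atTop atTop := Nat.tendsto_div_const_atTop hM0.ne'
  filter_upwards [hdiv.eventually (h1 l hl), hdiv.eventually h2] with n k1 k2
  have e1 : M * (n / M) ≤ n := Nat.mul_div_le n M
  have e2 : n ≤ M * (n / M + 1) := (Nat.lt_mul_div_succ n hM0).le
  exact (av_mono fun ω => ind_mono fun h h' => h ((k2 n e1 e2).trans h')).trans (k1 n e1)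

end Lower

/-! ### The upper bound -/

section Upper

open Filter

variable {ι : Type*} [Fintype ι] [DecidableEq ι]

/-- The bound on the second moment of the permanent with rows `I` and columns `J`: the symmetry of
the matrix costs an additional factor in the case `I = J`. -/
noncomputable def momBound (I J : Finset ι) : ℝ :=
  (2 * (Fintype.card ι : ℝ)) ^ #I * if I = J then (Fintype.card ι : ℝ) else 1

lemma momBound_sum (w : ι) {I J : Finset ι} (hc : #J = #I + 1) :
    ∑ q ∈ J, momBound I (J.erase q) ≤ (2 * (Fintype.card ι : ℝ)) ^ #J := by
  set N : ℝ := (Fintype.card ι : ℝ) with hN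
  have hN1 : 1 ≤ N := by
    rw [hN]
    exact_mod_cast Fintype.card_pos_iff.2 ⟨w⟩
  have h1 : ∀ q ∈ J, momBound I (J.erase q) ≤
      (2 * N) ^ #I * (1 + if I = J.erase q then N else 0) := by
    intro q _
    unfold momBound
    refine mul_le_mul_of_nonneg_left ?_ (by positivity)
    split_ifs <;> linarith
  refine (Finset.sum_le_sum h1).trans ?_
  rw [← Finset.mul_sum, Finset.sum_add_distrib, Finset.sum_const, nsmul_eq_mul, mul_one,
    ← Finset.sum_filter, Finset.sum_const, nsmul_eq_mul]
  have h2 : #(J.filter fun q => I = J.erase q) ≤ 1 := by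
    rw [Finset.card_le_one]
    intro a ha b hb
    rw [Finset.mem_filter] at ha hb
    exact Finset.erase_injOn J ha.1 hb.1 (ha.2.symm.trans hb.2)
  have h3 : (#(J.filter fun q => I = J.erase q) : ℝ) * N ≤ N := by
    have : (#(J.filter fun q => I = J.erase q) : ℝ) ≤ 1 := by exact_mod_cast h2
    nlinarith
  have h4 : (#J : ℝ) ≤ N := by
    rw [hN]
    exact_mod_cast Finset.card_le_univ J
  rw [hc, pow_succ]
  refine mul_le_mul_of_nonneg_left ?_ (by positivity)
  push_cast [hc] at h4 ⊢
  linarith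

/-- The second moment of the permanent. If `I ≠ J`, some row `w ∈ I` has no index in `J`, hence its
entries are independent of the minors in the expansion along it. If `I = J`, the Cauchy-Schwarz
inequality is applied to the expansion; this loses a factor `#I`, which happens only rarely along the
recursion. -/
lemma moment [Nonempty ι] (k : ℕ) : ∀ I J : Finset ι, #I = k → #J = k →
    av (fun ω : Sym2 ι → Bool => per ω I J ^ 2) ≤ momBound I J := by
  induction k with
  | zero =>
    intro I J hI hJ
    rw [Finset.card_eq_zero] at hI hJ
    subst hI hJ
    have h1 : (1 : ℝ) ≤ Fintype.card ι := by exact_mod_cast Fintype.card_pos (α := ι)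
    simpa [per, pm_empty, momBound, av_const] using h1
  | succ k ih =>
    intro I J hI hJ
    by_cases hIJ : I = J
    · subst hIJ
      obtain ⟨w, hw⟩ := Finset.card_pos.1 (by omega : 0 < #I)
      have hIc : #(I.erase w) = k := by rw [Finset.card_erase_of_mem hw]; omega
      have hexp : ∀ ω : Sym2 ι → Bool, per ω I I ^ 2 ≤
          #I * ∑ q ∈ I, per ω (I.erase w) (I.erase q) ^ 2 := by
        intro ω
        have h1 : per ω I I = ∑ q ∈ I, ent ω w q * per ω (I.erase w) (I.erase q) := by
          have := pm_row (ent ω) (Finset.notMem_erase w I) I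
          rwa [Finset.insert_erase hw] at this
        rw [h1]
        refine sq_sum_le_card_mul_sum_sq.trans (le_of_eq ?_)
        congr 1
        refine Finset.sum_congr rfl fun q _ => ?_
        rw [mul_pow, ent, sq (rad _), rad_sq, one_mul]
      refine (av_mono hexp).trans ?_
      rw [av_mul_left, av_sum]
      have h2 : ∑ q ∈ I, av (fun ω : Sym2 ι → Bool => per ω (I.erase w) (I.erase q) ^ 2) ≤
          (2 * (Fintype.card ι : ℝ)) ^ #I :=
        (Finset.sum_le_sum fun q hq => ih _ _ hIc (by rw [Finset.card_erase_of_mem hq]; omega)).trans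
          (momBound_sum w (by omega))
      have h3 : (#I : ℝ) ≤ Fintype.card ι := by exact_mod_cast Finset.card_le_univ I
      unfold momBound
      rw [if_pos rfl, mul_comm ((2 * (Fintype.card ι : ℝ)) ^ #I)]
      refine mul_le_mul h3 h2 (Finset.sum_nonneg fun q _ => av_nonneg fun ω => sq_nonneg _)
        (by positivity)
    · obtain ⟨w, hw, hwJ⟩ : ∃ w ∈ I, w ∉ J := by
        by_contra hcon
        push Not at hcon
        exact hIJ (Finset.eq_of_subset_of_card_le hcon (by omega))
      have hIc : #(I.erase w) = k := by rw [Finset.card_erase_of_mem hw]; omega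
      set S : Set (Sym2 ι) := {e | w ∉ e} with hS
      have hval : ∀ ω ω' : Sym2 ι → Bool, per (mix S ω ω') I J =
          0 + ∑ q ∈ J, per ω (I.erase w) (J.erase q) * rad (ω' s(w, q)) := by
        intro ω ω'
        have h1 := pm_row (ent (mix S ω ω')) (Finset.notMem_erase w I) J
        rw [Finset.insert_erase hw] at h1
        rw [zero_add]
        refine h1.trans (Finset.sum_congr rfl fun q hq => ?_)
        rw [mul_comm]
        congr 1
        · refine per_congr fun a ha b hb => mix_of_mem (S := S) ?_ _ _
          have h2 : w ≠ a := (Finset.mem_erase.1 ha).1.symm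
          have h3 : w ≠ b := fun h => hwJ (h ▸ (Finset.mem_erase.1 hb).2)
          simp [hS, h2, h3]
        · unfold ent
          rw [mix_of_notMem (S := S) (by simp [hS])]
      rw [← av_mix S]
      have h2 : ∀ ω : Sym2 ι → Bool, av (fun ω' => per (mix S ω ω') I J ^ 2) =
          ∑ q ∈ J, per ω (I.erase w) (J.erase q) ^ 2 := by
        intro ω
        simp_rw [hval]
        rw [form_second (pair_right_injective w)]
        ring
      simp_rw [h2]
      rw [av_sum]
      refine (Finset.sum_le_sum fun q hq => ih _ _ hIc
        (by rw [Finset.card_erase_of_mem hq]; omega)).trans ((momBound_sum w (by omega)).trans ?_)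
      unfold momBound
      rw [if_neg hIJ, mul_one, hI, hJ]

lemma upper_bound {ε δ : ℝ} (hε : 0 < ε) (hδ : 0 < δ) : ∀ᶠ n : ℕ in atTop,
    av (fun ω : Sym2 (Fin n) → Bool => ind (¬ |per ω univ univ| ≤
      (n : ℝ) ^ ((n : ℝ) / 2 + ε * n))) ≤ δ := by
  have h1 : ∀ᶠ n : ℕ in atTop, 8 ≤ (n : ℝ) ^ (2 * ε) :=
    ((tendsto_rpow_atTop (by positivity)).comp tendsto_natCast_atTop_atTop).eventually_ge_atTop 8
  have h2 : ∀ᶠ n : ℕ in atTop, (1 / 2 : ℝ) ^ n < δ :=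
    (tendsto_pow_atTop_nhds_zero_of_lt_one (by norm_num) (by norm_num)).eventually_lt_const hδ
  filter_upwards [h1, h2, eventually_gt_atTop 0] with n k1 k2 hn
  have hnR : (0 : ℝ) < n := by exact_mod_cast hn
  set B : ℝ := (n : ℝ) ^ ((n : ℝ) / 2 + ε * n) with hB
  have hBpos : 0 < B := by positivity
  have hB2 : B ^ 2 = (n : ℝ) ^ n * ((n : ℝ) ^ (2 * ε)) ^ n := by
    rw [hB, ← Real.rpow_natCast, ← Real.rpow_mul hnR.le, ← Real.rpow_natCast ((n : ℝ) ^ (2 * ε)),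
      ← Real.rpow_mul hnR.le, ← Real.rpow_natCast (n : ℝ) n, ← Real.rpow_add hnR]
    congr 1
    push_cast
    ring
  have : Nonempty (Fin n) := ⟨⟨0, hn⟩⟩
  have hm := moment n (univ : Finset (Fin n)) univ (by simp) (by simp)
  have hmb : momBound (univ : Finset (Fin n)) univ = (2 * (n : ℝ)) ^ n * n := by
    simp [momBound]
  rw [hmb] at hm
  have hn2 : (n : ℝ) ≤ 2 ^ n := by exact_mod_cast Nat.lt_two_pow_self.le
  calc _ ≤ av (fun ω : Sym2 (Fin n) → Bool => ind (B ^ 2 ≤ per ω univ univ ^ 2)) := by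
        refine av_mono fun ω => ind_mono fun h => ?_
        rw [sq_le_sq, abs_of_pos hBpos]
        exact (not_le.1 h).le
    _ ≤ av (fun ω : Sym2 (Fin n) → Bool => per ω univ univ ^ 2) / B ^ 2 :=
        av_markov (fun ω => sq_nonneg _) (by positivity)
    _ ≤ (1 / 2) ^ n := by
        rw [div_le_iff₀ (by positivity), hB2]
        refine hm.trans ?_
        calc (2 * (n : ℝ)) ^ n * n ≤ (2 * (n : ℝ)) ^ n * 2 ^ n := by gcongr
          _ = (1 / 2) ^ n * ((n : ℝ) ^ n * 8 ^ n) := by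
              rw [← mul_pow, ← mul_pow, ← mul_pow]
              congr 1
              ring
          _ ≤ _ := by gcongr
    _ ≤ δ := k2.le

end Upper

/-! ### The conclusion -/

section Final

/-- The probability of an event for the random symmetric matrix, written as an average over Boolean
data indexed by unordered pairs. -/
lemma prob_eq_av (n : ℕ) (P : ℝ → Prop) : prob n (fun M => P (perm M)) =
    av (fun ω : Sym2 (Fin n) → Bool => ind (P (per ω univ univ))) := by
  classical
  set e : Sym2 (Fin n) → Fin n × Fin n := fun z => (z.inf, z.sup) with he
  have hinj : Function.Injective e := by
    intro a b h
    induction a with | _ a₁ a₂ =>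
    induction b with | _ b₁ b₂ =>
    simp only [he, Sym2.inf_mk, Sym2.sup_mk, Prod.mk.injEq] at h
    rw [Sym2.eq_iff]
    grind
  rw [← av_restrict e hinj, ← av_equiv (Equiv.curry (Fin n) (Fin n) Bool).symm]
  have h1 : ∀ ω : Fin n → Fin n → Bool,
      per ((Equiv.curry (Fin n) (Fin n) Bool).symm ω ∘ e) univ univ = perm (symMat n ω) := by
    intro ω
    rw [perm_eq_pm]
    refine pm_congr fun i _ k _ => ?_
    simp only [ent, symMat, he, Function.comp, Sym2.inf_mk, Sym2.sup_mk]
    by_cases hik : i ≤ k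
    · rw [if_pos hik]
      simp [hik]
    · rw [if_neg hik]
      simp [(not_le.1 hik).le]
  simp_rw [h1]
  rw [av_ind_card]
  unfold prob
  congr 1
  simp [pow_mul]

end Final

/-- Asymptotically almost surely, `|per M_n| = n^(n/2 + o(n))`: for every `ε > 0`, the
probability that `n^(n/2-εn) ≤ |per M_n| ≤ n^(n/2+εn)` tends to `1` as `n → ∞`. -/
theorem per_magnitude (ε : ℝ) (hε : 0 < ε) :
    Filter.Tendsto
      (fun n : ℕ => prob n fun M =>
        (n : ℝ) ^ ((n : ℝ) / 2 - ε * n) ≤ |perm M| ∧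
          |perm M| ≤ (n : ℝ) ^ ((n : ℝ) / 2 + ε * n))
      Filter.atTop (nhds 1) := by
  rw [Metric.tendsto_atTop']
  intro δ hδ
  have hmin : 0 < min ε (1 / 2) := lt_min hε (by norm_num)
  have h1 := lower_bound hmin (min_le_right _ _) (show 0 < δ / 3 by positivity)
  have h2 := upper_bound hε (show 0 < δ / 3 by positivity)
  obtain ⟨n₀, hn₀⟩ := Filter.eventually_atTop.1 ((h1.and h2).and (Filter.eventually_ge_atTop 1))
  refine ⟨n₀, fun n hn => ?_⟩
  obtain ⟨⟨k1, k2⟩, hn1⟩ := hn₀ n hn.le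
  have hnR : (1 : ℝ) ≤ n := by exact_mod_cast hn1
  rw [prob_eq_av n fun y => (n : ℝ) ^ ((n : ℝ) / 2 - ε * n) ≤ |y| ∧
          |y| ≤ (n : ℝ) ^ ((n : ℝ) / 2 + ε * n)]
  have h3 := av_not (fun ω : Sym2 (Fin n) → Bool =>
    (n : ℝ) ^ ((n : ℝ) / 2 - ε * n) ≤ |per ω univ univ| ∧
          |per ω univ univ| ≤ (n : ℝ) ^ ((n : ℝ) / 2 + ε * n))
  have h4 := av_ind_le_one (fun ω : Sym2 (Fin n) → Bool =>
    (n : ℝ) ^ ((n : ℝ) / 2 - ε * n) ≤ |per ω univ univ| ∧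
          |per ω univ univ| ≤ (n : ℝ) ^ ((n : ℝ) / 2 + ε * n))
  have h5 : av (fun ω : Sym2 (Fin n) → Bool => ind (¬ ((n : ℝ) ^ ((n : ℝ) / 2 - ε * n) ≤
      |per ω univ univ| ∧ |per ω univ univ| ≤ (n : ℝ) ^ ((n : ℝ) / 2 + ε * n)))) ≤
      δ / 3 + δ / 3 := by
    refine le_trans ?_ (add_le_add k1 k2)
    rw [← av_add]
    refine av_mono fun ω => le_trans (ind_mono fun h => ?_) (ind_or_le _ _)
    rw [not_and_or] at h
    refine h.imp (fun h' h'' => h' (le_trans ?_ h'')) id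
    refine Real.rpow_le_rpow_of_exponent_le hnR ?_
    have := min_le_left ε (1 / 2)
    have : min ε (1 / 2) * (n : ℝ) ≤ ε * n := by gcongr
    linarith
  rw [Real.dist_eq, abs_sub_comm, abs_of_nonneg (by linarith)]
  linarith
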